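/- arXiv:1910.14555 — 4 statements merged into one kernel-verified Lean document; each statement's English description precedes it below -/
import Mathlib

section
/- Let (Ω,Σ,μ) be a finite measure space, Z a real Banach space, and X ⊆ Z* a norm-closed subspace which is norming for Z. Suppose that Z equipped with the topology σ(Z,X) has the Mazur property. If ν : Σ → Z* is a countably additive μ-continuous vector measure satisfying condition (G), then ν(A) ∈ X for every A ∈ Σ. -/
open MeasureTheory Filter Set Topology
open scoped UniformConvergence

noncomputable section

/-- The topology `σ(Z,X)` on `Z` of pointwise convergence on a subspace `X ⊆ Z*`. -/
def sigmaTop {Z : Type*} [NormedAddCommGroup Z] [NormedSpace ℝ Z]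
    (X : Submodule ℝ (Z →L[ℝ] ℝ)) : TopologicalSpace Z :=
  TopologicalSpace.induced (fun z => fun x : X => (x : Z →L[ℝ] ℝ) z) Pi.topologicalSpace

/-- The weak* topology on the dual of `E`: pointwise convergence on `E`. -/
def wstarTop (E : Type*) [NormedAddCommGroup E] [NormedSpace ℝ E] :
    TopologicalSpace (E →L[ℝ] ℝ) :=
  TopologicalSpace.induced (fun f => (f : E → ℝ)) Pi.topologicalSpace

/-- A norm-closed subspace `X ⊆ Z*` is norming for `Z` if
`|||z||| = sup {⟨x,z⟩ : x ∈ B_X}` is an equivalent norm on `Z`; since this sup is always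
`≤ ‖z‖`, this amounts to the existence of `c > 0` with `c⬝‖z‖ ≤ |||z|||` for all `z`. -/
def IsNorming {Z : Type*} [NormedAddCommGroup Z] [NormedSpace ℝ Z]
    (X : Submodule ℝ (Z →L[ℝ] ℝ)) : Prop :=
  ∃ c > (0 : ℝ), ∀ z : Z, c * ‖z‖ ≤ sSup {r : ℝ | ∃ x ∈ X, ‖x‖ ≤ 1 ∧ r = x z}

/-- The average range `𝒜_ν(A) = {ν(B)/μ(B) : B ∈ Σ, B ⊆ A, μ(B) > 0}`. -/
def avgRange {Ω : Type*} [MeasurableSpace Ω] {Z : Type*} [NormedAddCommGroup Z]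
    [NormedSpace ℝ Z] (μ : Measure Ω) (ν : VectorMeasure Ω (Z →L[ℝ] ℝ)) (A : Set Ω) :
    Set (Z →L[ℝ] ℝ) :=
  {w | ∃ B : Set Ω, MeasurableSet B ∧ B ⊆ A ∧ 0 < μ B ∧ w = (μ B).toReal⁻¹ • ν B}

/-- Condition (G): for every `A ∈ Σ` with `μ(A) > 0`, the `w*`-closed convex hull of the
average range `𝒜_ν(A)` intersects `X`. -/
def CondG {Ω : Type*} [MeasurableSpace Ω] {Z : Type*} [NormedAddCommGroup Z]
    [NormedSpace ℝ Z] (μ : Measure Ω) (ν : VectorMeasure Ω (Z →L[ℝ] ℝ))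
    (X : Submodule ℝ (Z →L[ℝ] ℝ)) : Prop :=
  ∀ A : Set Ω, MeasurableSet A → 0 < μ A →
    (@closure _ (wstarTop Z) (convexHull ℝ (avgRange μ ν A)) ∩
      (X : Set (Z →L[ℝ] ℝ))).Nonempty

/-- `h` is a convex block subsequence of `g`: `h k = ∑_{n ∈ I k} a n • g n` where the finite
sets `I k` satisfy `max (I k) < min (I (k+1))` and the `a n` are non-negative reals summing
to `1` over each `I k`. -/
def ConvexBlock {E : Type*} [AddCommMonoid E] [Module ℝ E] (g h : ℕ → E) : Prop :=
  ∃ (I : ℕ → Finset ℕ) (a : ℕ → ℝ),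
    (∀ k, ∀ n ∈ I k, ∀ m ∈ I (k + 1), n < m) ∧
    (∀ n, 0 ≤ a n) ∧ (∀ k, ∑ n ∈ I k, a n = 1) ∧
    (∀ k, h k = ∑ n ∈ I k, a n • g n)

/-- `(B_{X*}, w*)` is convex block compact: every sequence in the closed unit ball of `X*`
admits a convex block subsequence which is `w*`-convergent. -/
def DualBallConvexBlockCompact (X : Type*) [NormedAddCommGroup X] [NormedSpace ℝ X] : Prop :=
  ∀ g : ℕ → (X →L[ℝ] ℝ), (∀ n, ‖g n‖ ≤ 1) →
    ∃ h : ℕ → (X →L[ℝ] ℝ), ConvexBlock g h ∧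
      ∃ f : X →L[ℝ] ℝ, Tendsto h atTop (@nhds _ (wstarTop X) f)


lemma aux_l1_rep {Ω : Type*} [MeasurableSpace Ω] (μ : Measure Ω) [IsFiniteMeasure μ]
    (l : Lp ℝ 1 μ →L[ℝ] ℝ) :
    ∃ (h : Ω → ℝ) (C : ℝ), Measurable h ∧ (∀ x, |h x| ≤ C) ∧
      ∀ g : Lp ℝ 1 μ, l g = ∫ x, h x * g x ∂μ := by
  have h12 : (1 : ENNReal) ≤ 2 := by norm_num
  let J0 : Lp ℝ 2 μ →ₗ[ℝ] Lp ℝ 1 μ :=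
    { toFun := fun g => ⟨g.1, Lp.antitone h12 g.2⟩
      map_add' := fun _ _ => rfl
      map_smul' := fun _ _ => rfl }
  let J : Lp ℝ 2 μ →L[ℝ] Lp ℝ 1 μ := J0.mkContinuous
    ((μ univ ^ (1 / (1 : ENNReal).toReal - 1 / (2 : ENNReal).toReal)).toReal) (by
      intro g
      have h1 := eLpNorm_le_eLpNorm_mul_rpow_measure_univ h12 (Lp.aestronglyMeasurable g)
      have h2 : ‖J0 g‖ = (eLpNorm g 1 μ).toReal := rfl
      rw [h2, Lp.norm_def, mul_comm, ← ENNReal.toReal_mul]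
      refine ENNReal.toReal_mono ?_ h1
      refine ENNReal.mul_ne_top (Lp.eLpNorm_ne_top g) ?_
      refine ENNReal.rpow_ne_top_of_nonneg ?_ (measure_ne_top μ _)
      norm_num)
  let h0 : Lp ℝ 2 μ := (InnerProductSpace.toDual ℝ _).symm (l.comp J)
  have hJ : ∀ (s : Set Ω) (hs : MeasurableSet s) (c : ℝ),
      J (indicatorConstLp 2 hs (measure_ne_top μ s) c) =
        indicatorConstLp 1 hs (measure_ne_top μ s) c := by
    intro s hs c
    rfl
  have hset : ∀ (s : Set Ω) (hs : MeasurableSet s),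
      l (indicatorConstLp 1 hs (measure_ne_top μ s) 1) = ∫ x in s, h0 x ∂μ := by
    intro s hs
    rw [← hJ, ← L2.inner_indicatorConstLp_one hs (measure_ne_top μ s) h0, real_inner_comm]
    have := InnerProductSpace.toDual_symm_apply (𝕜 := ℝ) (x := indicatorConstLp 2 hs (measure_ne_top μ s) (1:ℝ)) (y := l.comp J)
    rw [this]; rfl
  have hinteg : Integrable h0 μ := (Lp.memLp h0).integrable h12
  have hbd : ∀ (s : Set Ω) (hs : MeasurableSet s), |∫ x in s, h0 x ∂μ| ≤ ‖l‖ * (μ s).toReal := by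
    intro s hs
    rw [← hset s hs]
    refine (l.le_opNorm _).trans ?_
    rw [norm_indicatorConstLp (by norm_num) (by norm_num)]
    simp [Measure.real]
  have hup : h0 ≤ᵐ[μ] fun _ => ‖l‖ := by
    refine ae_le_of_forall_setIntegral_le hinteg (integrable_const _) fun s hs _ => ?_
    simp only [setIntegral_const, smul_eq_mul, Measure.real]
    have := (abs_le.1 (hbd s hs)).2
    linarith
  have hdn : (fun _ => -‖l‖) ≤ᵐ[μ] h0 := by
    refine ae_le_of_forall_setIntegral_le (integrable_const _) hinteg fun s hs _ => ?_
    simp only [setIntegral_const, smul_eq_mul, Measure.real]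
    have := (abs_le.1 (hbd s hs)).1
    linarith
  have hm0 : Measurable h0 := (Lp.stronglyMeasurable h0).measurable
  let h : Ω → ℝ := fun x => max (-‖l‖) (min (h0 x) ‖l‖)
  have hm : Measurable h := measurable_const.max (hm0.min measurable_const)
  have hb : ∀ x, |h x| ≤ ‖l‖ := by
    intro x
    have := norm_nonneg l
    exact abs_le.2 ⟨le_max_left _ _, max_le (by linarith) (min_le_right _ _)⟩
  have hh : h =ᵐ[μ] h0 := by
    filter_upwards [hup, hdn] with x h1 h2
    simp only [h]
    rw [min_eq_left h1, max_eq_right h2]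
  have hmul : ∀ g : Ω → ℝ, Integrable g μ → Integrable (fun x => h x * g x) μ := by
    intro g hg
    exact hg.bdd_mul hm.aestronglyMeasurable (c := ‖l‖) (Eventually.of_forall fun x => hb x)
  refine ⟨h, ‖l‖, hm, hb, ?_⟩
  intro g
  induction g using Lp.induction ENNReal.one_ne_top with
  | indicatorConst c hs hμs =>
    rename_i s
    rw [Lp.simpleFunc.coe_indicatorConst]
    have e1 : indicatorConstLp 1 hs hμs.ne c = c • indicatorConstLp 1 hs hμs.ne (1:ℝ) := by
      ext1
      filter_upwards [indicatorConstLp_coeFn (p := 1) (hs := hs) (hμs := hμs.ne) (c := c),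
        Lp.coeFn_smul c (indicatorConstLp 1 hs hμs.ne (1:ℝ)),
        indicatorConstLp_coeFn (p := 1) (hs := hs) (hμs := hμs.ne) (c := (1:ℝ))] with x h1 h2 h3
      rw [h1, h2, Pi.smul_apply, h3]
      by_cases hx : x ∈ s <;> simp [hx]
    have e2 : ∫ x, h x * (indicatorConstLp 1 hs hμs.ne c : Lp ℝ 1 μ) x ∂μ = ∫ x, s.indicator (fun x => c * h0 x) x ∂μ := by
      apply integral_congr_ae
      filter_upwards [hh, indicatorConstLp_coeFn (p := 1) (hs := hs) (hμs := hμs.ne) (c := c)] with x h1 h2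
      rw [h2, h1]
      by_cases hx : x ∈ s <;> simp [hx, mul_comm]
    rw [e2, e1, map_smul, hset s hs, integral_indicator hs, integral_const_mul]; rfl
  | @add f g hf hg hd h1 h2 =>
    rw [map_add, h1, h2, ← integral_add]
    · apply integral_congr_ae
      filter_upwards [Lp.coeFn_add (hf.toLp f) (hg.toLp g)] with x hx
      rw [hx]; simp [mul_add]
    · exact hmul _ (L1.integrable_coeFn _)
    · exact hmul _ (L1.integrable_coeFn _)
  | isClosed =>
    refine isClosed_eq l.continuous ?_
    have : LipschitzWith ‖l‖.toNNReal (fun f : Lp ℝ 1 μ => ∫ x, h x * f x ∂μ) := by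
      refine LipschitzWith.of_dist_le_mul fun f g => ?_
      rw [dist_eq_norm, dist_eq_norm, ← integral_sub (hmul _ (L1.integrable_coeFn _)) (hmul _ (L1.integrable_coeFn _)), L1.norm_eq_integral_norm, Real.coe_toNNReal _ (norm_nonneg _), ← integral_const_mul]
      refine norm_integral_le_of_norm_le ((L1.integrable_coeFn _).norm.const_mul _) ?_
      filter_upwards [Lp.coeFn_sub f g] with x hx
      rw [hx, ← mul_sub, norm_mul]
      exact mul_le_mul_of_nonneg_right (hb x) (norm_nonneg _)
    exact this.continuous

lemma aux_simple_approx {Ω : Type*} [MeasurableSpace Ω] (h : Ω → ℝ) (C : ℝ) (hm : Measurable h)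
    (hb : ∀ x, |h x| ≤ C) (ε : ℝ) (hε : 0 < ε) :
    ∃ g : SimpleFunc Ω ℝ, ∀ x, |h x - g x| ≤ ε := by
  refine ⟨⟨fun x => ε * (⌊h x / ε⌋ : ℝ), ?_, ?_⟩, ?_⟩
  · intro y
    have : Measurable (fun x => ε * (⌊h x / ε⌋ : ℝ)) := by fun_prop
    exact this (measurableSet_singleton y)
  · refine (((Set.finite_Icc ⌊-C / ε⌋ ⌊C / ε⌋)).image (fun k : ℤ => ε * (k : ℝ))).subset ?_
    rintro _ ⟨x, rfl⟩
    have := abs_le.1 (hb x)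
    refine ⟨⌊h x / ε⌋, ⟨Int.floor_le_floor ?_, Int.floor_le_floor ?_⟩, rfl⟩
    · exact div_le_div_of_nonneg_right this.1 hε.le
    · exact div_le_div_of_nonneg_right this.2 hε.le
  · intro x
    have h1 := Int.floor_le (h x / ε)
    have h2 := Int.lt_floor_add_one (h x / ε)
    rw [le_div_iff₀ hε] at h1
    rw [div_lt_iff₀ hε] at h2
    change |h x - ε * (⌊h x / ε⌋ : ℝ)| ≤ ε
    rw [abs_le]; constructor <;> nlinarith

lemma aux_l1_weak {Ω : Type*} [MeasurableSpace Ω] (μ : Measure Ω) [IsFiniteMeasure μ]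
    {ι : Type*} (U : Filter ι) (F : ι → Lp ℝ 1 μ) (F0 : Lp ℝ 1 μ) (K : ℝ)
    (hK : ∀ m, ‖F m‖ ≤ K)
    (hF : ∀ B, MeasurableSet B →
      Tendsto (fun m => ∫ x in B, F m x ∂μ) U (𝓝 (∫ x in B, F0 x ∂μ)))
    (l : Lp ℝ 1 μ →L[ℝ] ℝ) : Tendsto (fun m => l (F m)) U (𝓝 (l F0)) := by
  obtain ⟨h, C, hm, hb, hl⟩ := aux_l1_rep μ l
  have hsint : ∀ (g : SimpleFunc Ω ℝ) (G : Lp ℝ 1 μ), Integrable (fun x => g x * G x) μ := by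
    intro g G
    obtain ⟨c, hc⟩ := g.exists_forall_norm_le
    exact (L1.integrable_coeFn G).bdd_mul g.aestronglyMeasurable (c := c) (Eventually.of_forall hc)
  have hmulint : ∀ (G : Lp ℝ 1 μ), Integrable (fun x => h x * G x) μ := by
    intro G
    exact (L1.integrable_coeFn G).bdd_mul hm.aestronglyMeasurable (c := C) (Eventually.of_forall hb)
  have hs : ∀ g : SimpleFunc Ω ℝ, Tendsto (fun m => ∫ x, g x * F m x ∂μ) U (𝓝 (∫ x, g x * F0 x ∂μ)) := by
    intro g
    induction g using SimpleFunc.induction with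
    | const c hs =>
      rename_i s
      have key : ∀ G : Lp ℝ 1 μ, ∫ x, (SimpleFunc.piecewise s hs (SimpleFunc.const _ c) (SimpleFunc.const _ 0)) x * G x ∂μ = c * ∫ x in s, G x ∂μ := by
        intro G
        rw [← integral_const_mul, ← integral_indicator hs]
        congr 1
        ext x
        by_cases hx : x ∈ s <;> simp [hx]
      simp only [key]
      exact (hF s hs).const_mul c
    | @add f g hd h1 h2 =>
      have key : ∀ G : Lp ℝ 1 μ, ∫ x, (f + g) x * G x ∂μ = ∫ x, f x * G x ∂μ + ∫ x, g x * G x ∂μ := by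
        intro G
        rw [← integral_add (hsint _ _) (hsint _ _)]
        simp [add_mul]
      simp only [key]
      exact h1.add h2
  have hclose : ∀ (ε : ℝ) (g : SimpleFunc Ω ℝ), (∀ x, |h x - g x| ≤ ε) → ∀ G : Lp ℝ 1 μ,
      |l G - ∫ x, g x * G x ∂μ| ≤ ε * ‖G‖ := by
    intro ε g hg G
    rw [hl, ← integral_sub (hmulint _) (hsint _ _), L1.norm_eq_integral_norm, ← integral_const_mul, ← Real.norm_eq_abs]
    refine norm_integral_le_of_norm_le ((L1.integrable_coeFn _).norm.const_mul _) ?_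
    refine Eventually.of_forall fun x => ?_
    rw [← sub_mul, norm_mul]
    exact mul_le_mul_of_nonneg_right (hg x) (norm_nonneg _)
  rw [Metric.tendsto_nhds]
  intro ε hε
  set M := |K| + ‖F0‖ + 1 with hM
  have hMpos : 0 < M := by positivity
  obtain ⟨g, hg⟩ := aux_simple_approx h C hm hb (ε / (3 * M)) (by positivity)
  have hG : ∀ G : Lp ℝ 1 μ, ‖G‖ ≤ M → |l G - ∫ x, g x * G x ∂μ| ≤ ε / 3 := by
    intro G hG
    refine (hclose _ g hg G).trans ?_
    calc ε / (3 * M) * ‖G‖ ≤ ε / (3 * M) * M := by gcongr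
      _ = ε / 3 := by field_simp
  filter_upwards [Metric.tendsto_nhds.1 (hs g) (ε / 3) (by positivity)] with m hm
  have e1 := abs_le.1 (hG (F m) (by have := hK m; have := le_abs_self K; have := norm_nonneg F0; linarith))
  have e2 := abs_le.1 (hG F0 (by have := abs_nonneg K; linarith))
  rw [Real.dist_eq, abs_lt] at hm ⊢
  constructor <;> linarith [e1.1, e1.2, e2.1, e2.2, hm.1, hm.2]

lemma aux_density {Ω : Type*} [MeasurableSpace Ω] (μ : Measure Ω) [IsFiniteMeasure μ]
    {E : Type*} [NormedAddCommGroup E] [NormedSpace ℝ E] (ν : VectorMeasure Ω E)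
    (hν : ∀ A : Set Ω, μ A = 0 → ν A = 0) (Φ : E →L[ℝ] ℝ) :
    ∃ F : Lp ℝ 1 μ, ∀ B, MeasurableSet B → ∫ x in B, F x ∂μ = Φ (ν B) := by
  let s : SignedMeasure Ω := ν.mapRange (Φ : E →+ ℝ) Φ.continuous
  have hs : VectorMeasure.AbsolutelyContinuous s μ.toENNRealVectorMeasure := by
    refine VectorMeasure.AbsolutelyContinuous.mk fun A hA h0 => ?_
    rw [Measure.toENNRealVectorMeasure_apply_measurable hA] at h0
    change Φ (ν A) = 0
    rw [hν A h0, map_zero]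
  have h1 := SignedMeasure.withDensityᵥ_rnDeriv_eq s μ hs
  have hi : Integrable (s.rnDeriv μ) μ := SignedMeasure.integrable_rnDeriv _ _
  refine ⟨hi.toL1 _, fun B hB => ?_⟩
  have h2 : μ.withDensityᵥ (s.rnDeriv μ) B = s B := by rw [h1]
  rw [withDensityᵥ_apply hi hB] at h2
  rw [setIntegral_congr_ae hB ((Integrable.coeFn_toL1 hi).mono fun x hx _ => hx), h2]
  rfl

lemma aux_norm_le {Ω : Type*} [MeasurableSpace Ω] (μ : Measure Ω) [IsFiniteMeasure μ]
    (F : Lp ℝ 1 μ) (c : ℝ) (h : ∀ B, MeasurableSet B → |∫ x in B, F x ∂μ| ≤ c) :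
    ‖F‖ ≤ 2 * c := by
  have hm : Measurable F := (Lp.stronglyMeasurable F).measurable
  have hS : MeasurableSet {x | 0 ≤ F x} := measurableSet_le measurable_const hm
  have hi := L1.integrable_coeFn F
  rw [L1.norm_eq_integral_norm, ← integral_add_compl hS hi.norm]
  have e1 : ∫ x in {x | 0 ≤ F x}, ‖F x‖ ∂μ = ∫ x in {x | 0 ≤ F x}, F x ∂μ :=
    setIntegral_congr_fun hS fun x hx => by
      simp only [mem_ofPred_eq] at hx
      simp [abs_of_nonneg hx]
  have e2 : ∫ x in {x | 0 ≤ F x}ᶜ, ‖F x‖ ∂μ = - ∫ x in {x | 0 ≤ F x}ᶜ, F x ∂μ := by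
    rw [← integral_neg]
    refine setIntegral_congr_fun hS.compl fun x hx => ?_
    simp only [mem_compl_iff, mem_ofPred_eq, not_le] at hx
    simp [abs_of_neg hx]
  rw [e1, e2]
  have h1 := abs_le.1 (h _ hS)
  have h2 := abs_le.1 (h _ hS.compl)
  linarith [h1.2, h2.1]

lemma aux_abs_le {Ω : Type*} [MeasurableSpace Ω] (μ : Measure Ω) [IsFiniteMeasure μ]
    (F : Lp ℝ 1 μ) (B : Set Ω) : |∫ x in B, F x ∂μ| ≤ ‖F‖ := by
  have hi := L1.integrable_coeFn F
  rw [L1.norm_eq_integral_norm, ← Real.norm_eq_abs]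
  refine (norm_integral_le_integral_norm _).trans ?_
  exact setIntegral_le_integral hi.norm (Eventually.of_forall fun x => norm_nonneg _)

lemma aux_bounded_range {Ω : Type*} [MeasurableSpace Ω] (μ : Measure Ω) [IsFiniteMeasure μ]
    {Z : Type*} [NormedAddCommGroup Z] [NormedSpace ℝ Z] [CompleteSpace Z]
    (ν : VectorMeasure Ω (Z →L[ℝ] ℝ))
    (hν : ∀ A : Set Ω, μ A = 0 → ν A = 0) : ∃ K, ∀ B, ‖ν B‖ ≤ K := by
  refine banach_steinhaus (E := Z) (F := ℝ) (σ₁₂ := RingHom.id ℝ) (g := fun B : Set Ω => ν B) fun z => ?_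
  obtain ⟨F, hF⟩ := aux_density μ ν hν (ContinuousLinearMap.apply ℝ ℝ z)
  refine ⟨‖F‖, fun B => ?_⟩
  by_cases hB : MeasurableSet B
  · have := hF B hB
    simp only [ContinuousLinearMap.apply_apply] at this
    rw [← this]
    exact aux_abs_le μ F B
  · simp [ν.not_measurable hB]

lemma aux_bs {E : Type*} [NormedAddCommGroup E] [NormedSpace ℝ E] (X : Submodule ℝ E)
    (hX : IsComplete (X : Set E)) (ψ : ℕ → E →L[ℝ] ℝ)
    (h : ∀ x ∈ X, ∃ C, ∀ n, ‖ψ n x‖ ≤ C) : ∃ C, 0 ≤ C ∧ ∀ n, ∀ x ∈ X, ‖ψ n x‖ ≤ C * ‖x‖ := by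
  have : CompleteSpace X := hX.completeSpace_coe
  let g : ℕ → (X →L[ℝ] ℝ) := fun n => (ψ n).comp X.subtypeL
  obtain ⟨C, hC⟩ : ∃ C, ∀ n, ‖g n‖ ≤ C := banach_steinhaus (g := g) (fun x => h x.1 x.2)
  exact ⟨C, (norm_nonneg (g 0)).trans (hC 0), fun n x hx => (g n).le_of_opNorm_le (hC n) ⟨x, hx⟩⟩

lemma aux_seq_bounded {Z : Type*} [NormedAddCommGroup Z] [NormedSpace ℝ Z]
    (X : Submodule ℝ (Z →L[ℝ] ℝ)) (hXclosed : IsClosed (X : Set (Z →L[ℝ] ℝ)))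
    (hXnorming : IsNorming X) (z : ℕ → Z)
    (hz : ∀ x ∈ X, Tendsto (fun n => x (z n)) atTop (𝓝 0)) : ∃ M, ∀ n, ‖z n‖ ≤ M := by
  obtain ⟨C, h0, hC⟩ := aux_bs X hXclosed.isComplete
    (fun n => ContinuousLinearMap.apply ℝ ℝ (z n)) (fun x hx => by
      obtain ⟨C, hC⟩ := (Metric.isBounded_range_of_tendsto _ (hz x hx)).exists_norm_le
      exact ⟨C, fun n => hC _ ⟨n, rfl⟩⟩)
  obtain ⟨c, hc, hn⟩ := hXnorming
  refine ⟨C / c, fun n => ?_⟩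
  rw [le_div_iff₀ hc, mul_comm]
  refine (hn _).trans (csSup_le ⟨0, 0, X.zero_mem, by simp, by simp⟩ ?_)
  rintro r ⟨x, hx, hx1, rfl⟩
  have h1 := hC n x hx
  have h2 : x (z n) ≤ C * ‖x‖ := (le_abs_self _).trans h1
  nlinarith

lemma aux_ultralimit {Z : Type*} [NormedAddCommGroup Z] [NormedSpace ℝ Z]
    (z : ℕ → Z) (M : ℝ) (hM : ∀ n, ‖z n‖ ≤ M) (U : Ultrafilter ℕ) :
    ∃ Φ : (Z →L[ℝ] ℝ) →L[ℝ] ℝ, ∀ w : Z →L[ℝ] ℝ,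
      Tendsto (fun n => w (z n)) U (𝓝 (Φ w)) := by
  have hb : ∀ (w : Z →L[ℝ] ℝ) n, ‖w (z n)‖ ≤ M * ‖w‖ := by
    intro w n
    refine (w.le_opNorm _).trans ?_
    rw [mul_comm]
    exact mul_le_mul_of_nonneg_right (hM n) (norm_nonneg _)
  have hex : ∀ w : Z →L[ℝ] ℝ, ∃ a, Tendsto (fun n => w (z n)) U (𝓝 a) := by
    intro w
    obtain ⟨a, -, ha⟩ := (isCompact_closedBall (0 : ℝ) (M * ‖w‖)).ultrafilter_le_nhds
      (U.map fun n => w (z n)) (by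
        rw [le_principal_iff]
        refine (Ultrafilter.mem_map).2 (Filter.univ_mem' fun n => ?_)
        simpa using hb w n)
    exact ⟨a, ha⟩
  choose φ hφ using hex
  let Φ0 : (Z →L[ℝ] ℝ) →ₗ[ℝ] ℝ :=
    { toFun := φ
      map_add' := fun v w => tendsto_nhds_unique (hφ (v + w)) ((hφ v).add (hφ w))
      map_smul' := fun c w => tendsto_nhds_unique (hφ (c • w)) ((hφ w).const_mul c) }
  refine ⟨Φ0.mkContinuous M fun w => ?_, hφ⟩
  exact le_of_tendsto (hφ w).norm (Eventually.of_forall fun n => hb w n)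

lemma aux_mem_of_continuous {Z : Type*} [NormedAddCommGroup Z] [NormedSpace ℝ Z]
    (X : Submodule ℝ (Z →L[ℝ] ℝ)) (w : Z →L[ℝ] ℝ)
    (hw : @Continuous Z ℝ (sigmaTop X) _ (w : Z →ₗ[ℝ] ℝ)) : w ∈ X := by
  have h := (LinearMap.mem_span_iff_continuous
    (f := fun x : X => ((x : Z →L[ℝ] ℝ) : Z →ₗ[ℝ] ℝ)) (w : Z →ₗ[ℝ] ℝ)).2 (by
      rw [sigmaTop, induced_to_pi] at hw
      exact hw)
  have hr : Set.range (fun x : X => ((x : Z →L[ℝ] ℝ) : Z →ₗ[ℝ] ℝ)) =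
      (X.map (ContinuousLinearMap.coeLM ℝ) : Submodule ℝ (Z →ₗ[ℝ] ℝ)) := by
    ext u
    simp
  rw [hr, Submodule.span_eq] at h
  obtain ⟨x, hx, hxw⟩ := h
  have : x = w := by
    ext t
    exact LinearMap.congr_fun hxw t
  exact this ▸ hx

lemma aux_main {Ω : Type*} [MeasurableSpace Ω] (μ : Measure Ω) [IsFiniteMeasure μ]
    {Z : Type*} [NormedAddCommGroup Z] [NormedSpace ℝ Z] [CompleteSpace Z]
    (X : Submodule ℝ (Z →L[ℝ] ℝ)) 
    (ν : VectorMeasure Ω (Z →L[ℝ] ℝ))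
    (hν : ∀ A : Set Ω, μ A = 0 → ν A = 0)
    (hG : CondG μ ν X) (A : Set Ω) (hA : MeasurableSet A)
    (z : ℕ → Z) (M : ℝ) (hM : ∀ n, ‖z n‖ ≤ M)
    (hz : ∀ x ∈ X, Tendsto (fun n => x (z n)) atTop (𝓝 0))
    (U : Ultrafilter ℕ) (hU : (U : Filter ℕ) ≤ atTop)
    (Φ : (Z →L[ℝ] ℝ) →L[ℝ] ℝ)
    (hΦ : ∀ w : Z →L[ℝ] ℝ, Tendsto (fun n => w (z n)) U (𝓝 (Φ w))) :
    Φ (ν A) ≤ 0 := by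
  by_contra hpos
  push Not at hpos
  obtain ⟨K, hK⟩ := aux_bounded_range μ ν hν
  obtain ⟨f, hf⟩ := aux_density μ ν hν Φ
  have hfz : ∀ y : Z, ∃ F : Lp ℝ 1 μ, ∀ B, MeasurableSet B → ∫ x in B, F x ∂μ = ν B y := by
    intro y
    obtain ⟨F, hF⟩ := aux_density μ ν hν (ContinuousLinearMap.apply ℝ ℝ y)
    exact ⟨F, fun B hB => by simpa using hF B hB⟩
  choose F hF using hfz
  have hFn : ∀ n, ‖F (z n)‖ ≤ 2 * (K * M) := by
    intro n
    refine aux_norm_le μ _ _ fun B hB => ?_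
    rw [hF _ B hB]
    refine ((ν B).le_opNorm _).trans ?_
    exact mul_le_mul (hK B) (hM n) (norm_nonneg _) ((norm_nonneg _).trans (hK B))
  have hfm : Measurable f := (Lp.stronglyMeasurable f).measurable
  have hfi := L1.integrable_coeFn f
  -- the set where the density is bounded below
  obtain ⟨δ, hδ, hδμ⟩ : ∃ δ > (0 : ℝ), 0 < μ (A ∩ {x | δ ≤ f x}) := by
    by_contra hcon
    push Not at hcon
    have hnull : μ (A ∩ {x | 0 < f x}) = 0 := by
      have : A ∩ {x | 0 < f x} ⊆ ⋃ n : ℕ, A ∩ {x | 1 / ((n : ℝ) + 1) ≤ f x} := by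
        rintro x ⟨hxA, hx⟩
        obtain ⟨n, hn⟩ := exists_nat_one_div_lt (show 0 < f x from hx)
        exact mem_iUnion.2 ⟨n, hxA, hn.le⟩
      refine measure_mono_null this (measure_iUnion_null fun n => ?_)
      exact le_antisymm (hcon _ (by positivity)) bot_le
    have : ∫ x in A, f x ∂μ ≤ 0 := by
      refine setIntegral_nonpos_ae hA ?_
      rw [measure_eq_zero_iff_ae_notMem] at hnull
      filter_upwards [hnull] with x hx hxA
      by_contra h
      exact hx ⟨hxA, not_le.1 h⟩
    rw [hf A hA] at this
    linarith
  set A1 := A ∩ {x | δ ≤ f x} with hA1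
  have hA1m : MeasurableSet A1 := hA.inter (measurableSet_le measurable_const hfm)
  -- convex combinations
  let S : ℕ → Set (Lp ℝ 1 μ) := fun n =>
    {G | ∃ y ∈ convexHull ℝ (Set.image z (Ici n)), ∀ B, MeasurableSet B → ∫ x in B, G x ∂μ = ν B y}
  have hSconv : ∀ n, Convex ℝ (S n) := by
    rintro n G₁ ⟨y₁, hy₁, h₁⟩ G₂ ⟨y₂, hy₂, h₂⟩ a b ha hb hab
    refine ⟨a • y₁ + b • y₂, convex_convexHull ℝ _ hy₁ hy₂ ha hb hab, fun B hB => ?_⟩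
    have e : ∫ x in B, (a • G₁ + b • G₂ : Lp ℝ 1 μ) x ∂μ = ∫ x in B, (a * G₁ x + b * G₂ x) ∂μ := by
      refine setIntegral_congr_ae hB ?_
      filter_upwards [Lp.coeFn_add (a • G₁) (b • G₂), Lp.coeFn_smul a G₁, Lp.coeFn_smul b G₂]
        with x h1 h2 h3 _
      rw [h1, Pi.add_apply, h2, h3]; rfl
    rw [e, integral_add ((L1.integrable_coeFn G₁).integrableOn.const_mul a)
      ((L1.integrable_coeFn G₂).integrableOn.const_mul b), integral_const_mul, integral_const_mul,
      h₁ B hB, h₂ B hB]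
    simp
  have hfS : ∀ n, f ∈ closure (S n) := by
    intro n
    by_contra hn
    obtain ⟨l, u, hlu, hl⟩ :=
      geometric_hahn_banach_point_closed (hSconv n).closure isClosed_closure hn
    have ht := aux_l1_weak μ (U : Filter ℕ) (fun m => F (z m)) f _ hFn (fun B hB => by
      rw [hf B hB]
      simp only [hF _ B hB]
      exact hΦ (ν B)) l
    have hge : u ≤ l f := by
      refine ge_of_tendsto ht ?_
      filter_upwards [hU (Ici_mem_atTop n)] with m hm
      exact (hl _ (subset_closure ⟨z m, subset_convexHull ℝ _ ⟨m, hm, rfl⟩, hF _⟩)).le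
    linarith
  have hμA1 : 0 < (μ A1).toReal := ENNReal.toReal_pos hδμ.ne' (measure_ne_top _ _)
  -- approximants
  have happ : ∀ n : ℕ, ∃ y ∈ convexHull ℝ (Set.image z (Ici n)), ∃ G : Lp ℝ 1 μ,
      (∀ B, MeasurableSet B → ∫ x in B, G x ∂μ = ν B y) ∧
      ‖f - G‖ < (δ / 2) * ((μ A1).toReal / 2 / 2 ^ (n + 1)) := by
    intro n
    obtain ⟨G, ⟨y, hy, hG⟩, hd⟩ := Metric.mem_closure_iff.1 (hfS n)
      ((δ / 2) * ((μ A1).toReal / 2 / 2 ^ (n + 1))) (by positivity)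
    exact ⟨y, hy, G, hG, by rwa [dist_eq_norm] at hd⟩
  choose y hy G hGy hGd using happ
  have hGm : ∀ n, Measurable (G n) := fun n => (Lp.stronglyMeasurable (G n)).measurable
  let bad : ℕ → Set Ω := fun n => A1 ∩ {x | G n x < δ / 2}
  have hbadm : ∀ n, MeasurableSet (bad n) := fun n =>
    hA1m.inter (measurableSet_lt (hGm n) measurable_const)
  have hbadμ : ∀ n, μ (bad n) ≤ ENNReal.ofReal ((μ A1).toReal / 2 / 2 ^ (n + 1)) := by
    intro n
    rw [ENNReal.le_ofReal_iff_toReal_le (measure_ne_top _ _) (by positivity)]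
    have h1 : (δ / 2) * (μ (bad n)).toReal ≤ ∫ x in bad n, (f - G n : Lp ℝ 1 μ) x ∂μ := by
      have : (δ / 2) * (μ (bad n)).toReal = ∫ x in bad n, (δ / 2) ∂μ := by
        simp [Measure.real, mul_comm]
      rw [this]
      refine setIntegral_mono_on_ae (integrable_const _) (L1.integrable_coeFn _).integrableOn
        (hbadm n) ?_
      filter_upwards [Lp.coeFn_sub f (G n)] with x hx hxb
      rw [hx, Pi.sub_apply]
      have h1 : δ ≤ f x := hxb.1.2
      have h2 : G n x < δ / 2 := hxb.2
      linarith
    have h2 := (le_abs_self _).trans (aux_abs_le μ (f - G n) (bad n))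
    have h3 := hGd n
    exact le_of_mul_le_mul_left (by linarith) (by positivity : 0 < δ / 2)
  have hbadU : μ (⋃ n, bad n) ≤ ENNReal.ofReal ((μ A1).toReal / 2) := by
    refine (measure_iUnion_le _).trans ((ENNReal.tsum_le_tsum hbadμ).trans ?_)
    have hs : HasSum (fun n : ℕ => (μ A1).toReal / 2 / 2 ^ (n + 1)) ((μ A1).toReal / 2) := by
      have := hasSum_geometric_two' ((μ A1).toReal / 2)
      refine this.congr_fun ?_
      intro n
      rw [pow_succ]; field_simp
    rw [← ENNReal.ofReal_tsum_of_nonneg (fun n => by positivity) hs.summable, hs.tsum_eq]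
  let A2 := A1 \ ⋃ n, bad n
  have hA2m : MeasurableSet A2 := hA1m.diff (MeasurableSet.iUnion hbadm)
  have hA2μ : 0 < μ A2 := by
    refine lt_of_lt_of_le ?_ (le_measure_sdiff)
    refine tsub_pos_of_lt (hbadU.trans_lt ?_)
    rw [ENNReal.ofReal_lt_iff_lt_toReal (by positivity) (measure_ne_top _ _)]
    linarith
  obtain ⟨x, hxcl, hxX⟩ := hG A2 hA2m hA2μ
  have hxy : ∀ n, δ / 2 ≤ x (y n) := by
    intro n
    have hsub : convexHull ℝ (avgRange μ ν A2) ⊆ {w : Z →L[ℝ] ℝ | δ / 2 ≤ w (y n)} := by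
      refine convexHull_min ?_ ?_
      · rintro w ⟨B, hB, hBA, hBμ, rfl⟩
        have hBr : 0 < (μ B).toReal := ENNReal.toReal_pos hBμ.ne' (measure_ne_top _ _)
        have h1 : (δ / 2) * (μ B).toReal ≤ ν B (y n) := by
          rw [← hGy n B hB]
          have : (δ / 2) * (μ B).toReal = ∫ x in B, (δ / 2) ∂μ := by
            simp [Measure.real, mul_comm]
          rw [this]
          refine setIntegral_mono_on (integrable_const _) (L1.integrable_coeFn _).integrableOn
            hB ?_
          intro t ht
          by_contra hlt
          exact (hBA ht).2 (mem_iUnion.2 ⟨n, (hBA ht).1, not_le.1 hlt⟩)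
        change δ / 2 ≤ (μ B).toReal⁻¹ * ν B (y n)
        rw [inv_mul_eq_div, le_div_iff₀ hBr]
        exact h1
      · intro w₁ h₁ w₂ h₂ a b ha hb hab
        simp only [mem_ofPred_eq] at h₁ h₂
        change δ / 2 ≤ a * w₁ (y n) + b * w₂ (y n)
        nlinarith
    have hcl : @IsClosed _ (wstarTop Z) {w : Z →L[ℝ] ℝ | δ / 2 ≤ w (y n)} := by
      have hc : @Continuous _ _ (wstarTop Z) _ fun w : Z →L[ℝ] ℝ => w (y n) :=
        @Continuous.comp _ _ _ (wstarTop Z) _ _ _ _ (continuous_apply (y n))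
          continuous_induced_dom
      exact @IsClosed.preimage _ _ (wstarTop Z) _ _ hc _ (isClosed_Ici (a := δ / 2))
    exact (@closure_minimal _ (wstarTop Z) _ _ hsub hcl) hxcl
  obtain ⟨N, hN⟩ := eventually_atTop.1 ((hz x hxX).eventually (gt_mem_nhds (by positivity : 0 < δ / 2)))
  have hlt : convexHull ℝ (Set.image z (Ici N)) ⊆ {t | x t < δ / 2} := by
    refine convexHull_min ?_ (convex_halfSpace_lt x.isLinear _)
    rintro _ ⟨m, hm, rfl⟩
    exact hN m hm
  have := hlt (hy N)
  have h2 := hxy N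
  simp only [mem_ofPred_eq] at this
  linarith

/-- Theorem A: if `(Z, σ(Z,X))` has the Mazur property and `ν ∈ ca(μ, Z*)` satisfies
condition (G), then `ν(Σ) ⊆ X`. -/
theorem range_subset_of_mazur_of_condG
    {Ω : Type*} [MeasurableSpace Ω] (μ : Measure Ω) [IsFiniteMeasure μ]
    {Z : Type*} [NormedAddCommGroup Z] [NormedSpace ℝ Z] [CompleteSpace Z]
    (X : Submodule ℝ (Z →L[ℝ] ℝ)) (hXclosed : IsClosed (X : Set (Z →L[ℝ] ℝ)))
    (hXnorming : IsNorming X)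
    (hMazur : ∀ φ : Z →ₗ[ℝ] ℝ,
      (∀ (z : ℕ → Z) (z₀ : Z), Tendsto z atTop (@nhds _ (sigmaTop X) z₀) →
        Tendsto (fun n => φ (z n)) atTop (nhds (φ z₀))) →
      @Continuous Z ℝ (sigmaTop X) _ φ)
    (ν : VectorMeasure Ω (Z →L[ℝ] ℝ))
    (hν : ∀ A : Set Ω, μ A = 0 → ν A = 0)
    (hG : CondG μ ν X) :
    ∀ A : Set Ω, MeasurableSet A → ν A ∈ X := by
  intro A hA
  refine aux_mem_of_continuous X (ν A) (hMazur _ fun z z₀ hz => ?_)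
  have hz' : ∀ x ∈ X, Tendsto (fun n => x (z n - z₀)) atTop (𝓝 0) := by
    intro x hx
    rw [sigmaTop, nhds_induced, tendsto_comap_iff, tendsto_pi_nhds] at hz
    have := (hz ⟨x, hx⟩).sub_const (x z₀)
    simpa using this
  obtain ⟨M, hM⟩ := aux_seq_bounded X hXclosed hXnorming (fun n => z n - z₀) hz'
  have key : Tendsto (fun n => ν A (z n - z₀)) atTop (𝓝 0) := by
    rw [tendsto_iff_ultrafilter]
    intro U hU
    obtain ⟨Φ, hΦ⟩ := aux_ultralimit (fun n => z n - z₀) M hM U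
    have h1 := aux_main μ X ν hν hG A hA _ M hM hz' U hU Φ hΦ
    have h2 := aux_main μ X ν hν hG A hA (fun n => -(z n - z₀)) M
      (fun n => by rw [norm_neg]; exact hM n)
      (fun x hx => by simpa only [map_neg, neg_zero] using (hz' x hx).neg) U hU (-Φ)
      (fun w => by simpa only [map_neg, _root_.neg_apply] using (hΦ w).neg)
    have h3 : Φ (ν A) = 0 := by
      have : -(Φ (ν A)) ≤ 0 := h2
      linarith
    have := hΦ (ν A)
    rwa [h3] at this
  have := key.add_const (ν A z₀)
  simpa using this
end
end

section
/- Let (Ω,Σ,μ) be a finite measure space, Z a real Banach space, and X ⊆ Z* a norm-closed subspace which is norming for Z. Suppose that X has Efremov's property (E). If ν : Σ → Z* is a countably additive μ-continuous vector measure satisfying condition (G), then ν(A) ∈ X for every A ∈ Σ. -/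
open MeasureTheory Filter Set Topology
open scoped UniformConvergence

noncomputable section

/-- Efremov's property (E) for the Banach space `X`: the `w*`-closure of every convex subset
`C` of `B_{X*}` consists of limits of `w*`-convergent sequences contained in `C`. -/
def EfremovE (X : Type*) [NormedAddCommGroup X] [NormedSpace ℝ X] : Prop :=
  ∀ C : Set (X →L[ℝ] ℝ), Convex ℝ C → C ⊆ Metric.closedBall 0 1 →
    ∀ f ∈ @closure _ (wstarTop X) C, ∃ g : ℕ → (X →L[ℝ] ℝ),
      (∀ n, g n ∈ C) ∧ Tendsto g atTop (@nhds _ (wstarTop X) f)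


lemma le_of_sq_le_sq_h {a b : ℝ} (h : a ^ 2 ≤ b ^ 2) (hb : 0 ≤ b) : a ≤ b :=
  le_of_abs_le (by rw [← abs_of_nonneg hb]; exact sq_le_sq.1 h)

lemma phi_gap (a b R : ℝ) (hR : 0 ≤ R) (ha : |a| ≤ R) (hb : |b| ≤ R) :
    (a - b) ^ 2 ≤ 4 * (1 + R) ^ 3 *
      (√(1 + a ^ 2) + √(1 + b ^ 2) - 2 * √(1 + ((a + b) / 2) ^ 2)) := by
  have hsq : ∀ t : ℝ, √(1 + t ^ 2) ^ 2 = 1 + t ^ 2 := fun t => Real.sq_sqrt (by positivity)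
  have hle : ∀ t : ℝ, |t| ≤ R → √(1 + t ^ 2) ≤ 1 + R := by
    intro t ht
    rw [Real.sqrt_le_left (by positivity)]
    have := abs_le.1 ht
    nlinarith
  have hp := hle a ha
  have hq := hle b hb
  have hm : |(a + b) / 2| ≤ R := by
    rw [abs_le] at *
    constructor <;> linarith
  have hr := hle _ hm
  have p0 : 0 ≤ √(1 + a ^ 2) := Real.sqrt_nonneg _
  have q0 : 0 ≤ √(1 + b ^ 2) := Real.sqrt_nonneg _
  have r0 : 0 < √(1 + ((a + b) / 2) ^ 2) := Real.sqrt_pos.2 (by positivity)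
  have p2 := hsq a
  have q2 := hsq b
  have r2 := hsq ((a + b) / 2)
  set p := √(1 + a ^ 2)
  set q := √(1 + b ^ 2)
  set r := √(1 + ((a + b) / 2) ^ 2)
  set T := 1 + R
  -- `(pq)² - (1+ab)² = (a-b)²`
  have h1 : (p * q) ^ 2 - (1 + a * b) ^ 2 = (a - b) ^ 2 := by
    rw [mul_pow, p2, q2]; ring
  have hab : 1 + a * b ≤ p * q := by
    refine le_of_sq_le_sq_h ?_ ?_
    · nlinarith [sq_nonneg (a - b)]
    · positivity
  have h2 : (a - b) ^ 2 ≤ 2 * T ^ 2 * (p * q - (1 + a * b)) := by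
    have : p * q ≤ T ^ 2 := by nlinarith
    have e : (a - b) ^ 2 = (p * q + (1 + a * b)) * (p * q - (1 + a * b)) := by rw [← h1]; ring
    rw [e]
    apply mul_le_mul_of_nonneg_right <;> linarith
  have h3 : (p + q) ^ 2 - (2 * r) ^ 2 = 2 * (p * q - (1 + a * b)) := by
    nlinarith
  have hg : 2 * r ≤ p + q := by
    refine le_of_sq_le_sq_h ?_ ?_
    · nlinarith
    · positivity
  have h4 : 2 * (p * q - (1 + a * b)) ≤ 4 * T * (p + q - 2 * r) := by
    have e : 2 * (p * q - (1 + a * b)) = (p + q + 2 * r) * (p + q - 2 * r) := by rw [← h3]; ring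
    rw [e]
    apply mul_le_mul_of_nonneg_right <;> linarith
  have hT : 0 ≤ T ^ 2 := by positivity
  nlinarith

lemma phi_gap_nonneg (a b : ℝ) :
    0 ≤ √(1 + a ^ 2) + √(1 + b ^ 2) - 2 * √(1 + ((a + b) / 2) ^ 2) := by
  have h := phi_gap a b (max |a| |b|) (by positivity) (le_max_left _ _) (le_max_right _ _)
  have hT : 0 < 4 * (1 + max |a| |b|) ^ 3 := by positivity
  by_contra hc
  push Not at hc
  nlinarith [sq_nonneg (a - b)]

lemma vm_abs_cont {Ω E : Type*} [MeasurableSpace Ω] (μ : Measure Ω) [NormedAddCommGroup E]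
    (ν : VectorMeasure Ω E) (hν : ∀ A : Set Ω, μ A = 0 → ν A = 0) (ε : ℝ) (hε : 0 < ε) :
    ∃ δ : ENNReal, 0 < δ ∧ ∀ B, MeasurableSet B → μ B < δ → ‖ν B‖ ≤ ε := by
  by_contra hcon
  push Not at hcon
  choose B hBm hBμ hBν using fun n : ℕ => hcon ((1 / 2) ^ n) (by simp [ENNReal.pow_pos])
  set C : ℕ → Set Ω := fun n => ⋃ m ≥ n, B m with hC
  have hCm : ∀ n, MeasurableSet (C n) := fun n =>
    MeasurableSet.iUnion fun m => MeasurableSet.iUnion fun _ => hBm m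
  have hCa : Antitone C := by
    intro n m h
    exact Set.biUnion_subset_biUnion_left fun k (hk : m ≤ k) => le_trans h hk
  have hBC : ∀ n m, n ≤ m → B m ⊆ C n := fun n m h =>
    Set.subset_biUnion_of_mem (u := B) (show m ∈ {k | k ≥ n} from h)
  have hnull : μ (⋂ n, C n) = 0 := by
    have h := measure_limsup_atTop_eq_zero (μ := μ) (s := B) (by
      have hle : ∑' i, μ (B i) ≤ ∑' i : ℕ, (1 / 2 : ENNReal) ^ i :=
        ENNReal.tsum_le_tsum fun i => (hBμ i).le
      refine ne_top_of_le_ne_top ?_ hle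
      rw [ENNReal.tsum_geometric]
      simp)
    rw [limsup_eq_iInf_iSup_of_nat] at h
    exact h
  have key : ∀ n, ∃ m, n < m ∧ ε / 2 < ‖ν (B n \ C m)‖ := by
    intro n
    have ht := VectorMeasure.tendsto_vectorMeasure_iInter_atTop_nat (v := ν)
      (s := fun m => B n ∩ C m) (fun i j h => Set.inter_subset_inter_right _ (hCa h))
      (fun i => (hBm n).inter (hCm i))
    rw [← Set.inter_iInter, hν _ (measure_mono_null Set.inter_subset_right hnull)] at ht
    have he : ∀ᶠ m in atTop, ‖ν (B n ∩ C m)‖ < ε / 2 := by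
      have := (ht.norm).eventually_lt_const (u := ε / 2) (by simpa using hε)
      simpa using this
    obtain ⟨m, hm1, hm2⟩ := (he.and (eventually_gt_atTop n)).exists
    refine ⟨m, hm2, ?_⟩
    have hd : ν (B n \ C m) = ν (B n) - ν (B n ∩ C m) := by
      rw [← VectorMeasure.of_sdiff ((hBm n).inter (hCm m)) (hBm n) Set.inter_subset_left]
      simp
    rw [hd]
    have := norm_sub_norm_le (ν (B n)) (ν (B n ∩ C m))
    linarith [hBν n]
  choose g hg1 hg2 using key
  set N : ℕ → ℕ := fun k => g^[k] 0
  have hN : ∀ k, N (k + 1) = g (N k) := fun k => Function.iterate_succ_apply' g k 0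
  have hNm : StrictMono N := strictMono_nat_of_lt_succ fun k => by rw [hN]; exact hg1 _
  have hdis : Pairwise (Function.onFun Disjoint fun k => B (N k) \ C (N (k + 1))) := by
    rw [pairwise_disjoint_on]
    intro k l hkl
    refine Set.disjoint_left.2 fun x hx hy => hx.2 (hBC _ _ ?_ hy.1)
    exact hNm.monotone hkl
  have hs := VectorMeasure.hasSum_of_disjoint_iUnion (v := ν)
    (fun k => (hBm (N k)).diff (hCm (N (k + 1)))) hdis
  have ht := hs.summable.tendsto_atTop_zero.norm
  have he := ht.eventually_lt_const (u := ε / 2) (by simpa using hε)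
  obtain ⟨k, hk⟩ := he.exists
  have := hg2 (N k)
  rw [← hN] at this
  linarith

lemma helly {Z : Type*} [NormedAddCommGroup Z] [NormedSpace ℝ Z]
    (X : Submodule ℝ (Z →L[ℝ] ℝ)) (w : Z →L[ℝ] ℝ) (d : ℝ) (hd : 0 < d)
    (hw : ∀ x ∈ X, d ≤ ‖w + x‖) (I : Finset X) :
    ((fun _ => 0, d / 2) : (I → ℝ) × ℝ) ∈ closure
      ((fun z : Z => ((fun i : I => (i : X).1 z, w z) : (I → ℝ) × ℝ)) '' Metric.closedBall 0 1) := by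
  classical
  by_contra hcon
  let L : Z →ₗ[ℝ] (I → ℝ) × ℝ :=
    (LinearMap.pi fun i : I => ((i : X).1 : Z →ₗ[ℝ] ℝ)).prod (w : Z →ₗ[ℝ] ℝ)
  have hL : (fun z : Z => ((fun i : I => (i : X).1 z, w z) : (I → ℝ) × ℝ)) = L := rfl
  rw [hL] at hcon
  have hconv : Convex ℝ (closure (L '' Metric.closedBall 0 1)) :=
    ((convex_closedBall (0 : Z) 1).linear_image L).closure
  obtain ⟨F, u, hF, hu⟩ := geometric_hahn_banach_closed_point hconv isClosed_closure hcon
  set c := F (0, 1)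
  let a : I → ℝ := fun i => F (Pi.single i 1, 0)
  let x : X := ∑ i : I, a i • (i : X)
  have hFd : ∀ (v : I → ℝ) (t : ℝ), F (v, t) = ∑ i, a i * v i + c * t := by
    intro v t
    have e1 : ((v, t) : (I → ℝ) × ℝ) = (v, 0) + t • (0, 1) := by simp
    have e2 : ((v, 0) : (I → ℝ) × ℝ) = LinearMap.inl ℝ (I → ℝ) ℝ v := rfl
    rw [e1, map_add, map_smul, smul_eq_mul, mul_comm t, e2]
    congr 1
    have := LinearMap.pi_apply_eq_sum_univ ((F : (I → ℝ) × ℝ →ₗ[ℝ] ℝ) ∘ₗ LinearMap.inl ℝ (I → ℝ) ℝ) v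
    simp only [LinearMap.comp_apply] at this
    refine this.trans (Finset.sum_congr rfl fun i _ => ?_)
    rw [smul_eq_mul, mul_comm]
    congr 1
    simp only [a]
    have : (fun j => if i = j then (1 : ℝ) else 0) = Pi.single i 1 := by
      ext j; simp [Pi.single_apply, eq_comm]
    rw [this]; rfl
  have hFL : ∀ z, F (L z) = (c • w + (x : Z →L[ℝ] ℝ)) z := by
    intro z
    have : L z = (fun i : I => (i : X).1 z, w z) := rfl
    rw [this, hFd]
    simp [x, add_comm]
  have hu' : u < c * (d / 2) := by
    have := hu
    rw [hFd] at this
    simpa using this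
  have hlt : ∀ z : Z, ‖z‖ ≤ 1 → (c • w + (x : Z →L[ℝ] ℝ)) z < u := by
    intro z hz
    rw [← hFL]
    exact hF _ (subset_closure ⟨z, by simpa using hz, rfl⟩)
  have hu0 : 0 < u := by simpa using hlt 0 (by simp)
  have hc : 0 < c := by
    by_contra h
    push Not at h
    nlinarith
  have hn : ‖c • w + (x : Z →L[ℝ] ℝ)‖ ≤ u := by
    refine ContinuousLinearMap.opNorm_le_of_unit_norm hu0.le fun z hz => ?_
    rw [Real.norm_eq_abs, abs_le]
    have h1 := hlt z hz.le
    have h2 := hlt (-z) (by simp [hz])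
    rw [map_neg] at h2
    constructor <;> linarith
  have h3 := hw (c⁻¹ • (x : Z →L[ℝ] ℝ)) (X.smul_mem _ x.2)
  have e : c • w + (x : Z →L[ℝ] ℝ) = c • (w + c⁻¹ • (x : Z →L[ℝ] ℝ)) := by
    rw [smul_add, smul_smul, mul_inv_cancel₀ hc.ne', one_smul]
  rw [e, norm_smul, Real.norm_of_nonneg hc.le] at hn
  nlinarith [mul_le_mul_of_nonneg_left h3 hc.le]

lemma exists_density {Ω : Type*} [MeasurableSpace Ω] (μ : Measure Ω) [IsFiniteMeasure μ]
    {Z : Type*} [NormedAddCommGroup Z] [NormedSpace ℝ Z]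
    (ν : VectorMeasure Ω (Z →L[ℝ] ℝ)) (hν : ∀ A : Set Ω, μ A = 0 → ν A = 0) (z : Z) :
    ∃ f : Ω → ℝ, Measurable f ∧ Integrable f μ ∧
      ∀ B, MeasurableSet B → ∫ ω in B, f ω ∂μ = ν B z := by
  let ev : (Z →L[ℝ] ℝ) →+ ℝ := (ContinuousLinearMap.apply ℝ ℝ z : (Z →L[ℝ] ℝ) →+ ℝ)
  have hev : Continuous ev := (ContinuousLinearMap.apply ℝ ℝ z).continuous
  let s : SignedMeasure Ω := ν.mapRange ev hev
  have hs : s ≪ᵥ μ.toENNRealVectorMeasure := by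
    refine VectorMeasure.AbsolutelyContinuous.mk fun B hB h => ?_
    rw [Measure.toENNRealVectorMeasure_apply_measurable hB] at h
    simp [s, VectorMeasure.mapRange_apply, hν B h]
  refine ⟨s.rnDeriv μ, SignedMeasure.measurable_rnDeriv _ _,
    SignedMeasure.integrable_rnDeriv _ _, fun B hB => ?_⟩
  rw [← withDensityᵥ_apply (SignedMeasure.integrable_rnDeriv _ _) hB,
    SignedMeasure.withDensityᵥ_rnDeriv_eq s μ hs]
  rfl

/-- `∫_S |f|` is controlled by the integrals of `f` over measurable subsets of `S`. -/
lemma setIntegral_abs_le {Ω : Type*} [MeasurableSpace Ω] (μ : Measure Ω)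
    (f : Ω → ℝ) (hfm : Measurable f) (hf : Integrable f μ) (S : Set Ω) (hS : MeasurableSet S)
    (c : ℝ) (hc : ∀ B, MeasurableSet B → B ⊆ S → |∫ ω in B, f ω ∂μ| ≤ c) :
    ∫ ω in S, |f ω| ∂μ ≤ 2 * c := by
  have hP : MeasurableSet {ω | 0 ≤ f ω} := measurableSet_le measurable_const hfm
  rw [← integral_inter_add_sdiff hP hf.abs.integrableOn]
  have h1 : ∫ ω in S ∩ {ω | 0 ≤ f ω}, |f ω| ∂μ = ∫ ω in S ∩ {ω | 0 ≤ f ω}, f ω ∂μ :=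
    setIntegral_congr_fun (hS.inter hP) fun ω hω => abs_of_nonneg hω.2
  have h2 : ∫ ω in S \ {ω | 0 ≤ f ω}, |f ω| ∂μ = - ∫ ω in S \ {ω | 0 ≤ f ω}, f ω ∂μ := by
    rw [← integral_neg]
    exact setIntegral_congr_fun (hS.diff hP) fun ω hω => abs_of_neg (not_le.1 hω.2)
  rw [h1, h2]
  have a1 := abs_le.1 (hc _ (hS.inter hP) Set.inter_subset_left)
  have a2 := abs_le.1 (hc _ (hS.diff hP) Set.sdiff_subset)
  linarith [a1.2, a2.1]

lemma vm_bounded {Ω : Type*} [MeasurableSpace Ω] (μ : Measure Ω) [IsFiniteMeasure μ]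
    {Z : Type*} [NormedAddCommGroup Z] [NormedSpace ℝ Z] [CompleteSpace Z]
    (ν : VectorMeasure Ω (Z →L[ℝ] ℝ)) (hν : ∀ A : Set Ω, μ A = 0 → ν A = 0) :
    ∃ K : ℝ, ∀ B, MeasurableSet B → ‖ν B‖ ≤ K := by
  obtain ⟨K, hK⟩ := banach_steinhaus (g := fun B : {B : Set Ω // MeasurableSet B} => ν B.1) (by
    intro z
    obtain ⟨f, -, hf, h⟩ := exists_density μ ν hν z
    refine ⟨∫ ω, |f ω| ∂μ, fun B => ?_⟩
    rw [← h B.1 B.2]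
    refine (norm_integral_le_integral_norm _).trans ?_
    exact setIntegral_le_integral hf.abs (Eventually.of_forall fun _ => abs_nonneg _))
  exact ⟨K, fun B hB => hK ⟨B, hB⟩⟩

/-- Pointwise estimate. -/
lemma abs_sub_le_gap (a b R η : ℝ) (hR : 0 ≤ R) (hη : 0 < η) (ha : |a| ≤ R) (hb : |b| ≤ R) :
    |a - b| ≤ η + 4 * (1 + R) ^ 3 / η *
      (√(1 + a ^ 2) + √(1 + b ^ 2) - 2 * √(1 + ((a + b) / 2) ^ 2)) := by
  have h := phi_gap a b R hR ha hb
  have h2 : |a - b| ≤ η + (a - b) ^ 2 / η := by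
    rw [← sq_abs (a - b)]
    have : |a - b| * η ≤ η ^ 2 + |a - b| ^ 2 := by
      nlinarith [sq_nonneg (|a - b| - η), abs_nonneg (a - b), sq_nonneg (|a - b|), sq_nonneg η]
    have e : η + |a - b| ^ 2 / η = (η ^ 2 + |a - b| ^ 2) / η := by field_simp
    rw [e, le_div_iff₀ hη]
    exact this
  have h3 := div_le_div_of_nonneg_right h hη.le
  calc _ ≤ _ := h2
    _ ≤ _ := by
      gcongr
      exact h3.trans (le_of_eq (by ring))

lemma integrable_phi {Ω : Type*} [MeasurableSpace Ω] (μ : Measure Ω) [IsFiniteMeasure μ]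
    (f : Ω → ℝ) (hfm : Measurable f) (hf : Integrable f μ) :
    Integrable (fun ω => √(1 + f ω ^ 2)) μ := by
  refine Integrable.mono' (g := fun ω => 1 + |f ω|) ((integrable_const _).add hf.abs) (by fun_prop)
    (Eventually.of_forall fun ω => ?_)
  rw [Real.norm_of_nonneg (Real.sqrt_nonneg _), Real.sqrt_le_left (by positivity)]
  nlinarith [abs_nonneg (f ω), sq_abs (f ω)]

/-- L¹ estimate for the difference of two functions. -/
lemma integral_abs_sub_le {Ω : Type*} [MeasurableSpace Ω] (μ : Measure Ω) [IsFiniteMeasure μ]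
    (f g : Ω → ℝ) (hfm : Measurable f) (hf : Integrable f μ) (hgm : Measurable g)
    (hg : Integrable g μ) (R η κ : ℝ) (hR : 0 ≤ R) (hη : 0 < η)
    (hfS : ∫ ω in {ω | R < |f ω|} ∪ {ω | R < |g ω|}, |f ω| ∂μ ≤ κ)
    (hgS : ∫ ω in {ω | R < |f ω|} ∪ {ω | R < |g ω|}, |g ω| ∂μ ≤ κ) :
    ∫ ω, |f ω - g ω| ∂μ ≤ η * μ.real univ + 4 * (1 + R) ^ 3 / η *
      (∫ ω, √(1 + f ω ^ 2) ∂μ + ∫ ω, √(1 + g ω ^ 2) ∂μ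
        - 2 * ∫ ω, √(1 + ((f ω + g ω) / 2) ^ 2) ∂μ) + 2 * κ := by
  set S := {ω | R < |f ω|} ∪ {ω | R < |g ω|} with hS
  have hSm : MeasurableSet S := (measurableSet_lt measurable_const (by fun_prop)).union
    (measurableSet_lt measurable_const (by fun_prop))
  have i1 := integrable_phi μ f hfm hf
  have i2 := integrable_phi μ g hgm hg
  have i3 := integrable_phi μ (fun ω => (f ω + g ω) / 2) (by fun_prop) ((hf.add hg).div_const 2)
  set D := fun ω => √(1 + f ω ^ 2) + √(1 + g ω ^ 2) - 2 * √(1 + ((f ω + g ω) / 2) ^ 2) with hD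
  have iD : Integrable D μ := (i1.add i2).sub (i3.const_mul 2)
  have eD : ∫ ω, D ω ∂μ = ∫ ω, √(1 + f ω ^ 2) ∂μ + ∫ ω, √(1 + g ω ^ 2) ∂μ
        - 2 * ∫ ω, √(1 + ((f ω + g ω) / 2) ^ 2) ∂μ := by
    have i12 : Integrable (fun ω => √(1 + f ω ^ 2) + √(1 + g ω ^ 2)) μ := i1.add i2
    simp only [hD]
    rw [integral_sub i12 (i3.const_mul 2), integral_add i1 i2, integral_const_mul]
  rw [← eD]
  have iS : Integrable (S.indicator fun ω => |f ω| + |g ω|) μ := (hf.abs.add hg.abs).indicator hSm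
  have eS : ∫ ω, S.indicator (fun ω => |f ω| + |g ω|) ω ∂μ ≤ 2 * κ := by
    rw [integral_indicator hSm, integral_add hf.abs.integrableOn hg.abs.integrableOn]
    linarith
  set c := 4 * (1 + R) ^ 3 / η
  have hc : 0 ≤ c := by positivity
  have hpt : ∀ ω, |f ω - g ω| ≤ (η + c * D ω) + S.indicator (fun ω => |f ω| + |g ω|) ω := by
    intro ω
    have hD0 : 0 ≤ D ω := phi_gap_nonneg _ _
    by_cases h : ω ∈ S
    · rw [Set.indicator_of_mem h]
      have := abs_sub (f ω) (g ω)
      have : 0 ≤ c * D ω := by positivity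
      linarith
    · rw [Set.indicator_of_notMem h, add_zero]
      rw [hS, Set.mem_union, not_or] at h
      exact abs_sub_le_gap _ _ R η hR hη (not_lt.1 h.1) (not_lt.1 h.2)
  have iA : Integrable (fun ω => η + c * D ω) μ := (integrable_const _).add (iD.const_mul c)
  calc ∫ ω, |f ω - g ω| ∂μ
      ≤ ∫ ω, ((η + c * D ω) + S.indicator (fun ω => |f ω| + |g ω|) ω) ∂μ :=
        integral_mono (hf.sub hg).abs (iA.add iS) hpt
    _ = η * μ.real univ + c * ∫ ω, D ω ∂μ + ∫ ω, S.indicator (fun ω => |f ω| + |g ω|) ω ∂μ := by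
        rw [integral_add iA iS, integral_add (integrable_const _) (iD.const_mul c),
          integral_const_mul, integral_const]
        simp [mul_comm]
    _ ≤ _ := by linarith

lemma exists_cauchy_convex {Ω : Type*} [MeasurableSpace Ω] (μ : Measure Ω) [IsFiniteMeasure μ]
    {Z : Type*} [NormedAddCommGroup Z] [NormedSpace ℝ Z] [CompleteSpace Z]
    (ν : VectorMeasure Ω (Z →L[ℝ] ℝ)) (hν : ∀ A : Set Ω, μ A = 0 → ν A = 0)
    (f : Z → Ω → ℝ) (hfm : ∀ z, Measurable (f z)) (hfi : ∀ z, Integrable (f z) μ)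
    (hf : ∀ z B, MeasurableSet B → ∫ ω in B, f z ω ∂μ = ν B z)
    (z : ℕ → Z) (hz : ∀ n, ‖z n‖ ≤ 1) :
    ∃ y : ℕ → Z, (∀ n, y n ∈ convexHull ℝ (z '' Ici n)) ∧
      ∀ ε > 0, ∃ N, ∀ n m, N ≤ n → n ≤ m → ∫ ω, |f (y n) ω - f (y m) ω| ∂μ ≤ ε := by
  obtain ⟨K, hK⟩ := vm_bounded μ ν hν
  set D : ℕ → Set Z := fun n => convexHull ℝ (z '' Ici n) with hD
  have hDa : ∀ n m, n ≤ m → D m ⊆ D n := fun n m h =>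
    convexHull_mono (Set.image_mono (Set.Ici_subset_Ici.2 h))
  have hD1 : ∀ n, ∀ x ∈ D n, ‖x‖ ≤ 1 := by
    intro n x hx
    have : D n ⊆ Metric.closedBall 0 1 := by
      refine convexHull_min ?_ (convex_closedBall _ _)
      rintro _ ⟨k, -, rfl⟩
      simpa using hz k
    simpa using this hx
  -- bounds
  have hset : ∀ x : Z, ‖x‖ ≤ 1 → ∀ S, MeasurableSet S → ∀ c, (∀ B, MeasurableSet B → B ⊆ S →
      ‖ν B‖ ≤ c) → ∫ ω in S, |f x ω| ∂μ ≤ 2 * c := by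
    intro x hx S hS c hc
    refine setIntegral_abs_le μ (f x) (hfm x) (hfi x) S hS c fun B hB hBS => ?_
    rw [hf x B hB]
    have := (ν B).le_opNorm x
    rw [Real.norm_eq_abs] at this
    have h0 := norm_nonneg (ν B)
    nlinarith [hc B hB hBS]
  have hL1 : ∀ x : Z, ‖x‖ ≤ 1 → ∫ ω, |f x ω| ∂μ ≤ 2 * K := by
    intro x hx
    have := hset x hx univ .univ K fun B hB _ => hK B hB
    rwa [setIntegral_univ] at this
  have hK0 : 0 ≤ K := (norm_nonneg _).trans (hK ∅ .empty)
  set Φ : Z → ℝ := fun x => ∫ ω, √(1 + f x ω ^ 2) ∂μ with hΦ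
  have hΦ0 : ∀ x, 0 ≤ Φ x := fun x => integral_nonneg fun ω => Real.sqrt_nonneg _
  have hΦM : ∀ x, ‖x‖ ≤ 1 → Φ x ≤ μ.real univ + 2 * K := by
    intro x hx
    have : Φ x ≤ ∫ ω, (1 + |f x ω|) ∂μ := by
      refine integral_mono (integrable_phi μ _ (hfm x) (hfi x))
        ((integrable_const _).add (hfi x).abs) fun ω => ?_
      simp only
      rw [Real.sqrt_le_left (by positivity)]
      nlinarith [abs_nonneg (f x ω), sq_abs (f x ω)]
    rw [integral_add (integrable_const _) (hfi x).abs, integral_const] at this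
    simp at this
    linarith [hL1 x hx]
  have hDne : ∀ n, (D n).Nonempty := fun n =>
    ⟨z n, subset_convexHull ℝ _ ⟨n, Set.self_mem_Ici, rfl⟩⟩
  set s : ℕ → ℝ := fun n => sInf (Φ '' D n) with hs
  have hbdd : ∀ n, BddBelow (Φ '' D n) := fun n => ⟨0, by rintro _ ⟨x, -, rfl⟩; exact hΦ0 x⟩
  have hsle : ∀ n, ∀ x ∈ D n, s n ≤ Φ x := fun n x hx => csInf_le (hbdd n) ⟨x, hx, rfl⟩
  have hsm : Monotone s := fun n m h =>
    csInf_le_csInf (hbdd n) ((hDne m).image _) (Set.image_mono (hDa n m h))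
  have hsb : BddAbove (range s) := by
    refine ⟨μ.real univ + 2 * K, ?_⟩
    rintro _ ⟨n, rfl⟩
    obtain ⟨x, hx⟩ := hDne n
    exact (hsle n x hx).trans (hΦM x (hD1 n x hx))
  have hy : ∀ n : ℕ, ∃ x ∈ D n, Φ x < s n + 1 / ((n : ℝ) + 1) := by
    intro n
    have hlt : s n < s n + 1 / ((n : ℝ) + 1) := by
      have : 0 < 1 / ((n : ℝ) + 1) := by positivity
      linarith
    obtain ⟨_, ⟨x, hx, rfl⟩, h⟩ := exists_lt_of_csInf_lt ((hDne n).image Φ) hlt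
    exact ⟨x, hx, h⟩
  choose y hyD hyΦ using hy
  refine ⟨y, hyD, fun ε hε => ?_⟩
  -- additivity of densities at midpoints
  have hmid : ∀ a b : Z, f ((1 / 2 : ℝ) • a + (1 / 2 : ℝ) • b) =ᵐ[μ]
      fun ω => (f a ω + f b ω) / 2 := by
    intro a b
    refine Integrable.ae_eq_of_forall_setIntegral_eq _ _ (hfi _)
      (((hfi a).add (hfi b)).div_const 2) fun B hB _ => ?_
    rw [hf _ B hB]
    rw [integral_div, integral_add (hfi a).integrableOn (hfi b).integrableOn, hf a B hB, hf b B hB,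
      map_add, map_smul, map_smul, smul_eq_mul, smul_eq_mul]
    ring
  -- uniform integrability
  set κ := ε / 8 with hκ
  obtain ⟨δ, hδ, hδB⟩ := vm_abs_cont μ ν hν κ (by positivity)
  obtain ⟨δ', hδ'0, hδ'⟩ : ∃ δ' : ℝ, 0 < δ' ∧ ENNReal.ofReal δ' < δ := by
    rcases eq_or_ne δ ⊤ with h | h
    · exact ⟨1, one_pos, by rw [h]; exact ENNReal.ofReal_lt_top⟩
    · have : 0 < δ.toReal := ENNReal.toReal_pos hδ.ne' h
      refine ⟨δ.toReal / 2, by positivity, ?_⟩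
      rw [ENNReal.ofReal_lt_iff_lt_toReal (by positivity) h]
      linarith
  set R := 4 * K / δ' + 1 with hR
  have hR0 : 0 < R := by positivity
  have hRδ : ∀ x, ‖x‖ ≤ 1 → μ.real {ω | R < |f x ω|} ≤ δ' / 2 := by
    intro x hx
    have h1 := mul_meas_ge_le_integral_of_nonneg (μ := μ) (f := fun ω => |f x ω|)
      (Eventually.of_forall fun _ => abs_nonneg _) (hfi x).abs R
    have h2 : μ.real {ω | R < |f x ω|} ≤ μ.real {ω | R ≤ |f x ω|} :=
      measureReal_mono fun ω (h : R < _) => h.le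
    have h3 : R * μ.real {ω | R < |f x ω|} ≤ 2 * K :=
      (mul_le_mul_of_nonneg_left h2 hR0.le).trans (h1.trans (hL1 x hx))
    have h4 : 2 * K ≤ R * (δ' / 2) := by
      rw [hR, add_mul, div_mul_eq_mul_div]
      have : 4 * K * (δ' / 2) / δ' = 2 * K := by field_simp; ring
      rw [this]
      linarith
    exact le_of_mul_le_mul_left (h3.trans h4) hR0
  set η := ε / (4 * (μ.real univ + 1)) with hη
  have hη0 : 0 < η := by positivity
  have hηb : η * μ.real univ ≤ ε / 4 := by
    rw [hη, div_mul_eq_mul_div, div_le_div_iff₀ (by positivity) (by positivity)]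
    nlinarith [measureReal_nonneg (μ := μ) (s := univ)]
  set c := 4 * (1 + R) ^ 3 / η with hc
  have hc0 : 0 < c := by positivity
  have hst : Tendsto s atTop (𝓝 (⨆ n, s n)) := tendsto_atTop_ciSup hsm hsb
  have ht0 : Tendsto (fun n : ℕ => ((⨆ n, s n) - s n) + 2 * (1 / ((n : ℝ) + 1))) atTop (𝓝 0) := by
    have := (hst.const_sub (⨆ n, s n)).add
      ((tendsto_one_div_add_atTop_nhds_zero_nat (𝕜 := ℝ)).const_mul 2)
    simpa using this
  obtain ⟨N, hN⟩ := eventually_atTop.1 (ht0.eventually_lt_const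
    (u := ε / (4 * c)) (by positivity))
  refine ⟨N, fun n m hNn hnm => ?_⟩
  have y1 := hD1 n _ (hyD n)
  have y2 := hD1 m _ (hyD m)
  set S := {ω | R < |f (y n) ω|} ∪ {ω | R < |f (y m) ω|} with hS
  have hSm : MeasurableSet S :=
    (measurableSet_lt measurable_const (hfm _).abs).union
    (measurableSet_lt measurable_const (hfm _).abs)
  have hSμ : μ S < δ := by
    refine lt_of_le_of_lt ?_ hδ'
    rw [← ofReal_measureReal (μ := μ) (s := S)]
    apply ENNReal.ofReal_le_ofReal
    have := measureReal_union_le (μ := μ) {ω | R < |f (y n) ω|} {ω | R < |f (y m) ω|}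
    linarith [hRδ _ y1, hRδ _ y2]
  have hcB : ∀ B, MeasurableSet B → B ⊆ S → ‖ν B‖ ≤ κ := fun B hB hBS =>
    hδB B hB ((measure_mono hBS).trans_lt hSμ)
  have main := integral_abs_sub_le μ (f (y n)) (f (y m)) (hfm _) (hfi _) (hfm _) (hfi _) R η (2 * κ)
    hR0.le hη0 (hset _ y1 S hSm κ hcB) (hset _ y2 S hSm κ hcB)
  have emid : ∫ ω, √(1 + ((f (y n) ω + f (y m) ω) / 2) ^ 2) ∂μ =
      Φ ((1 / 2 : ℝ) • y n + (1 / 2 : ℝ) • y m) := by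
    refine integral_congr_ae ?_
    filter_upwards [hmid (y n) (y m)] with ω hω
    rw [hω]
  have hmD : (1 / 2 : ℝ) • y n + (1 / 2 : ℝ) • y m ∈ D n :=
    convex_convexHull ℝ _ (hyD n) (hDa n m hnm (hyD m)) (by norm_num) (by norm_num) (by norm_num)
  have g1 := hsle n _ hmD
  have g2 := hyΦ n
  have g3 := hyΦ m
  have g4 : s m ≤ ⨆ n, s n := le_ciSup hsb m
  have g5 : 1 / ((m : ℝ) + 1) ≤ 1 / ((n : ℝ) + 1) := by
    apply one_div_le_one_div_of_le (by positivity)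
    have : (n : ℝ) ≤ m := by exact_mod_cast hnm
    linarith
  have g6 := hN n hNn
  rw [emid] at main
  have hgap : Φ (y n) + Φ (y m) - 2 * Φ ((1 / 2 : ℝ) • y n + (1 / 2 : ℝ) • y m) ≤ ε / (4 * c) := by
    linarith
  have hcg := mul_le_mul_of_nonneg_left hgap hc0.le
  have e4 : c * (ε / (4 * c)) = ε / 4 := by field_simp
  rw [e4] at hcg
  have main' := main.trans (add_le_add_left (add_le_add hηb hcg) _)
  linarith

lemma exists_set_lower_bound {Ω : Type*} [MeasurableSpace Ω] (μ : Measure Ω) [IsFiniteMeasure μ]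
    (g : ℕ → Ω → ℝ) (hgm : ∀ n, Measurable (g n)) (hgi : ∀ n, Integrable (g n) μ)
    (hC : ∀ ε > 0, ∃ N, ∀ n m, N ≤ n → n ≤ m → ∫ ω, |g n ω - g m ω| ∂μ ≤ ε)
    (A : Set Ω) (hA : MeasurableSet A) (d : ℝ) (hd : 0 < d)
    (hgA : ∀ n, d ≤ ∫ ω in A, g n ω ∂μ) :
    ∃ (B : Set Ω) (e : ℝ) (φ : ℕ → ℕ), MeasurableSet B ∧ 0 < μ B ∧ 0 < e ∧ StrictMono φ ∧
      ∃ K, ∀ k ≥ K, ∀ ω ∈ B, e ≤ g (φ k) ω := by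
  set G : ℕ → (Ω →₁[μ] ℝ) := fun n => (hgi n).toL1 (g n) with hG
  have hnorm : ∀ n m, dist (G n) (G m) = ∫ ω, |g n ω - g m ω| ∂μ := by
    intro n m
    rw [dist_eq_norm, hG]
    simp only
    rw [← Integrable.toL1_sub, L1.norm_eq_integral_norm]
    refine integral_congr_ae ?_
    filter_upwards [Integrable.coeFn_toL1 ((hgi n).sub (hgi m))] with ω hω
    rw [hω]; rfl
  have hGC : CauchySeq G := by
    rw [Metric.cauchySeq_iff']
    intro ε hε
    obtain ⟨N, hN⟩ := hC (ε / 2) (by positivity)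
    refine ⟨N, fun n hn => ?_⟩
    rw [dist_comm, hnorm]
    linarith [hN N n le_rfl hn]
  obtain ⟨h, hh⟩ := cauchySeq_tendsto_of_complete hGC
  have hhA : d ≤ ∫ ω in A, h ω ∂μ := by
    have ht : Tendsto (fun n => ∫ ω in A, G n ω ∂μ) atTop (𝓝 (∫ ω in A, h ω ∂μ)) :=
      ((continuous_setIntegral A).tendsto h).comp hh
    refine ge_of_tendsto' ht fun n => ?_
    refine (hgA n).trans (le_of_eq (integral_congr_ae ?_))
    exact ae_restrict_of_ae (Integrable.coeFn_toL1 (hgi n)).symm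
  have hmeas := tendstoInMeasure_of_tendsto_Lp hh
  obtain ⟨φ, hφ, hae⟩ := hmeas.exists_seq_tendsto_ae
  have hae' : ∀ᵐ ω ∂μ, Tendsto (fun k => g (φ k) ω) atTop (𝓝 (h ω)) := by
    have : ∀ᵐ ω ∂μ, ∀ n, G n ω = g n ω := ae_all_iff.2 fun n => Integrable.coeFn_toL1 (hgi n)
    filter_upwards [hae, this] with ω h1 h2
    refine h1.congr fun k => h2 _
  set e := d / (2 * (μ.real univ + 1)) with he
  have he0 : 0 < e := by positivity
  set B : ℕ → Set Ω := fun K => {ω | ∀ k ≥ K, e ≤ g (φ k) ω} with hB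
  have hBm : ∀ K, MeasurableSet (B K) := by
    intro K
    have : B K = ⋂ k, ⋂ (_ : k ≥ K), {ω | e ≤ g (φ k) ω} := by ext; simp [hB]
    rw [this]
    exact MeasurableSet.iInter fun k => MeasurableSet.iInter fun _ =>
      measurableSet_le measurable_const (hgm _)
  suffices hpos : ∃ K, 0 < μ (B K) by
    obtain ⟨K, hK⟩ := hpos
    exact ⟨B K, e, φ, hBm K, hK, he0, hφ, K, fun k hk ω hω => hω k hk⟩
  by_contra hcon
  push Not at hcon
  have hnull : ∀ᵐ ω ∂μ, ∀ K, ω ∉ B K := ae_all_iff.2 fun K =>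
    measure_eq_zero_iff_ae_notMem.1 (le_antisymm (hcon K) bot_le)
  have hle : ∀ᵐ ω ∂μ, h ω ≤ e := by
    filter_upwards [hnull, hae'] with ω h1 h2
    by_contra hlt
    push Not at hlt
    obtain ⟨K, hK⟩ := eventually_atTop.1 (h2.eventually_const_lt hlt)
    exact h1 K fun k hk => (hK k hk).le
  have hint : ∫ ω in A, h ω ∂μ ≤ ∫ ω in A, e ∂μ :=
    integral_mono_ae (L1.integrable_coeFn h).integrableOn (integrable_const _)
      (ae_restrict_of_ae hle)
  rw [setIntegral_const, smul_eq_mul] at hint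
  have h1 : μ.real A ≤ μ.real univ := measureReal_mono (subset_univ _)
  have h2 : μ.real univ * e ≤ d / 2 := by
    rw [he, mul_div_assoc', div_le_div_iff₀ (by positivity) (by positivity)]
    nlinarith [measureReal_nonneg (μ := μ) (s := univ)]
  nlinarith

lemma condG_contra {Ω : Type*} [MeasurableSpace Ω] (μ : Measure Ω) [IsFiniteMeasure μ]
    {Z : Type*} [NormedAddCommGroup Z] [NormedSpace ℝ Z]
    (ν : VectorMeasure Ω (Z →L[ℝ] ℝ)) (B : Set Ω) (e : ℝ) (f : Ω → ℝ)
    (hfi : Integrable f μ) (y : Z)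
    (hf : ∀ B, MeasurableSet B → ∫ ω in B, f ω ∂μ = ν B y)
    (hle : ∀ ω ∈ B, e ≤ f ω) (x : Z →L[ℝ] ℝ)
    (hx : x ∈ @closure _ (wstarTop Z) (convexHull ℝ (avgRange μ ν B))) : e ≤ x y := by
  have hsub : convexHull ℝ (avgRange μ ν B) ⊆ {w | e ≤ w y} := by
    refine convexHull_min ?_ ?_
    · rintro _ ⟨C, hC, hCB, hpos, rfl⟩
      have hreal : 0 < (μ C).toReal := ENNReal.toReal_pos hpos.ne' (measure_ne_top _ _)
      have h1 : ∫ ω in C, e ∂μ ≤ ∫ ω in C, f ω ∂μ :=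
        setIntegral_mono_on (integrable_const _) hfi.integrableOn hC fun ω hω => hle ω (hCB hω)
      rw [setIntegral_const, hf C hC, smul_eq_mul, Measure.real] at h1
      change e ≤ (μ C).toReal⁻¹ * ν C y
      rw [← div_eq_inv_mul, le_div_iff₀ hreal]
      linarith
    · intro a ha b hb s t hs ht hst
      change e ≤ s * a y + t * b y
      have ha' : e ≤ a y := ha
      have hb' : e ≤ b y := hb
      calc e = s * e + t * e := by rw [← add_mul, hst, one_mul]
        _ ≤ _ := by gcongr
  unfold wstarTop at hx
  rw [closure_induced] at hx
  have hcl : IsClosed {u : Z → ℝ | e ≤ u y} := isClosed_le continuous_const (continuous_apply y)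
  exact closure_minimal (by rintro _ ⟨w, hw, rfl⟩; exact hsub hw) hcl hx

lemma exists_seq_aux {Z Y : Type*} [NormedAddCommGroup Z] [NormedSpace ℝ Z]
    [NormedAddCommGroup Y] [NormedSpace ℝ Y] (i : Y →ₗ[ℝ] (Z →L[ℝ] ℝ)) (hi : ∀ y, ‖i y‖ ≤ ‖y‖)
    (hE : EfremovE Y) (w : Z →L[ℝ] ℝ) (d : ℝ) (hd : 0 < d)
    (hcl : ∀ I : Finset Y, ((fun _ => 0, d / 2) : (I → ℝ) × ℝ) ∈ closure
      ((fun z : Z => ((fun j : I => i j z, w z) : (I → ℝ) × ℝ)) '' Metric.closedBall 0 1)) :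
    ∃ (z : ℕ → Z), (∀ n, ‖z n‖ ≤ 1) ∧ (∀ n, d / 4 ≤ w (z n)) ∧
      ∀ y, Tendsto (fun n => i y (z n)) atTop (𝓝 0) := by
  have hbound : ∀ z y, ‖i y z‖ ≤ ‖z‖ * ‖y‖ := fun z y => by
    refine ((i y).le_opNorm z).trans ?_
    rw [mul_comm]
    exact mul_le_mul_of_nonneg_left (hi y) (norm_nonneg _)
  let J : Z →ₗ[ℝ] (Y →L[ℝ] ℝ) :=
    { toFun := fun z => LinearMap.mkContinuous
        ({ toFun := fun y => i y z
           map_add' := fun a b => by simp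
           map_smul' := fun c a => by simp } : Y →ₗ[ℝ] ℝ) ‖z‖ (hbound z)
      map_add' := fun a b => by ext x; simp
      map_smul' := fun c a => by ext x; simp }
  have hJ : ∀ z y, J z y = i y z := fun z x => rfl
  set C : Set Z := {z | ‖z‖ ≤ 1 ∧ d / 4 ≤ w z} with hC
  have hCconv : Convex ℝ C := by
    have : C = Metric.closedBall 0 1 ∩ w ⁻¹' (Ici (d / 4)) := by
      ext z; simp [hC]
    rw [this]
    exact (convex_closedBall _ _).inter ((convex_Ici _).linear_preimage (w : Z →ₗ[ℝ] ℝ))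
  have hsub : J '' C ⊆ Metric.closedBall 0 1 := by
    rintro _ ⟨z, hz, rfl⟩
    rw [mem_closedBall_zero_iff]
    refine ContinuousLinearMap.opNorm_le_bound _ zero_le_one fun x => ?_
    rw [hJ]
    refine (hbound z x).trans ?_
    gcongr
    exact hz.1
  have h0 : (0 : Y →L[ℝ] ℝ) ∈ @closure _ (wstarTop Y) (J '' C) := by
    unfold wstarTop
    rw [closure_induced, mem_closure_iff]
    intro o ho h0o
    obtain ⟨I, u, hu, hIo⟩ := isOpen_pi_iff.1 ho _ h0o
    have hcl := mem_closure_iff.1 (hcl I)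
    obtain ⟨_, ⟨h1, h2⟩, ⟨z, hz, rfl⟩⟩ := hcl
      ((Set.pi (univ : Set I) fun i : I => u i.1) ×ˢ Ioi (d / 4))
      ((isOpen_set_pi finite_univ fun i _ => (hu i.1 i.2).1).prod isOpen_Ioi)
      ⟨fun i _ => (hu i.1 i.2).2, by simp only [mem_Ioi]; linarith⟩
    refine ⟨J z, hIo fun i hi => ?_, _, ⟨z, ⟨by simpa using hz, le_of_lt h2⟩, rfl⟩, rfl⟩
    exact h1 ⟨i, hi⟩ trivial
  obtain ⟨g, hgC, hg⟩ := hE _ (hCconv.linear_image J) hsub 0 h0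
  choose z hz hzg using hgC
  refine ⟨z, fun n => (hz n).1, fun n => (hz n).2, fun x => ?_⟩
  unfold wstarTop at hg
  rw [nhds_induced, tendsto_comap_iff, tendsto_pi_nhds] at hg
  have := hg x
  refine this.congr fun n => ?_
  simp only [Function.comp_apply]
  rw [← hzg n]; rfl

lemma exists_seq {Z : Type*} [NormedAddCommGroup Z] [NormedSpace ℝ Z]
    (X : Submodule ℝ (Z →L[ℝ] ℝ)) (hXclosed : IsClosed (X : Set (Z →L[ℝ] ℝ)))
    (hE : EfremovE ↥X) (w : Z →L[ℝ] ℝ) (hw : w ∉ X) :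
    ∃ (d : ℝ) (z : ℕ → Z), 0 < d ∧ (∀ n, ‖z n‖ ≤ 1) ∧ (∀ n, d ≤ w (z n)) ∧
      ∀ x ∈ X, Tendsto (fun n => x (z n)) atTop (𝓝 0) := by
  obtain ⟨d, hd, hdw⟩ : ∃ d > 0, ∀ x ∈ X, d ≤ ‖w + x‖ := by
    obtain ⟨d, hd, hball⟩ := Metric.isOpen_iff.1 hXclosed.isOpen_compl w hw
    refine ⟨d, hd, fun x hx => ?_⟩
    by_contra h
    push Not at h
    have : -x ∈ Metric.ball w d := by
      rw [Metric.mem_ball, dist_comm, dist_eq_norm]; simpa using h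
    exact hball this (X.neg_mem hx)
  obtain ⟨z, h1, h2, h3⟩ := exists_seq_aux X.subtype (fun y => le_rfl) hE w d hd
    (fun I => helly X w d hd hdw I)
  exact ⟨d / 4, z, by positivity, h1, h2, fun x hx => h3 ⟨x, hx⟩⟩

/-- If `X` has Efremov's property (E) and `ν ∈ ca(μ, Z*)` satisfies condition (G),
then `ν(Σ) ⊆ X`. -/
theorem range_subset_of_efremov_of_condG
    {Ω : Type*} [MeasurableSpace Ω] (μ : Measure Ω) [IsFiniteMeasure μ]
    {Z : Type*} [NormedAddCommGroup Z] [NormedSpace ℝ Z] [CompleteSpace Z]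
    (X : Submodule ℝ (Z →L[ℝ] ℝ)) (hXclosed : IsClosed (X : Set (Z →L[ℝ] ℝ)))
    (hXnorming : IsNorming X)
    (hE : EfremovE ↥X)
    (ν : VectorMeasure Ω (Z →L[ℝ] ℝ))
    (hν : ∀ A : Set Ω, μ A = 0 → ν A = 0)
    (hG : CondG μ ν X) :
    ∀ A : Set Ω, MeasurableSet A → ν A ∈ X := by
  intro A hA
  by_contra hAX
  obtain ⟨d, z, hd, hz1, hzA, hz0⟩ := exists_seq X hXclosed hE (ν A) hAX
  choose f hfm hfi hf using exists_density μ ν hν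
  obtain ⟨y, hyD, hyC⟩ := exists_cauchy_convex μ ν hν f hfm hfi hf z hz1
  obtain ⟨B, e, φ, hB, hBpos, he, hφ, K, hK⟩ := exists_set_lower_bound μ (fun n => f (y n))
    (fun n => hfm _) (fun n => hfi _) hyC A hA d hd (by
      intro n
      rw [hf _ A hA]
      have : convexHull ℝ (z '' Ici n) ⊆ (ν A) ⁻¹' Ici d := by
        refine convexHull_min ?_ ((convex_Ici d).linear_preimage (ν A : Z →ₗ[ℝ] ℝ))
        rintro _ ⟨k, -, rfl⟩
        exact hzA k
      exact this (hyD n))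
  obtain ⟨x, hx, hxX⟩ := hG B hB hBpos
  obtain ⟨N, hN⟩ := eventually_atTop.1 ((hz0 x hxX).eventually_lt_const (u := e / 2) (by positivity))
  set k := max K N
  have h1 : e ≤ x (y (φ k)) :=
    condG_contra μ ν B e (f (y (φ k))) (hfi _) _ (hf _) (hK k (le_max_left _ _)) x hx
  have h2 : convexHull ℝ (z '' Ici (φ k)) ⊆ x ⁻¹' Iic (e / 2) := by
    refine convexHull_min ?_ ((convex_Iic (e / 2)).linear_preimage (x : Z →ₗ[ℝ] ℝ))
    rintro _ ⟨m, hm, rfl⟩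
    exact (hN m ((le_max_right K N).trans ((hφ.id_le k).trans hm))).le
  have h3 : x (y (φ k)) ≤ e / 2 := h2 (hyD _)
  linarith
end
end

section
/- Let (Ω,Σ,μ) be a finite measure space, Z a real Banach space, and X ⊆ Z* a norm-closed subspace which is norming for Z. Suppose that the closed unit ball B_{X*} of X* equipped with the weak* topology is convex block compact, and that X equipped with the Mackey topology μ(X,Z) of the dual pair ⟨X,Z⟩ is complete. If ν : Σ → Z* is a countably additive μ-continuous vector measure satisfying condition (G), then ν(A) ∈ X for every A ∈ Σ. -/
open MeasureTheory Filter Set Topology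
open scoped UniformConvergence

noncomputable section

/-- The Mackey uniformity `μ(X,Z)` on `X`: the uniformity of uniform convergence on all
absolutely convex `σ(Z,X)`-compact subsets of `Z`. -/
def mackeyUniformity {Z : Type*} [NormedAddCommGroup Z] [NormedSpace ℝ Z]
    (X : Submodule ℝ (Z →L[ℝ] ℝ)) : UniformSpace X :=
  UniformSpace.comap
    (fun x : X => UniformOnFun.ofFun
      {K : Set Z | Convex ℝ K ∧ Balanced ℝ K ∧ @IsCompact _ (sigmaTop X) K}
      (fun z : Z => (x : Z →L[ℝ] ℝ) z))
    inferInstance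


/-- Separation argument: a functional small on `K` near `0` is approximated by `X` on `K`. -/
theorem aux_approx {Z : Type*} [NormedAddCommGroup Z] [NormedSpace ℝ Z]
    (X : Submodule ℝ (Z →L[ℝ] ℝ)) (φ : Z →L[ℝ] ℝ) (K : Set Z) (hKc : Convex ℝ K)
    (hKb : Balanced ℝ K) (ε : ℝ) (F : Finset X)
    (hF : ∀ z ∈ K, (∀ x ∈ F, |(x : Z →L[ℝ] ℝ) z| ≤ 1) → φ z < ε) :
    ∃ x : X, ∀ z ∈ K, |φ z - (x : Z →L[ℝ] ℝ) z| ≤ ε := by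
  classical
  rcases K.eq_empty_or_nonempty with rfl | hne
  · exact ⟨0, by simp⟩
  have h0 : (0 : Z) ∈ K := hKb.zero_mem hne
  have hε : 0 < ε := by simpa using hF 0 h0 (by simp)
  let P : Z →ₗ[ℝ] (F → ℝ) × ℝ :=
    LinearMap.prod (LinearMap.pi fun i : F => ((i : X) : Z →L[ℝ] ℝ).toLinearMap) φ.toLinearMap
  have hP1 : ∀ z (i : F), (P z).1 i = ((i : X) : Z →L[ℝ] ℝ) z := fun z i => rfl
  have hP2 : ∀ z, (P z).2 = φ z := fun z => rfl
  let D : Set ((F → ℝ) × ℝ) := P '' K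
  have hD : Convex ℝ D := hKc.linear_image P
  let U : Set ((F → ℝ) × ℝ) := Metric.ball 0 1 ×ˢ Ioi ε
  have hUo : IsOpen U := Metric.isOpen_ball.prod isOpen_Ioi
  have hUc : Convex ℝ U := (convex_ball _ _).prod (convex_Ioi _)
  have hdis : Disjoint U D := by
    rw [Set.disjoint_left]
    rintro _ ⟨hu1, hu2⟩ ⟨z, hz, rfl⟩
    have := hF z hz (fun x hx => by
      have h1 : ‖(P z).1 ⟨x, hx⟩‖ ≤ ‖(P z).1‖ := norm_le_pi_norm _ _
      rw [mem_ball_zero_iff] at hu1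
      rw [hP1] at h1
      exact h1.trans hu1.le)
    rw [mem_Ioi, hP2] at hu2
    linarith
  obtain ⟨f, u, hfu, hfd⟩ := geometric_hahn_banach_open hUc hUo hD hdis
  let b : ℝ := f (0, 1)
  let a : F → ℝ := fun i => f (Pi.single i 1, 0)
  have hfb : ∀ t : ℝ, f (0, t) = t * b := fun t => by
    have : ((0 : F → ℝ), t) = t • ((0 : F → ℝ), (1 : ℝ)) := by simp
    rw [this, map_smul]; rfl
  have hfa : ∀ y : F → ℝ, f (y, 0) = ∑ i, y i * a i := fun y => by
    have : (y, (0 : ℝ)) = ∑ i, y i • ((Pi.single i (1:ℝ) : F → ℝ), (0 : ℝ)) := by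
      ext j
      · simp [Prod.fst_sum, Finset.sum_apply, Pi.single_apply]
      · simp [Prod.snd_sum]
    rw [this, map_sum]; simp only [map_smul]; rfl
  have hf : ∀ y t, f (y, t) = (∑ i, y i * a i) + t * b := fun y t => by
    rw [← hfa, ← hfb, ← map_add]; simp
  have hu0 : u ≤ 0 := by
    have := hfd 0 ⟨0, h0, by simp⟩
    simpa using this
  have hU : ∀ t, ε < t → t * b < u := fun t ht => by
    rw [← hfb]; exact hfu _ ⟨by simp, ht⟩
  have hb : b < 0 := by
    have := hU (2 * ε) (by linarith)
    by_contra hb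
    have : 0 ≤ 2 * ε * b := by push Not at hb; positivity
    linarith
  have hεb : ε * b ≤ u := by
    have h1 : Tendsto (fun t : ℝ => t * b) (𝓝[>] ε) (𝓝 (ε * b)) :=
      ((continuous_id.mul continuous_const).tendsto ε).mono_left nhdsWithin_le_nhds
    refine le_of_tendsto h1 ?_
    filter_upwards [self_mem_nhdsWithin] with t ht using (hU t ht).le
  refine ⟨∑ i : F, (-(a i / b)) • (i : X), ?_⟩
  have key : ∀ z ∈ K, φ z - ((∑ i : F, (-(a i / b)) • (i : X) : X) : Z →L[ℝ] ℝ) z ≤ ε := by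
    intro z hz
    have h1 := hεb.trans (hfd (P z) ⟨z, hz, rfl⟩)
    have h2 : f (P z) = (∑ i : F, ((i : X) : Z →L[ℝ] ℝ) z * a i) + φ z * b := hf _ _
    have h3 : ((∑ i : F, (-(a i / b)) • (i : X) : X) : Z →L[ℝ] ℝ) z
        = -((∑ i : F, ((i : X) : Z →L[ℝ] ℝ) z * a i) / b) := by
      rw [AddSubmonoidClass.coe_finsetSum, sum_apply, Finset.sum_div,
        ← Finset.sum_neg_distrib]
      refine Finset.sum_congr rfl fun i _ => ?_
      simp; ring
    rw [h3, sub_neg_eq_add]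
    rw [h2] at h1
    have : φ z + (∑ i : F, ((i : X) : Z →L[ℝ] ℝ) z * a i) / b
      = ((∑ i : F, ((i : X) : Z →L[ℝ] ℝ) z * a i) + φ z * b) / b := by
        field_simp [hb.ne]; ring
    rw [this, div_le_iff_of_neg hb]
    exact h1
  intro z hz
  rw [abs_le]
  refine ⟨?_, key z hz⟩
  have := key (-z) (hKb.neg_mem_iff.2 hz)
  simp only [map_neg] at this
  linarith

theorem aux_isCompact_sigma {Z : Type*} [NormedAddCommGroup Z] [NormedSpace ℝ Z]
    (X : Submodule ℝ (Z →L[ℝ] ℝ)) (K : Set Z) :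
    @IsCompact _ (sigmaTop X) K ↔
      IsCompact ((fun z => fun x : X => (x : Z →L[ℝ] ℝ) z) '' K) := by
  let _ := sigmaTop X
  exact Topology.IsInducing.isCompact_iff ⟨rfl⟩

/-- Completeness argument of Grothendieck. -/
theorem aux_grothendieck {Z : Type*} [NormedAddCommGroup Z] [NormedSpace ℝ Z]
    (X : Submodule ℝ (Z →L[ℝ] ℝ)) (hMackeyComplete : @CompleteSpace ↥X (mackeyUniformity X))
    (φ : Z →L[ℝ] ℝ)
    (h : ∀ K : Set Z, Convex ℝ K → Balanced ℝ K → @IsCompact _ (sigmaTop X) K → ∀ ε > 0,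
      ∃ x : X, ∀ z ∈ K, |φ z - (x : Z →L[ℝ] ℝ) z| ≤ ε) : φ ∈ X := by
  let 𝔖 : Set (Set Z) := {K : Set Z | Convex ℝ K ∧ Balanced ℝ K ∧ @IsCompact _ (sigmaTop X) K}
  have hne : 𝔖.Nonempty := ⟨∅, convex_empty, by simp [Balanced], by
    rw [aux_isCompact_sigma]; simp⟩
  have hdir : DirectedOn (· ⊆ ·) 𝔖 := by
    rintro K ⟨hK1, hK2, hK3⟩ L ⟨hL1, hL2, hL3⟩
    rcases K.eq_empty_or_nonempty with rfl | hKne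
    · exact ⟨L, ⟨hL1, hL2, hL3⟩, empty_subset _, subset_rfl⟩
    rcases L.eq_empty_or_nonempty with rfl | hLne
    · exact ⟨K, ⟨hK1, hK2, hK3⟩, subset_rfl, empty_subset _⟩
    have hK0 := hK2.zero_mem hKne
    have hL0 := hL2.zero_mem hLne
    refine ⟨Set.image2 (· + ·) K L, ⟨hK1.add hL1, hK2.add hL2, ?_⟩, fun z hz => ⟨z, hz, 0, hL0, by simp⟩,
      fun z hz => ⟨0, hK0, z, hz, by simp⟩⟩
    rw [aux_isCompact_sigma] at *
    have h1 := (hK3.prod hL3).image (continuous_add (M := X → ℝ))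
    convert h1 using 1
    ext p
    constructor
    · rintro ⟨_, ⟨k, hk, l, hl, rfl⟩, rfl⟩
      exact ⟨(_, _), ⟨⟨k, hk, rfl⟩, ⟨l, hl, rfl⟩⟩, by ext x; simp⟩
    · rintro ⟨⟨_, _⟩, ⟨⟨k, hk, rfl⟩, ⟨l, hl, rfl⟩⟩, rfl⟩
      exact ⟨_, ⟨k, hk, l, hl, rfl⟩, by ext x; simp⟩
  let ι : X → (Z →ᵤ[𝔖] ℝ) := fun x => UniformOnFun.ofFun 𝔖 (fun z : Z => (x : Z →L[ℝ] ℝ) z)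
  let φ' : Z →ᵤ[𝔖] ℝ := UniformOnFun.ofFun 𝔖 φ
  have hNB : NeBot (comap ι (𝓝 φ')) := by
    rw [comap_neBot_iff]
    intro t ht
    rw [(UniformOnFun.hasBasis_nhds_of_basis Z ℝ 𝔖 φ' hne hdir
      Metric.uniformity_basis_dist_le).mem_iff] at ht
    obtain ⟨⟨K, ε⟩, ⟨⟨hK1, hK2, hK3⟩, hε⟩, hsub⟩ := ht
    obtain ⟨x, hx⟩ := h K hK1 hK2 hK3 ε hε
    refine ⟨x, hsub ?_⟩
    intro z hz
    have := hx z hz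
    change dist ((x : Z →L[ℝ] ℝ) z) (φ z) ≤ ε
    rwa [dist_comm, Real.dist_eq]
  let τ : UniformSpace X := mackeyUniformity X
  have hC : Cauchy (comap ι (𝓝 φ')) := Cauchy.comap' cauchy_nhds le_rfl hNB
  obtain ⟨x0, hx0⟩ := hMackeyComplete.complete hC
  have hι : Tendsto ι (@nhds X τ.toTopologicalSpace x0) (𝓝 (ι x0)) := by
    have : @UniformContinuous X _ τ _ ι := uniformContinuous_comap
    exact @Continuous.tendsto X _ τ.toTopologicalSpace _ ι
      (@UniformContinuous.continuous X _ τ _ ι this) x0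
  have hlim1 : Tendsto ι (comap ι (𝓝 φ')) (𝓝 φ') := tendsto_comap
  have hlim2 : Tendsto ι (comap ι (𝓝 φ')) (𝓝 (ι x0)) := hι.mono_left hx0
  have : φ = (x0 : Z →L[ℝ] ℝ) := by
    ext z
    let S : Set Z := (fun t : ℝ => t • z) '' Icc (-1) 1
    have hzS : z ∈ S := ⟨1, by simp, by simp⟩
    have hS : S ∈ 𝔖 := by
      refine ⟨(convex_Icc _ _).linear_image (LinearMap.toSpanSingleton ℝ Z z), ?_, ?_⟩
      · rw [balanced_iff_smul_mem]
        rintro a ha _ ⟨t, ht, rfl⟩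
        refine ⟨a * t, ?_, by simp [mul_smul]⟩
        rw [mem_Icc, ← abs_le] at *
        rw [abs_mul]
        exact mul_le_one₀ ha (abs_nonneg _) ht
      · rw [aux_isCompact_sigma, image_image]
        refine isCompact_Icc.image ?_
        simp only [map_smul]
        fun_prop
    have hev : Continuous ((Function.eval z : (Z → ℝ) → ℝ) ∘ UniformOnFun.toFun 𝔖) :=
      (UniformOnFun.uniformContinuous_eval_of_mem ℝ 𝔖 hzS hS).continuous
    exact tendsto_nhds_unique ((hev.tendsto φ').comp hlim1) ((hev.tendsto (ι x0)).comp hlim2)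
  rw [this]; exact x0.2

theorem aux_bs_s2 {E : Type*} [NormedAddCommGroup E] [NormedSpace ℝ E] [CompleteSpace E]
    {ι : Type*} (g : ι → E →ₗ[ℝ] ℝ) (b : ι → ℝ) (hb : ∀ i x, |g i x| ≤ b i * ‖x‖)
    (h : ∀ x, ∃ C, ∀ i, |g i x| ≤ C) : ∃ C, 0 ≤ C ∧ ∀ i x, |g i x| ≤ C * ‖x‖ := by
  obtain ⟨C, hC⟩ := banach_steinhaus (g := fun i => (g i).mkContinuous (b i) (hb i)) h
  refine ⟨max C 0, le_max_right _ _, fun i x => ?_⟩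
  have := ((g i).mkContinuous (b i) (hb i)).le_opNorm x
  refine this.trans ?_
  gcongr
  exact (hC i).trans (le_max_left _ _)

/-- Evaluation at `z` as a linear functional on `X`. -/
def auxEval {Z : Type*} [NormedAddCommGroup Z] [NormedSpace ℝ Z]
    (X : Submodule ℝ (Z →L[ℝ] ℝ)) (z : Z) : X →ₗ[ℝ] ℝ where
  toFun x := (x : Z →L[ℝ] ℝ) z
  map_add' _ _ := rfl
  map_smul' _ _ := rfl

theorem auxEval_bound {Z : Type*} [NormedAddCommGroup Z] [NormedSpace ℝ Z]
    (X : Submodule ℝ (Z →L[ℝ] ℝ)) (z : Z) (x : X) : |auxEval X z x| ≤ ‖z‖ * ‖x‖ := by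
  rw [mul_comm]
  exact (x : Z →L[ℝ] ℝ).le_opNorm z

theorem aux_bounded {Z : Type*} [NormedAddCommGroup Z] [NormedSpace ℝ Z]
    (X : Submodule ℝ (Z →L[ℝ] ℝ)) (hXclosed : IsClosed (X : Set (Z →L[ℝ] ℝ)))
    (hXnorming : IsNorming X) (K : Set Z) (hK : @IsCompact _ (sigmaTop X) K) :
    ∃ R > 0, ∀ z ∈ K, ‖z‖ ≤ R := by
  rw [aux_isCompact_sigma] at hK
  have : CompleteSpace X := hXclosed.completeSpace_coe
  obtain ⟨C, hC0, hC⟩ : ∃ C, 0 ≤ C ∧ ∀ (i : K) (x : X), |auxEval X (i : Z) x| ≤ C * ‖x‖ := by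
    apply aux_bs_s2 (fun i : K => auxEval X (i : Z)) (fun i => ‖(i : Z)‖)
      (fun i x => auxEval_bound X _ x)
    intro x
    have h1 := (hK.image (continuous_apply x)).isBounded
    obtain ⟨C, hC⟩ := h1.exists_norm_le
    exact ⟨C, fun i => hC _ ⟨_, ⟨i, i.2, rfl⟩, rfl⟩⟩
  obtain ⟨c, hc, hn⟩ := hXnorming
  refine ⟨max (C / c) 1, by positivity, fun z hz => le_max_of_le_left ?_⟩
  rw [le_div_iff₀ hc, mul_comm]
  refine (hn z).trans (csSup_le ⟨0, 0, X.zero_mem, by simp, by simp⟩ ?_)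
  rintro r ⟨x, hx, hx1, rfl⟩
  have h1 := hC ⟨z, hz⟩ ⟨x, hx⟩
  calc x z ≤ |x z| := le_abs_self _
    _ ≤ C * ‖x‖ := h1
    _ ≤ C * 1 := mul_le_mul_of_nonneg_left hx1 hC0
    _ = C := mul_one _

theorem aux_tendsto_wstar {E : Type*} [NormedAddCommGroup E] [NormedSpace ℝ E]
    {h : ℕ → (E →L[ℝ] ℝ)} {f : E →L[ℝ] ℝ} (H : Tendsto h atTop (@nhds _ (wstarTop E) f)) (x : E) :
    Tendsto (fun k => h k x) atTop (𝓝 (f x)) := by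
  rw [wstarTop, nhds_induced, tendsto_comap_iff] at H
  exact (tendsto_pi_nhds.1 H) x

theorem aux_cbc {E : Type*} [NormedAddCommGroup E] [NormedSpace ℝ E]
    (H : DualBallConvexBlockCompact E) (g : ℕ → E →ₗ[ℝ] ℝ) (R : ℝ) (hR : 0 < R)
    (hg : ∀ n x, |g n x| ≤ R * ‖x‖) :
    ∃ (I : ℕ → Finset ℕ) (a : ℕ → ℝ),
    (∀ k, ∀ n ∈ I k, ∀ m ∈ I (k + 1), n < m) ∧
    (∀ n, 0 ≤ a n) ∧ (∀ k, ∑ n ∈ I k, a n = 1) ∧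
    ∃ f : E → ℝ, ∀ x, Tendsto (fun k => ∑ n ∈ I k, a n * g n x) atTop (𝓝 (f x)) := by
  have hg' : ∀ n x, ‖(R⁻¹ • g n) x‖ ≤ 1 * ‖x‖ := by
    intro n x
    have := hg n x
    rw [LinearMap.smul_apply, norm_smul, Real.norm_eq_abs, abs_of_pos (inv_pos.2 hR), one_mul,
      inv_mul_le_iff₀ hR]
    exact this
  obtain ⟨h, ⟨I, a, h1, h2, h3, h4⟩, f, hf⟩ := H
    (fun n => (R⁻¹ • g n).mkContinuous 1 (hg' n))
    (fun n => LinearMap.mkContinuous_norm_le _ zero_le_one _)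
  refine ⟨I, a, h1, h2, h3, fun x => R * f x, fun x => ?_⟩
  have := (aux_tendsto_wstar hf x).const_mul R
  refine this.congr fun k => ?_
  rw [h4, sum_apply, Finset.mul_sum]
  refine Finset.sum_congr rfl fun n _ => ?_
  simp
  field_simp

theorem aux_block_ge {I : ℕ → Finset ℕ} {a : ℕ → ℝ}
    (h1 : ∀ k, ∀ n ∈ I k, ∀ m ∈ I (k + 1), n < m) (h3 : ∀ k, ∑ n ∈ I k, a n = 1) :
    ∀ k, ∀ n ∈ I k, k ≤ n := by
  intro k
  induction k with
  | zero => intro n _; exact Nat.zero_le _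
  | succ k ih =>
    intro n hn
    have : (I k).Nonempty := by
      rw [Finset.nonempty_iff_ne_empty]
      intro h
      have := h3 k
      simp [h] at this
    obtain ⟨m, hm⟩ := this
    have := ih m hm
    have := h1 k m hm n hn
    omega

theorem aux_block_tendsto {I : ℕ → Finset ℕ} {a : ℕ → ℝ}
    (h1 : ∀ k, ∀ n ∈ I k, ∀ m ∈ I (k + 1), n < m) (h2 : ∀ n, 0 ≤ a n)
    (h3 : ∀ k, ∑ n ∈ I k, a n = 1) {c : ℕ → ℝ} {l : ℝ} (hc : Tendsto c atTop (𝓝 l)) :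
    Tendsto (fun k => ∑ n ∈ I k, a n * c n) atTop (𝓝 l) := by
  rw [Metric.tendsto_atTop] at hc ⊢
  intro ε hε
  obtain ⟨N, hN⟩ := hc (ε / 2) (by positivity)
  refine ⟨N, fun k hk => ?_⟩
  rw [Real.dist_eq]
  have : ∑ n ∈ I k, a n * c n - l = ∑ n ∈ I k, a n * (c n - l) := by
    simp only [mul_sub, Finset.sum_sub_distrib, ← Finset.sum_mul, h3, one_mul]
  rw [this]
  calc |∑ n ∈ I k, a n * (c n - l)| ≤ ∑ n ∈ I k, |a n * (c n - l)| :=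
        Finset.abs_sum_le_sum_abs _ _
    _ ≤ ∑ n ∈ I k, a n * (ε / 2) := by
        refine Finset.sum_le_sum fun n hn => ?_
        rw [abs_mul, abs_of_nonneg (h2 n)]
        refine mul_le_mul_of_nonneg_left ?_ (h2 n)
        have := hN n (hk.trans (aux_block_ge h1 h3 k n hn))
        rw [Real.dist_eq] at this
        exact this.le
    _ = ε / 2 := by rw [← Finset.sum_mul, h3, one_mul]
    _ < ε := by linarith

theorem aux_extract {Z : Type*} [NormedAddCommGroup Z] [NormedSpace ℝ Z]
    (X : Submodule ℝ (Z →L[ℝ] ℝ)) (hXclosed : IsClosed (X : Set (Z →L[ℝ] ℝ)))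
    (hXnorming : IsNorming X) (hCBC : DualBallConvexBlockCompact ↥X)
    (K : Set Z) (hKc : Convex ℝ K) (hK : @IsCompact _ (sigmaTop X) K)
    (w : ℕ → Z) (hw : ∀ n, w n ∈ K) :
    ∃ (I : ℕ → Finset ℕ) (a : ℕ → ℝ),
    (∀ k, ∀ n ∈ I k, ∀ m ∈ I (k + 1), n < m) ∧
    (∀ n, 0 ≤ a n) ∧ (∀ k, ∑ n ∈ I k, a n = 1) ∧ (∀ k, ∑ n ∈ I k, a n • w n ∈ K) ∧
    ∃ h ∈ K, ∀ x ∈ X, Tendsto (fun k => x (∑ n ∈ I k, a n • w n)) atTop (𝓝 (x h)) := by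
  obtain ⟨R, hR, hRK⟩ := aux_bounded X hXclosed hXnorming K hK
  obtain ⟨I, a, h1, h2, h3, f, hf⟩ := aux_cbc hCBC (fun n => auxEval X (w n)) R hR (fun n x => by
    refine (auxEval_bound X _ x).trans ?_
    gcongr
    exact hRK _ (hw n))
  have hmem : ∀ k, ∑ n ∈ I k, a n • w n ∈ K := fun k =>
    hKc.sum_mem (fun n _ => h2 n) (h3 k) (fun n _ => hw n)
  refine ⟨I, a, h1, h2, h3, hmem, ?_⟩
  rw [aux_isCompact_sigma] at hK
  let e : Z → X → ℝ := fun z => fun x : X => (x : Z →L[ℝ] ℝ) z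
  have hlim : Tendsto (fun k => e (∑ n ∈ I k, a n • w n)) atTop (𝓝 f) := by
    rw [tendsto_pi_nhds]
    intro x
    refine (hf x).congr fun k => ?_
    change _ = (x : Z →L[ℝ] ℝ) _
    rw [map_sum]
    simp only [map_smul, smul_eq_mul]
    rfl
  have hfK : f ∈ e '' K := hK.isClosed.mem_of_tendsto hlim
    (Eventually.of_forall fun k => ⟨_, hmem k, rfl⟩)
  obtain ⟨h, hh, hhe⟩ := hfK
  refine ⟨h, hh, fun x hx => ?_⟩
  rw [← hhe, tendsto_pi_nhds] at hlim
  exact hlim ⟨x, hx⟩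

/-- A family of densities of the scalar measures `⟨ν, z⟩`. -/
structure AuxDens {Ω : Type*} [MeasurableSpace Ω] (μ : Measure Ω)
    {Z : Type*} [NormedAddCommGroup Z] [NormedSpace ℝ Z]
    (ν : VectorMeasure Ω (Z →L[ℝ] ℝ)) (f : Z → Ω → ℝ) : Prop where
  meas : ∀ z, Measurable (f z)
  int : ∀ z, Integrable (f z) μ
  rep : ∀ z B, MeasurableSet B → ν B z = ∫ ω in B, f z ω ∂μ

theorem aux_dens_exists {Ω : Type*} [MeasurableSpace Ω] (μ : Measure Ω) [IsFiniteMeasure μ]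
    {Z : Type*} [NormedAddCommGroup Z] [NormedSpace ℝ Z]
    (ν : VectorMeasure Ω (Z →L[ℝ] ℝ)) (hν : ∀ A : Set Ω, μ A = 0 → ν A = 0) :
    ∃ f : Z → Ω → ℝ, AuxDens μ ν f := by
  let s : Z → SignedMeasure Ω := fun z =>
    ν.mapRange (ContinuousLinearMap.apply ℝ ℝ z : (Z →L[ℝ] ℝ) →L[ℝ] ℝ).toLinearMap.toAddMonoidHom
      (ContinuousLinearMap.apply ℝ ℝ z).continuous
  have hs : ∀ z B, s z B = ν B z := fun z B => rfl
  have hac : ∀ z, s z ≪ᵥ μ.toENNRealVectorMeasure := by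
    intro z
    refine VectorMeasure.AbsolutelyContinuous.mk fun B hB h0 => ?_
    rw [Measure.toENNRealVectorMeasure_apply_measurable hB] at h0
    rw [hs, hν B h0]; rfl
  refine ⟨fun z => (s z).rnDeriv μ, fun z => SignedMeasure.measurable_rnDeriv _ _,
    fun z => SignedMeasure.integrable_rnDeriv _ _, fun z B hB => ?_⟩
  rw [← withDensityᵥ_apply (SignedMeasure.integrable_rnDeriv _ _) hB,
    (SignedMeasure.absolutelyContinuous_iff_withDensityᵥ_rnDeriv_eq _ _).1 (hac z), hs]

section AuxMeas

variable {Ω : Type*} [MeasurableSpace Ω] {μ : Measure Ω} [IsFiniteMeasure μ]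
  {Z : Type*} [NormedAddCommGroup Z] [NormedSpace ℝ Z]
  {ν : VectorMeasure Ω (Z →L[ℝ] ℝ)} {f : Z → Ω → ℝ}

theorem AuxDens.ae_eq (hf : AuxDens μ ν f) {z : Z} {g : Ω → ℝ} (hg : Integrable g μ)
    (h : ∀ B, MeasurableSet B → ν B z = ∫ ω in B, g ω ∂μ) : f z =ᵐ[μ] g :=
  Integrable.ae_eq_of_forall_setIntegral_eq _ _ (hf.int z) hg fun B hB _ => by
    rw [← hf.rep z B hB, h B hB]

theorem AuxDens.add (hf : AuxDens μ ν f) (u v : Z) : f (u + v) =ᵐ[μ] fun ω => f u ω + f v ω :=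
  hf.ae_eq ((hf.int u).add (hf.int v)) fun B hB => by
    rw [integral_add (hf.int u).integrableOn (hf.int v).integrableOn, ← hf.rep u B hB,
      ← hf.rep v B hB, map_add]

theorem AuxDens.smul (hf : AuxDens μ ν f) (c : ℝ) (u : Z) : f (c • u) =ᵐ[μ] fun ω => c * f u ω :=
  hf.ae_eq ((hf.int u).const_mul c) fun B hB => by
    rw [integral_const_mul, ← hf.rep u B hB, map_smul, smul_eq_mul]

theorem AuxDens.sub (hf : AuxDens μ ν f) (u v : Z) : f (u - v) =ᵐ[μ] fun ω => f u ω - f v ω :=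
  hf.ae_eq ((hf.int u).sub (hf.int v)) fun B hB => by
    rw [integral_sub (hf.int u).integrableOn (hf.int v).integrableOn, ← hf.rep u B hB,
      ← hf.rep v B hB, map_sub]

theorem AuxDens.sum (hf : AuxDens μ ν f) (I : Finset ℕ) (a : ℕ → ℝ) (w : ℕ → Z) :
    f (∑ n ∈ I, a n • w n) =ᵐ[μ] fun ω => ∑ n ∈ I, a n * f (w n) ω :=
  hf.ae_eq (integrable_finsetSum _ fun n _ => (hf.int (w n)).const_mul (a n)) fun B hB => by
    rw [integral_finsetSum _ fun n _ => ((hf.int (w n)).const_mul (a n)).integrableOn, map_sum]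
    refine Finset.sum_congr rfl fun n _ => ?_
    rw [integral_const_mul, ← hf.rep _ B hB, map_smul, smul_eq_mul]

theorem AuxDens.ge_of_closure (hf : AuxDens μ ν f) {A : Set Ω} {x : Z →L[ℝ] ℝ}
    (hx : x ∈ @closure _ (wstarTop Z) (convexHull ℝ (avgRange μ ν A))) {z : Z} {c : ℝ}
    (hc : ∀ᵐ ω ∂μ, ω ∈ A → c ≤ f z ω) : c ≤ x z := by
  let H : Set (Z →L[ℝ] ℝ) := {w | c ≤ w z}
  have hHc : Convex ℝ H := by
    have : IsLinearMap ℝ (fun w : Z →L[ℝ] ℝ => w z) := ⟨fun _ _ => rfl, fun _ _ => rfl⟩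
    exact convex_halfSpace_ge this c
  have hHcl : @IsClosed _ (wstarTop Z) H := by
    have h1 : IsClosed {p : Z → ℝ | c ≤ p z} := isClosed_le continuous_const (continuous_apply z)
    rw [wstarTop]
    exact isClosed_induced_iff.2 ⟨_, h1, rfl⟩
  have hsub : avgRange μ ν A ⊆ H := by
    rintro w ⟨B, hB, hBA, hpos, rfl⟩
    have hm : 0 < (μ B).toReal := ENNReal.toReal_pos hpos.ne' (measure_ne_top _ _)
    change c ≤ (μ B).toReal⁻¹ * ν B z
    rw [hf.rep z B hB, le_inv_mul_iff₀ hm]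
    have h1 : ∫ _ in B, c ∂μ ≤ ∫ ω in B, f z ω ∂μ := by
      refine setIntegral_mono_on_ae (integrable_const c).integrableOn (hf.int z).integrableOn hB ?_
      filter_upwards [hc] with ω hω hωB using hω (hBA hωB)
    simpa [Measure.real] using h1
  have := @closure_minimal _ (wstarTop Z) _ _ (convexHull_min hsub hHc) hHcl
  exact this hx

theorem AuxDens.lim_le_zero (hf : AuxDens μ ν f) {X : Submodule ℝ (Z →L[ℝ] ℝ)}
    (hG : CondG μ ν X) {u : ℕ → Z} {q : Ω → ℝ}
    (hu : ∀ x ∈ X, Tendsto (fun k => x (u k)) atTop (𝓝 0))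
    (hlim : ∀ᵐ ω ∂μ, Tendsto (fun k => f (u k) ω) atTop (𝓝 (q ω))) : ∀ᵐ ω ∂μ, q ω ≤ 0 := by
  have key : ∀ m : ℕ, ∀ j : ℕ, μ {ω | ∀ k ≥ j, 1 / ((m : ℝ) + 1) ≤ f (u k) ω} = 0 := by
    intro m j
    by_contra hne
    set S := {ω | ∀ k ≥ j, 1 / ((m : ℝ) + 1) ≤ f (u k) ω} with hS
    have hSm : MeasurableSet S := by
      rw [hS]
      have : {ω | ∀ k ≥ j, 1 / ((m : ℝ) + 1) ≤ f (u k) ω}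
        = ⋂ k, ⋂ (_ : k ≥ j), {ω | 1 / ((m : ℝ) + 1) ≤ f (u k) ω} := by ext; simp
      rw [this]
      exact MeasurableSet.iInter fun k => MeasurableSet.iInter fun _ =>
        measurableSet_le measurable_const (hf.meas _)
    obtain ⟨x, hx, hxX⟩ := hG S hSm (pos_iff_ne_zero.2 hne)
    have h1 : ∀ k ≥ j, 1 / ((m : ℝ) + 1) ≤ x (u k) := fun k hk =>
      hf.ge_of_closure hx (Eventually.of_forall fun ω hω => hω k hk)
    have h2 := ge_of_tendsto (hu x hxX) (eventually_atTop.2 ⟨j, h1⟩)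
    have : (0 : ℝ) < 1 / ((m : ℝ) + 1) := by positivity
    linarith
  have key' : ∀ᵐ ω ∂μ, ∀ m j : ℕ, ¬ ∀ k ≥ j, 1 / ((m : ℝ) + 1) ≤ f (u k) ω := by
    rw [ae_all_iff]; intro m
    rw [ae_all_iff]; intro j
    rw [ae_iff]; simpa using key m j
  filter_upwards [key', hlim] with ω h1 h2
  by_contra hpos
  push Not at hpos
  obtain ⟨m, hm⟩ := exists_nat_one_div_lt hpos
  obtain ⟨j, hj⟩ := eventually_atTop.1 (h2.eventually (lt_mem_nhds hm))
  exact h1 m j fun k hk => (hj k hk).le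

theorem AuxDens.tendsto_zero (hf : AuxDens μ ν f) (hν : ∀ A : Set Ω, μ A = 0 → ν A = 0)
    {A : Set Ω} (hA : MeasurableSet A) {u : ℕ → Z} {R : ℝ} (hR : ∀ k, ‖u k‖ ≤ R)
    (hlim : ∀ᵐ ω ∂μ, Tendsto (fun k => f (u k) ω) atTop (𝓝 0)) :
    Tendsto (fun k => ν A (u k)) atTop (𝓝 0) := by
  have hR0 : 0 ≤ R := (norm_nonneg _).trans (hR 0)
  rw [Metric.tendsto_atTop]
  intro ε hε
  set η : ℝ := ε / 2 / (μ.real univ + 1) with hη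
  have hμ0 : 0 ≤ μ.real univ := measureReal_nonneg
  have hηpos : 0 < η := by positivity
  let S : ℕ → Set Ω := fun j => {ω | ∀ k ≥ j, |f (u k) ω| ≤ η}
  have hSm : ∀ j, MeasurableSet (S j) := by
    intro j
    have : S j = ⋂ k, ⋂ (_ : k ≥ j), {ω | |f (u k) ω| ≤ η} := by ext; simp [S]
    rw [this]
    exact MeasurableSet.iInter fun k => MeasurableSet.iInter fun _ =>
        measurableSet_le (hf.meas _).abs measurable_const
  have hanti : Antitone fun j => A \ S j := fun i j hij =>
    sdiff_subset_sdiff_right fun ω hω k hk => hω k (hij.trans hk)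
  have ht := VectorMeasure.tendsto_vectorMeasure_iInter_atTop_nat (v := ν) hanti
    (fun j => hA.diff (hSm j))
  have hnull : ν (⋂ j, A \ S j) = 0 := by
    apply hν
    have : ∀ᵐ ω ∂μ, ω ∉ ⋂ j, A \ S j := by
      filter_upwards [hlim] with ω hω hmem
      rw [mem_iInter] at hmem
      have h1 : ∀ᶠ k in atTop, |f (u k) ω| < η := by
        have := hω.abs
        rw [abs_zero] at this
        exact this.eventually (gt_mem_nhds hηpos)
      obtain ⟨j, hj⟩ := eventually_atTop.1 h1
      exact (hmem j).2 fun k hk => (hj k hk).le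
    rw [ae_iff] at this
    simp only [not_not] at this
    exact this
  rw [hnull, Metric.tendsto_atTop] at ht
  obtain ⟨N, hN⟩ := ht (ε / 2 / (R + 1)) (by positivity)
  refine ⟨N, fun k hk => ?_⟩
  rw [Real.dist_eq, sub_zero]
  have h1 : ν A = ν (A ∩ S k) + ν (A \ S k) := by
    rw [← VectorMeasure.of_union (disjoint_sdiff_inter.symm) (hA.inter (hSm k))
      (hA.diff (hSm k)), inter_union_sdiff]
  have h2 : |ν (A ∩ S k) (u k)| ≤ η * μ.real univ := by
    rw [hf.rep _ _ (hA.inter (hSm k))]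
    have h3 := norm_setIntegral_le_of_norm_le_const (μ := μ) (s := A ∩ S k) (f := f (u k)) (C := η)
      (measure_lt_top _ _) (fun ω hω => hω.2 k le_rfl)
    refine h3.trans ?_
    exact mul_le_mul_of_nonneg_left (measureReal_mono (subset_univ _)) hηpos.le
  have h4 : |ν (A \ S k) (u k)| ≤ ε / 2 / (R + 1) * R := by
    refine ((ν (A \ S k)).le_opNorm (u k)).trans ?_
    have := hN k hk
    rw [dist_zero_right] at this
    exact mul_le_mul this.le (hR k) (norm_nonneg _) (by positivity)
  have h5 : η * μ.real univ < ε / 2 := by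
    rw [hη, div_mul_eq_mul_div, div_lt_iff₀ (by positivity)]
    nlinarith
  have h6 : ε / 2 / (R + 1) * R < ε / 2 := by
    rw [div_mul_eq_mul_div, div_lt_iff₀ (by positivity)]
    nlinarith
  have : ν A (u k) = ν (A ∩ S k) (u k) + ν (A \ S k) (u k) := by rw [h1]; rfl
  rw [this]
  calc _ ≤ _ := abs_add_le _ _
    _ < ε := by linarith

theorem AuxDens.L1_bound [CompleteSpace Z] (hf : AuxDens μ ν f) :
    ∃ C, 0 ≤ C ∧ ∀ z, ∫ ω, |f z ω| ∂μ ≤ C * ‖z‖ := by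
  obtain ⟨C, hC0, hC⟩ := aux_bs_s2 (E := Z)
    (fun B : {B : Set Ω // MeasurableSet B} => (ν B : Z →L[ℝ] ℝ).toLinearMap)
    (fun B => ‖ν B‖) (fun B z => (ν B).le_opNorm z) (fun z => ⟨∫ ω, |f z ω| ∂μ, fun B => by
      change |ν B z| ≤ _
      rw [hf.rep z B B.2]
      refine abs_integral_le_integral_abs.trans ?_
      exact setIntegral_le_integral (hf.int z).norm (Eventually.of_forall fun ω => abs_nonneg (f z ω))⟩)
  refine ⟨2 * C, by positivity, fun z => ?_⟩
  let P : Set Ω := {ω | 0 ≤ f z ω}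
  have hP : MeasurableSet P := measurableSet_le measurable_const (hf.meas z)
  rw [← integral_add_compl hP (hf.int z).abs]
  have h1 : ∫ ω in P, |f z ω| ∂μ = ν P z := by
    rw [hf.rep z P hP]
    exact setIntegral_congr_fun hP fun ω hω => abs_of_nonneg hω
  have h2 : ∫ ω in Pᶜ, |f z ω| ∂μ = - ν Pᶜ z := by
    rw [hf.rep z _ hP.compl, ← integral_neg]
    exact setIntegral_congr_fun hP.compl fun ω hω => abs_of_neg (not_le.1 hω)
  rw [h1, h2]
  have h3 : |ν P z| ≤ C * ‖z‖ := hC ⟨P, hP⟩ z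
  have h4 : |ν Pᶜ z| ≤ C * ‖z‖ := hC ⟨_, hP.compl⟩ z
  have := le_abs_self (ν P z)
  have := neg_le_abs (ν Pᶜ z)
  linarith

/-- Main sequential lemma. -/
theorem AuxDens.extract (hf : AuxDens μ ν f) (hν : ∀ A : Set Ω, μ A = 0 → ν A = 0)
    (X : Submodule ℝ (Z →L[ℝ] ℝ)) (hXclosed : IsClosed (X : Set (Z →L[ℝ] ℝ)))
    (hXnorming : IsNorming X) (hCBC : DualBallConvexBlockCompact ↥X) (hG : CondG μ ν X)
    (K : Set Z) (hKc : Convex ℝ K) (hK : @IsCompact _ (sigmaTop X) K)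
    (w : ℕ → Z) (hw : ∀ n, w n ∈ K) (g : Ω → ℝ)
    (hlim : ∀ᵐ ω ∂μ, Tendsto (fun n => f (w n) ω) atTop (𝓝 (g ω))) :
    ∃ h ∈ K, f h =ᵐ[μ] g ∧ (∀ x ∈ X, Tendsto (fun n => x (w n)) atTop (𝓝 0) → x h = 0) ∧
      ∀ A, MeasurableSet A → ∀ ε, (∀ n, ε ≤ ν A (w n)) → ε ≤ ν A h := by
  obtain ⟨R, hR, hRK⟩ := aux_bounded X hXclosed hXnorming K hK
  obtain ⟨I, a, h1, h2, h3, hmem, h, hhK, hh⟩ :=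
    aux_extract X hXclosed hXnorming hCBC K hKc hK w hw
  set b : ℕ → Z := fun k => ∑ n ∈ I k, a n • w n with hb
  have hblim : ∀ᵐ ω ∂μ, Tendsto (fun k => f (b k) ω) atTop (𝓝 (g ω)) := by
    have : ∀ᵐ ω ∂μ, ∀ k, f (b k) ω = ∑ n ∈ I k, a n * f (w n) ω :=
      ae_all_iff.2 fun k => hf.sum (I k) a w
    filter_upwards [this, hlim] with ω h4 h5
    simp only [h4]
    exact aux_block_tendsto h1 h2 h3 h5
  have hu1 : ∀ᵐ ω ∂μ, Tendsto (fun k => f (b k - h) ω) atTop (𝓝 (g ω - f h ω)) := by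
    have : ∀ᵐ ω ∂μ, ∀ k, f (b k - h) ω = f (b k) ω - f h ω :=
      ae_all_iff.2 fun k => hf.sub _ _
    filter_upwards [this, hblim] with ω h4 h5
    simp only [h4]
    exact h5.sub_const _
  have hu2 : ∀ᵐ ω ∂μ, Tendsto (fun k => f (h - b k) ω) atTop (𝓝 (-(g ω - f h ω))) := by
    have : ∀ᵐ ω ∂μ, ∀ k, f (h - b k) ω = f h ω - f (b k) ω :=
      ae_all_iff.2 fun k => hf.sub _ _
    filter_upwards [this, hblim] with ω h4 h5
    simp only [h4, neg_sub]
    exact h5.const_sub _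
  have hx1 : ∀ x ∈ X, Tendsto (fun k => x (b k - h)) atTop (𝓝 0) := fun x hx => by
    simpa only [map_sub, sub_self] using (hh x hx).sub_const (x h)
  have hx2 : ∀ x ∈ X, Tendsto (fun k => x (h - b k)) atTop (𝓝 0) := fun x hx => by
    simpa only [map_sub, sub_self] using (hh x hx).const_sub (x h)
  have e1 := hf.lim_le_zero hG hx1 hu1
  have e2 := hf.lim_le_zero hG hx2 hu2
  have hgh : f h =ᵐ[μ] g := by
    filter_upwards [e1, e2] with ω h4 h5
    linarith
  refine ⟨h, hhK, hgh, fun x hx hx0 => ?_, fun A hA ε hε => ?_⟩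
  · refine tendsto_nhds_unique (hh x hx) ?_
    refine (aux_block_tendsto h1 h2 h3 hx0).congr fun k => ?_
    simp [map_sum]
  · have hz : ∀ᵐ ω ∂μ, Tendsto (fun k => f (b k - h) ω) atTop (𝓝 0) := by
      filter_upwards [hu1, hgh] with ω h4 h5
      rwa [h5, sub_self] at h4
    have h6 := hf.tendsto_zero hν hA (R := R + R)
      (fun k => (norm_sub_le _ _).trans (add_le_add (hRK _ (hmem k)) (hRK _ hhK))) hz
    have h7 : ∀ k, ε - ν A h ≤ ν A (b k - h) := fun k => by
      rw [map_sub]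
      refine sub_le_sub_right ?_ _
      rw [hb]
      simp only [map_sum, map_smul, smul_eq_mul]
      calc ε = ∑ n ∈ I k, a n * ε := by rw [← Finset.sum_mul, h3, one_mul]
        _ ≤ _ := Finset.sum_le_sum fun n _ => mul_le_mul_of_nonneg_left (hε n) (h2 n)
    have := ge_of_tendsto' h6 h7
    linarith

end AuxMeas

/-- The derivative of `t ↦ √(1+t²)`. -/
def auxPsi (t : ℝ) : ℝ := t / √(1 + t ^ 2)

theorem aux_sq_sqrt (t : ℝ) : √(1 + t ^ 2) ^ 2 = 1 + t ^ 2 := Real.sq_sqrt (by positivity)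

theorem aux_one_le_sqrt (t : ℝ) : 1 ≤ √(1 + t ^ 2) := by
  rw [Real.one_le_sqrt]; nlinarith [sq_nonneg t]

theorem aux_cocoercive (t m : ℝ) :
    (auxPsi t - auxPsi m) ^ 2 / 2 ≤ √(1 + t ^ 2) - √(1 + m ^ 2) - auxPsi m * (t - m) := by
  unfold auxPsi
  have ha2 := aux_sq_sqrt t
  have hb2 := aux_sq_sqrt m
  have ha := aux_one_le_sqrt t
  have hb := aux_one_le_sqrt m
  set a := √(1 + t ^ 2)
  set b := √(1 + m ^ 2)
  have ha0 : 0 < a := by linarith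
  have hb0 : 0 < b := by linarith
  have hab : 1 + t * m ≤ a * b := by
    refine le_of_sq_le_sq ?_ (by positivity)
    rw [mul_pow, ha2, hb2]
    nlinarith [sq_nonneg (t - m)]
  have e1 : a - b - m / b * (t - m) = (a * b - 1 - t * m) / b := by
    field_simp
    linear_combination -hb2
  have e2 : (t / a - m / b) ^ 2 / 2 ≤ (a * b - 1 - t * m) / (a * b) := by
    rw [div_sub_div _ _ ha0.ne' hb0.ne', div_pow, div_div, div_le_div_iff₀ (by positivity) (by positivity)]
    have : (t * b - a * m) ^ 2 ≤ (a * b - 1 - t * m) * (a * b) * 2 := by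
      have ht : t ^ 2 = a ^ 2 - 1 := by linarith
      have hm : m ^ 2 = b ^ 2 - 1 := by linarith
      have : (t * b - a * m) ^ 2 = t ^ 2 * b ^ 2 + a ^ 2 * m ^ 2 - 2 * (t * m) * (a * b) := by ring
      rw [this, ht, hm]
      nlinarith [sq_nonneg (a - b)]
    have hp : 0 < a * b := by positivity
    nlinarith [mul_le_mul_of_nonneg_right this hp.le]
  rw [e1]
  refine e2.trans ?_
  apply div_le_div_of_nonneg_left (by linarith) hb0
  nlinarith

theorem aux_gap (s t : ℝ) :
    (auxPsi s - auxPsi t) ^ 2 / 4 ≤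
      √(1 + s ^ 2) + √(1 + t ^ 2) - 2 * √(1 + ((1 / 2) * s + (1 / 2) * t) ^ 2) := by
  have h1 := aux_cocoercive s ((1 / 2) * s + (1 / 2) * t)
  have h2 := aux_cocoercive t ((1 / 2) * s + (1 / 2) * t)
  set m := (1 / 2) * s + (1 / 2) * t with hm
  have h3 : auxPsi m * (s - m) + auxPsi m * (t - m) = 0 := by rw [hm]; ring
  nlinarith [sq_nonneg (auxPsi s + auxPsi t - 2 * auxPsi m)]

theorem aux_abs_psi (t : ℝ) : |auxPsi t| ≤ 1 := by
  unfold auxPsi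
  have hb := aux_one_le_sqrt t
  rw [abs_div, abs_of_nonneg (Real.sqrt_nonneg _), div_le_one (by linarith), ← Real.sqrt_sq_eq_abs]
  exact Real.sqrt_le_sqrt (by linarith)

theorem aux_psi_sq (t : ℝ) : 1 - auxPsi t ^ 2 = (1 + t ^ 2)⁻¹ := by
  unfold auxPsi
  rw [div_pow, aux_sq_sqrt]
  have : 1 + t ^ 2 ≠ 0 := by positivity
  field_simp
  ring

/-- inverse of `auxPsi`. -/
def auxInv (y : ℝ) : ℝ := y / √(1 - y ^ 2)

theorem aux_inv_psi (t : ℝ) : auxInv (auxPsi t) = t := by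
  unfold auxInv
  rw [aux_psi_sq, Real.sqrt_inv]
  unfold auxPsi
  have hb := aux_one_le_sqrt t
  field_simp

theorem aux_inv_cont {y : ℝ} (hy : y ^ 2 < 1) : ContinuousAt auxInv y := by
  unfold auxInv
  refine ContinuousAt.div continuousAt_id (by fun_prop) ?_
  exact (Real.sqrt_pos.2 (by linarith)).ne'

theorem aux_psi_meas : Measurable auxPsi := by unfold auxPsi; fun_prop

theorem aux_near {α Z : Type*} (C : Finset α → Set Z) (hC : ∀ F G, F ⊆ G → C G ⊆ C F)
    (hne : ∀ F, (C F).Nonempty) (Φ : Z → ℝ) (B : ℝ) (h0 : ∀ z, 0 ≤ Φ z)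
    (hB : ∀ F, ∀ z ∈ C F, Φ z ≤ B) :
    ∃ (F : ℕ → Finset α) (M : ℝ), Monotone F ∧
      (∀ n : ℕ, ∀ z ∈ C (F n), M - 1 / ((n : ℝ) + 1) ≤ Φ z) ∧
      ∀ G, ∀ ε > 0, ∃ z ∈ C G, Φ z < M + ε := by
  classical
  let m : Finset α → ℝ := fun F => sInf (Φ '' C F)
  have hbdd : ∀ F, BddBelow (Φ '' C F) := fun F => ⟨0, by rintro _ ⟨z, _, rfl⟩; exact h0 z⟩
  have hmB : ∀ F, m F ≤ B := fun F => by
    obtain ⟨z, hz⟩ := hne F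
    exact (csInf_le (hbdd F) ⟨z, hz, rfl⟩).trans (hB F z hz)
  have hmb : BddAbove (range m) := ⟨B, by rintro _ ⟨F, rfl⟩; exact hmB F⟩
  let M := sSup (range m)
  have hch : ∀ n : ℕ, ∃ F, M - 1 / ((n : ℝ) + 1) < m F := fun n => by
    have : M - 1 / ((n : ℝ) + 1) < M := by
      have : (0 : ℝ) < 1 / ((n : ℝ) + 1) := by positivity
      linarith
    obtain ⟨_, ⟨F, rfl⟩, hF⟩ := exists_lt_of_lt_csSup (range_nonempty m) this
    exact ⟨F, hF⟩
  choose F hF using hch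
  refine ⟨fun n => (Finset.range (n + 1)).biUnion F, M, ?_, ?_, ?_⟩
  · intro i j hij
    exact Finset.biUnion_subset_biUnion_of_subset_left _ (Finset.range_mono (by omega))
  · intro n z hz
    have hsub : F n ⊆ (Finset.range (n + 1)).biUnion F :=
      Finset.subset_biUnion_of_mem F (Finset.mem_range.2 (Nat.lt_succ_self n))
    exact (hF n).le.trans (csInf_le (hbdd _) ⟨z, hC _ _ hsub hz, rfl⟩)
  · intro G ε hε
    have : m G < M + ε := lt_of_le_of_lt (le_csSup hmb ⟨G, rfl⟩) (by linarith)
    obtain ⟨_, ⟨z, hz, rfl⟩, hlt⟩ := exists_lt_of_csInf_lt ((hne G).image Φ) this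
    exact ⟨z, hz, hlt⟩

theorem aux_ae_limit {Ω : Type*} [MeasurableSpace Ω] {μ : Measure Ω} [IsFiniteMeasure μ]
    {Z : Type*} (f : Z → Ω → ℝ) (hfm : ∀ z, Measurable (f z)) (hfi : ∀ z, Integrable (f z) μ)
    (E : ℕ → Set Z) (hE : Antitone E) (hne : ∀ n, (E n).Nonempty) (B : ℝ)
    (hB : ∀ n, ∀ z ∈ E n, ∫ ω, |f z ω| ∂μ ≤ B)
    (hgap : ∀ n : ℕ, ∀ z ∈ E n, ∀ z' ∈ E n,
      ∫ ω, (auxPsi (f z ω) - auxPsi (f z' ω)) ^ 2 ∂μ ≤ 16 * (1 / ((n : ℝ) + 1))) :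
    ∃ g : Ω → ℝ, ∀ w : ℕ → Z, (∀ n, w n ∈ E n) → ∃ s : ℕ → ℕ, StrictMono s ∧
      ∀ᵐ ω ∂μ, Tendsto (fun n => f (w (s n)) ω) atTop (𝓝 (g ω)) := by
  have hmem : ∀ z, MemLp (fun ω => auxPsi (f z ω)) 2 μ := fun z =>
    MemLp.of_bound (aux_psi_meas.comp (hfm z)).aestronglyMeasurable 1
      (Eventually.of_forall fun ω => aux_abs_psi _)
  let T : Z → Lp ℝ 2 μ := fun z => (hmem z).toLp
  have hTn : ∀ z z', ‖T z - T z'‖ ^ 2 = ∫ ω, (auxPsi (f z ω) - auxPsi (f z' ω)) ^ 2 ∂μ := by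
    intro z z'
    rw [← real_inner_self_eq_norm_sq, L2.inner_def]
    refine integral_congr_ae ?_
    filter_upwards [Lp.coeFn_sub (T z) (T z'), (hmem z).coeFn_toLp, (hmem z').coeFn_toLp]
      with ω h1 h2 h3
    rw [h1, Pi.sub_apply, h2, h3]
    simp [sq]
  have hTd : ∀ n : ℕ, ∀ z ∈ E n, ∀ z' ∈ E n, dist (T z) (T z') ≤ √(16 * (1 / ((n : ℝ) + 1))) := by
    intro n z hz z' hz'
    rw [dist_eq_norm]
    refine Real.le_sqrt_of_sq_le ?_
    rw [hTn]
    exact hgap n z hz z' hz'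
  have hb0 : Tendsto (fun n : ℕ => √(16 * (1 / ((n : ℝ) + 1)))) atTop (𝓝 0) := by
    have h1 := (tendsto_one_div_add_atTop_nhds_zero_nat (𝕜 := ℝ)).const_mul 16
    have h2 := (Real.continuous_sqrt.tendsto _).comp h1
    rw [mul_zero, Real.sqrt_zero] at h2
    exact h2
  choose v hv using hne
  have hCau : CauchySeq fun n => T (v n) := by
    refine cauchySeq_of_le_tendsto_0 _ (fun n m N hn hm => ?_) hb0
    exact hTd N _ (hE hn (hv n)) _ (hE hm (hv m))
  obtain ⟨G, hG⟩ := cauchySeq_tendsto_of_complete hCau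
  have hsub : ∀ w : ℕ → Z, (∀ n, w n ∈ E n) → ∃ s : ℕ → ℕ, StrictMono s ∧
      ∀ᵐ ω ∂μ, Tendsto (fun n => auxPsi (f (w (s n)) ω)) atTop (𝓝 (G ω)) := by
    intro w hw
    have h1 : Tendsto (fun n => T (w n)) atTop (𝓝 G) := by
      refine tendsto_of_tendsto_of_dist hG ?_
      exact squeeze_zero (fun _ => dist_nonneg) (fun n => hTd n _ (hv n) _ (hw n)) hb0
    obtain ⟨s, hs, hlim⟩ := (tendstoInMeasure_of_tendsto_Lp h1).exists_seq_tendsto_ae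
    refine ⟨s, hs, ?_⟩
    have h2 : ∀ᵐ ω ∂μ, ∀ n, T (w n) ω = auxPsi (f (w n) ω) :=
      ae_all_iff.2 fun n => (hmem (w n)).coeFn_toLp
    filter_upwards [hlim, h2] with ω h3 h4
    simpa only [h4] using h3
  have hG1 : ∀ᵐ ω ∂μ, (G ω) ^ 2 < 1 := by
    obtain ⟨s, hs, hlim⟩ := hsub v hv
    have hbd : ∀ n, eLpNorm (f (v (s n))) 1 μ ≤ (B.toNNReal : ENNReal) := by
      intro n
      rw [eLpNorm_one_eq_lintegral_enorm, ← ofReal_integral_norm_eq_lintegral_enorm (hfi _)]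
      exact ENNReal.ofReal_le_ofReal (hB (s n) _ (hv _))
    have hli := ae_bdd_liminf_atTop_of_eLpNorm_bdd (p := 1) one_ne_zero (fun n => hfm (v (s n))) hbd
    filter_upwards [hlim, hli] with ω h1 h2
    obtain ⟨R, hR1, hR2⟩ := ENNReal.lt_iff_exists_nnreal_btwn.1 h2
    have h3 := frequently_lt_of_liminf_lt (by isBoundedDefault) hR1
    have h4 : ∃ᶠ n in atTop, auxPsi (f (v (s n)) ω) ^ 2 ≤ 1 - (1 + (R : ℝ) ^ 2)⁻¹ := by
      refine h3.mono fun n hn => ?_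
      have hn' : |f (v (s n)) ω| ≤ R := by
        have : ‖f (v (s n)) ω‖₊ < R := by
          rw [enorm_eq_nnnorm] at hn
          exact_mod_cast hn
        exact_mod_cast this.le
      have h5 := aux_psi_sq (f (v (s n)) ω)
      have h6 : (1 + (R : ℝ) ^ 2)⁻¹ ≤ (1 + (f (v (s n)) ω) ^ 2)⁻¹ := by
        apply inv_anti₀ (by positivity)
        have := sq_le_sq' (neg_le_of_abs_le hn') (le_of_abs_le hn')
        linarith
      linarith
    have h7 : G ω ^ 2 ≤ 1 - (1 + (R : ℝ) ^ 2)⁻¹ := by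
      by_contra hcon
      push Not at hcon
      exact h4 (((h1.pow 2).eventually (lt_mem_nhds hcon)).mono fun n hn => not_le.2 hn)
    have : 0 < (1 + (R : ℝ) ^ 2)⁻¹ := by positivity
    linarith
  refine ⟨fun ω => auxInv (G ω), fun w hw => ?_⟩
  obtain ⟨s, hs, hlim⟩ := hsub w hw
  refine ⟨s, hs, ?_⟩
  filter_upwards [hlim, hG1] with ω h1 h2
  have := (aux_inv_cont h2).tendsto.comp h1
  simpa only [Function.comp_def, aux_inv_psi] using this

theorem aux_sqrt_int {Ω : Type*} [MeasurableSpace Ω] {μ : Measure Ω} [IsFiniteMeasure μ]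
    {q : Ω → ℝ} (hm : Measurable q) (hq : Integrable q μ) :
    Integrable (fun ω => √(1 + q ω ^ 2)) μ ∧
      ∫ ω, √(1 + q ω ^ 2) ∂μ ≤ μ.real univ + ∫ ω, |q ω| ∂μ := by
  have hle : ∀ t : ℝ, √(1 + t ^ 2) ≤ 1 + |t| := fun t => by
    rw [Real.sqrt_le_left (by positivity)]
    nlinarith [abs_nonneg t, sq_abs t]
  have hi : Integrable (fun ω => 1 + |q ω|) μ := (integrable_const (1 : ℝ)).add hq.abs
  have h1 : Integrable (fun ω => √(1 + q ω ^ 2)) μ := by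
    refine hi.mono' (by fun_prop) (Eventually.of_forall fun ω => ?_)
    rw [Real.norm_eq_abs, abs_of_nonneg (Real.sqrt_nonneg _)]
    exact hle _
  refine ⟨h1, (integral_mono h1 hi fun ω => hle _).trans (le_of_eq ?_)⟩
  rw [integral_add (integrable_const (1 : ℝ)) hq.abs]
  simp

theorem aux_key {Ω : Type*} [MeasurableSpace Ω] {μ : Measure Ω} [IsFiniteMeasure μ]
    {Z : Type*} [NormedAddCommGroup Z] [NormedSpace ℝ Z] [CompleteSpace Z]
    {ν : VectorMeasure Ω (Z →L[ℝ] ℝ)} {f : Z → Ω → ℝ}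
    (hf : AuxDens μ ν f) (hν : ∀ A : Set Ω, μ A = 0 → ν A = 0)
    (X : Submodule ℝ (Z →L[ℝ] ℝ)) (hXclosed : IsClosed (X : Set (Z →L[ℝ] ℝ)))
    (hXnorming : IsNorming X) (hCBC : DualBallConvexBlockCompact ↥X) (hG : CondG μ ν X)
    (K : Set Z) (hKc : Convex ℝ K) (hK : @IsCompact _ (sigmaTop X) K)
    {A : Set Ω} (hA : MeasurableSet A) {ε : ℝ} (hε : 0 < ε) :
    ∃ F : Finset X, ∀ z ∈ K, (∀ x ∈ F, |(x : Z →L[ℝ] ℝ) z| ≤ 1) → ν A z < ε := by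
  classical
  by_contra hcon
  push Not at hcon
  obtain ⟨R, hR, hRK⟩ := aux_bounded X hXclosed hXnorming K hK
  obtain ⟨D, hD0, hD⟩ := hf.L1_bound
  let C : Finset X → Set Z := fun F =>
    {z | z ∈ K ∧ (∀ x ∈ F, |(x : Z →L[ℝ] ℝ) z| ≤ 1) ∧ ε ≤ ν A z}
  have hCanti : ∀ F G, F ⊆ G → C G ⊆ C F := fun F G hFG z hz =>
    ⟨hz.1, fun x hx => hz.2.1 x (hFG hx), hz.2.2⟩
  have hCne : ∀ F, (C F).Nonempty := fun F => by
    obtain ⟨z, h1, h2, h3⟩ := hcon F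
    exact ⟨z, h1, h2, h3⟩
  let Φ : Z → ℝ := fun z => ∫ ω, √(1 + f z ω ^ 2) ∂μ
  have hDR : ∀ z ∈ K, ∫ ω, |f z ω| ∂μ ≤ D * R := fun z hz =>
    (hD z).trans (mul_le_mul_of_nonneg_left (hRK z hz) hD0)
  obtain ⟨F, M, hFmono, hFlow, hFup⟩ := aux_near C hCanti hCne Φ (μ.real univ + D * R)
    (fun z => integral_nonneg fun ω => Real.sqrt_nonneg _)
    (fun G z hz => (aux_sqrt_int (hf.meas z) (hf.int z)).2.trans
      (add_le_add_right (hDR z hz.1) _))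
  let E : ℕ → Set Z := fun n => {z | z ∈ C (F n) ∧ Φ z < M + 1 / ((n : ℝ) + 1)}
  have hEanti : Antitone E := fun n m hnm z hz =>
    ⟨hCanti _ _ (hFmono hnm) hz.1, hz.2.trans_le
      (add_le_add_right (one_div_le_one_div_of_le (by positivity) (by gcongr)) _)⟩
  have hpos : ∀ n : ℕ, (0 : ℝ) < 1 / ((n : ℝ) + 1) := fun n => by positivity
  have hEne : ∀ n, (E n).Nonempty := fun n => by
    obtain ⟨z, h1, h2⟩ := hFup (F n) _ (hpos n)
    exact ⟨z, h1, h2⟩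
  have hgap : ∀ n : ℕ, ∀ z ∈ E n, ∀ z' ∈ E n,
      ∫ ω, (auxPsi (f z ω) - auxPsi (f z' ω)) ^ 2 ∂μ ≤ 16 * (1 / ((n : ℝ) + 1)) := by
    intro n z hz z' hz'
    set y : Z := (1 / 2 : ℝ) • z + (1 / 2 : ℝ) • z' with hy
    have hyC : y ∈ C (F n) := by
      refine ⟨hKc hz.1.1 hz'.1.1 (by norm_num) (by norm_num) (by norm_num), fun x hx => ?_, ?_⟩
      · have h1 := hz.1.2.1 x hx
        have h2 := hz'.1.2.1 x hx
        rw [hy, map_add, map_smul, map_smul, smul_eq_mul, smul_eq_mul]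
        rw [abs_le] at h1 h2 ⊢
        constructor <;> linarith [h1.1, h1.2, h2.1, h2.2]
      · have h1 := hz.1.2.2
        have h2 := hz'.1.2.2
        rw [hy, map_add, map_smul, map_smul, smul_eq_mul, smul_eq_mul]
        linarith
    have hfy : ∀ᵐ ω ∂μ, f y ω = (1 / 2) * f z ω + (1 / 2) * f z' ω := by
      filter_upwards [hf.add ((1 / 2 : ℝ) • z) ((1 / 2 : ℝ) • z'), hf.smul (1 / 2) z,
        hf.smul (1 / 2) z'] with ω h1 h2 h3
      rw [h1, h2, h3]
    have i1 := (aux_sqrt_int (hf.meas z) (hf.int z)).1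
    have i2 := (aux_sqrt_int (hf.meas z') (hf.int z')).1
    have i3 := (aux_sqrt_int (hf.meas y) (hf.int y)).1
    have hle : ∫ ω, (auxPsi (f z ω) - auxPsi (f z' ω)) ^ 2 ∂μ ≤
        ∫ ω, 4 * ((√(1 + f z ω ^ 2) + √(1 + f z' ω ^ 2)) - 2 * √(1 + f y ω ^ 2)) ∂μ := by
      refine integral_mono_of_nonneg (Eventually.of_forall fun ω => sq_nonneg _)
        (((i1.add i2).sub (i3.const_mul 2)).const_mul 4) ?_
      filter_upwards [hfy] with ω h1
      have := aux_gap (f z ω) (f z' ω)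
      rw [h1]
      linarith
    have heq : ∫ ω, 4 * ((√(1 + f z ω ^ 2) + √(1 + f z' ω ^ 2)) - 2 * √(1 + f y ω ^ 2)) ∂μ
        = 4 * ((Φ z + Φ z') - 2 * Φ y) := by
      have i4 : Integrable (fun ω => √(1 + f z ω ^ 2) + √(1 + f z' ω ^ 2)) μ := i1.add i2
      rw [integral_const_mul, integral_sub i4 (i3.const_mul 2), integral_add i1 i2,
        integral_const_mul]
    have h1 := hz.2
    have h2 := hz'.2
    have h3 := hFlow n y hyC
    linarith
  obtain ⟨g, hg⟩ := aux_ae_limit f hf.meas hf.int E hEanti hEne (D * R)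
    (fun n z hz => hDR z hz.1.1) hgap
  choose w hw using hEne
  obtain ⟨s, hs, hslim⟩ := hg w hw
  obtain ⟨h, hhK, hhg, -, hhA⟩ := hf.extract hν X hXclosed hXnorming hCBC hG K hKc hK
    (fun n => w (s n)) (fun n => (hw _).1.1) g hslim
  have hh1 : ε ≤ ν A h := hhA A hA ε fun n => (hw _).1.2.2
  have hm : ∃ m : ℕ, 0 < μ (A ∩ {ω | 1 / ((m : ℝ) + 1) ≤ f h ω}) := by
    by_contra hno
    push Not at hno
    have h1 : ∀ᵐ ω ∂μ, ∀ m : ℕ, ω ∉ A ∩ {ω | 1 / ((m : ℝ) + 1) ≤ f h ω} :=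
      ae_all_iff.2 fun m => measure_eq_zero_iff_ae_notMem.1 (nonpos_iff_eq_zero.1 (hno m))
    have h2 : ∫ ω in A, f h ω ∂μ ≤ 0 := by
      refine integral_nonpos_of_ae ?_
      rw [EventuallyLE, ae_restrict_iff' hA]
      filter_upwards [h1] with ω h3 hωA
      by_contra hp
      obtain ⟨m, hm⟩ := exists_nat_one_div_lt (not_le.1 hp)
      exact h3 m ⟨hωA, hm.le⟩
    rw [← hf.rep h A hA] at h2
    linarith
  obtain ⟨m, hm⟩ := hm
  obtain ⟨x, hx, hxX⟩ := hG _ (hA.inter (measurableSet_le measurable_const (hf.meas h))) hm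
  have hw2 : ∀ n : ℕ, ∃ z, z ∈ E n ∧ |(n : ℝ) * x z| ≤ 1 := fun n => by
    obtain ⟨z, h1, h2⟩ := hFup (insert ((n : ℝ) • (⟨x, hxX⟩ : X)) (F n)) _ (hpos n)
    refine ⟨z, ⟨hCanti _ _ (Finset.subset_insert _ _) h1, h2⟩, ?_⟩
    exact h1.2.1 _ (Finset.mem_insert_self _ _)
  choose v hvE hvx using hw2
  obtain ⟨t, ht, htlim⟩ := hg v hvE
  obtain ⟨h', hhK', hhg', hx0, -⟩ := hf.extract hν X hXclosed hXnorming hCBC hG K hKc hK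
    (fun n => v (t n)) (fun n => (hvE _).1.1) g htlim
  have hxv : Tendsto (fun n => x (v n)) atTop (𝓝 0) := by
    refine squeeze_zero_norm' ?_ (tendsto_one_div_atTop_nhds_zero_nat (𝕜 := ℝ))
    filter_upwards [eventually_gt_atTop 0] with n hn
    have hn' : (0 : ℝ) < n := by exact_mod_cast hn
    have h1 := hvx n
    rw [abs_mul, abs_of_pos hn'] at h1
    rw [Real.norm_eq_abs, le_div_iff₀ hn']
    linarith
  have e1 := hx0 x hxX (hxv.comp ht.tendsto_atTop)
  have e2 : 1 / ((m : ℝ) + 1) ≤ x h' := by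
    refine hf.ge_of_closure hx ?_
    filter_upwards [hhg, hhg'] with ω h1 h2 h3
    rw [h2, ← h1]
    exact h3.2
  have := hpos m
  linarith

/-- Theorem B: if `(B_{X*}, w*)` is convex block compact, `(X, μ(X,Z))` is complete and
`ν ∈ ca(μ, Z*)` satisfies condition (G), then `ν(Σ) ⊆ X`. -/
theorem range_subset_of_convexBlockCompact_of_mackeyComplete_of_condG
    {Ω : Type*} [MeasurableSpace Ω] (μ : Measure Ω) [IsFiniteMeasure μ]
    {Z : Type*} [NormedAddCommGroup Z] [NormedSpace ℝ Z] [CompleteSpace Z]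
    (X : Submodule ℝ (Z →L[ℝ] ℝ)) (hXclosed : IsClosed (X : Set (Z →L[ℝ] ℝ)))
    (hXnorming : IsNorming X)
    (hCBC : DualBallConvexBlockCompact ↥X)
    (hMackeyComplete : @CompleteSpace ↥X (mackeyUniformity X))
    (ν : VectorMeasure Ω (Z →L[ℝ] ℝ))
    (hν : ∀ A : Set Ω, μ A = 0 → ν A = 0)
    (hG : CondG μ ν X) :
    ∀ A : Set Ω, MeasurableSet A → ν A ∈ X := by
  intro A hA
  obtain ⟨f, hf⟩ := aux_dens_exists μ ν hν
  refine aux_grothendieck X hMackeyComplete (ν A) fun K hKc hKb hK ε hε => ?_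
  obtain ⟨F, hF⟩ := aux_key hf hν X hXclosed hXnorming hCBC hG K hKc hK hA hε
  exact aux_approx X (ν A) K hKc hKb ε F hF
end
end

section
/- Let (Ω,Σ,μ) be a finite measure space and X a real Banach space such that the closed unit ball B_{X*} of X* equipped with the weak* topology is convex block compact. If ν : Σ → X** is a countably additive μ-continuous vector measure such that for every A ∈ Σ with μ(A) > 0 the w*-closed convex hull in X** of the average range 𝒜_ν(A) intersects X (viewed as a subspace of X** via the canonical embedding), then ν(A) ∈ X for every A ∈ Σ. -/
open MeasureTheory Filter Set Topology
open scoped UniformConvergence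

noncomputable section

/-- Two `L¹` functions with the same integrals over measurable sets agree. -/
lemma L1_ext {Ω : Type*} [MeasurableSpace Ω] {μ : Measure Ω} {g₁ g₂ : Lp ℝ 1 μ}
    (h : ∀ A, MeasurableSet A → ∫ ω in A, g₁ ω ∂μ = ∫ ω in A, g₂ ω ∂μ) : g₁ = g₂ := by
  apply Lp.ext
  exact Integrable.ae_eq_of_forall_setIntegral_eq _ _ (L1.integrable_coeFn g₁)
    (L1.integrable_coeFn g₂) (fun s hs _ => h s hs)

/-- Radon-Nikodym for signed measures, in the form used below. -/
lemma exists_density_s3 {Ω : Type*} [MeasurableSpace Ω] (μ : Measure Ω) [IsFiniteMeasure μ]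
    (m : SignedMeasure Ω) (hm : ∀ A, μ A = 0 → m A = 0) :
    ∃ d : Lp ℝ 1 μ, ∀ A, MeasurableSet A → ∫ ω in A, d ω ∂μ = m A := by
  have hac : m ≪ᵥ μ.toENNRealVectorMeasure := by
    apply VectorMeasure.AbsolutelyContinuous.mk
    intro s hs h
    rw [Measure.toENNRealVectorMeasure_apply_measurable hs] at h
    exact hm s h
  have hi : Integrable (m.rnDeriv μ) μ := SignedMeasure.integrable_rnDeriv m μ
  refine ⟨hi.toL1 _, fun A hA => ?_⟩
  rw [setIntegral_congr_ae hA ((hi.coeFn_toL1).mono fun x hx _ => hx),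
    ← withDensityᵥ_apply hi hA, SignedMeasure.withDensityᵥ_rnDeriv_eq m μ hac]

/-- Radon-Nikodym for a vector measure composed with a functional. -/
lemma exists_density_comp {Ω : Type*} [MeasurableSpace Ω] (μ : Measure Ω) [IsFiniteMeasure μ]
    {V : Type*} [NormedAddCommGroup V] [NormedSpace ℝ V]
    (ν : VectorMeasure Ω V) (hν : ∀ A : Set Ω, μ A = 0 → ν A = 0) (F : V →L[ℝ] ℝ) :
    ∃ d : Lp ℝ 1 μ, ∀ A, MeasurableSet A → ∫ ω in A, d ω ∂μ = F (ν A) := by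
  let G : V →+ ℝ := F.toLinearMap.toAddMonoidHom
  have hc : Continuous G := F.continuous
  obtain ⟨d, hd⟩ := exists_density_s3 μ (ν.mapRange G hc) (fun A hA => by
    rw [VectorMeasure.mapRange_apply, hν A hA, map_zero])
  exact ⟨d, fun A hA => by rw [hd A hA, VectorMeasure.mapRange_apply]; rfl⟩

lemma continuous_setInt {Ω : Type*} [MeasurableSpace Ω] (μ : Measure Ω) (A : Set Ω) :
    Continuous (fun g : Lp ℝ 1 μ => ∫ ω in A, g ω ∂μ) := continuous_setIntegral A

/-- The densities of `ν(·)(f)` form a bounded operator into `L¹`. -/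
lemma exists_densityOp {Ω : Type*} [MeasurableSpace Ω] (μ : Measure Ω) [IsFiniteMeasure μ]
    {E : Type*} [NormedAddCommGroup E] [NormedSpace ℝ E] [CompleteSpace E]
    (ν : VectorMeasure Ω (E →L[ℝ] ℝ)) (hν : ∀ A : Set Ω, μ A = 0 → ν A = 0) :
    ∃ T : E →L[ℝ] Lp ℝ 1 μ, ∀ f A, MeasurableSet A → ∫ ω in A, T f ω ∂μ = ν A f := by
  have h1 : ∀ f : E, ∃ d : Lp ℝ 1 μ, ∀ A, MeasurableSet A → ∫ ω in A, d ω ∂μ = ν A f := by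
    intro f
    exact exists_density_comp μ ν hν (ContinuousLinearMap.apply ℝ ℝ f)
  choose D hD using h1
  let L : E →ₗ[ℝ] Lp ℝ 1 μ :=
    { toFun := D
      map_add' := fun f g => by
        apply L1_ext
        intro A hA
        rw [hD _ A hA, setIntegral_congr_ae hA ((Lp.coeFn_add (D f) (D g)).mono fun x hx _ => hx)]
        simp only [Pi.add_apply]
        rw [integral_add (L1.integrable_coeFn _).integrableOn
          (L1.integrable_coeFn _).integrableOn, hD _ A hA, hD _ A hA, map_add]
      map_smul' := fun c f => by
        apply L1_ext
        intro A hA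
        rw [hD _ A hA, RingHom.id_apply,
          setIntegral_congr_ae hA ((Lp.coeFn_smul c (D f)).mono fun x hx _ => hx)]
        simp only [Pi.smul_apply]
        rw [integral_smul, hD _ A hA, map_smul] }
  have hL : Continuous L := by
    apply LinearMap.continuous_of_seq_closed_graph
    intro u x y hu hy
    apply L1_ext
    intro A hA
    have e1 := ((continuous_setInt μ A).tendsto y).comp hy
    have e2 := ((ν A).continuous.tendsto x).comp hu
    have e3 : (fun g : Lp ℝ 1 μ => ∫ ω in A, g ω ∂μ) ∘ (L ∘ u) = (ν A) ∘ u := by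
      funext n
      exact hD (u n) A hA
    rw [e3] at e1
    rw [tendsto_nhds_unique e1 e2]
    exact (hD x A hA).symm
  exact ⟨⟨L, hL⟩, fun f A hA => hD f A hA⟩

/-- Integration against a bounded function. -/
lemma exists_J {Ω : Type*} [MeasurableSpace Ω] (μ : Measure Ω) (φ : Ω → ℝ)
    (hφ : Measurable φ) (C : ℝ) (hC : 0 ≤ C) (hb : ∀ ω, |φ ω| ≤ C) :
    ∃ J : Lp ℝ 1 μ →L[ℝ] ℝ, (∀ g : Lp ℝ 1 μ, J g = ∫ ω, φ ω * g ω ∂μ) ∧ ‖J‖ ≤ C := by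
  have hi : ∀ g : Lp ℝ 1 μ, Integrable (fun ω => φ ω * g ω) μ := fun g =>
    (L1.integrable_coeFn g).bdd_mul hφ.aestronglyMeasurable (c := C)
      (ae_of_all _ fun ω => by simpa using hb ω)
  let L : Lp ℝ 1 μ →ₗ[ℝ] ℝ :=
    { toFun := fun g => ∫ ω, φ ω * g ω ∂μ
      map_add' := fun f g => by
        rw [← integral_add (hi f) (hi g)]
        apply integral_congr_ae
        filter_upwards [Lp.coeFn_add f g] with x hx
        rw [hx, Pi.add_apply, mul_add]
      map_smul' := fun c f => by
        rw [RingHom.id_apply, smul_eq_mul, ← integral_const_mul]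
        apply integral_congr_ae
        filter_upwards [Lp.coeFn_smul c f] with x hx
        rw [hx, Pi.smul_apply, smul_eq_mul]; ring }
  have hL : ∀ g, ‖L g‖ ≤ C * ‖g‖ := by
    intro g
    rw [L1.norm_eq_integral_norm, ← integral_const_mul]
    refine norm_integral_le_of_norm_le ((L1.integrable_coeFn g).norm.const_mul C) ?_
    refine ae_of_all _ fun ω => ?_
    rw [norm_mul]
    exact mul_le_mul_of_nonneg_right (hb ω) (norm_nonneg _)
  exact ⟨L.mkContinuous C hL, fun g => rfl, L.mkContinuous_norm_le hC hL⟩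

/-- Integration over a set, as a functional on `L¹`. -/
lemma exists_setInt {Ω : Type*} [MeasurableSpace Ω] (μ : Measure Ω) (A : Set Ω) :
    ∃ J : Lp ℝ 1 μ →L[ℝ] ℝ, (∀ g : Lp ℝ 1 μ, J g = ∫ ω in A, g ω ∂μ) := by
  let L : Lp ℝ 1 μ →ₗ[ℝ] ℝ :=
    { toFun := fun g => ∫ ω in A, g ω ∂μ
      map_add' := fun f g => by
        rw [← integral_add (L1.integrable_coeFn f).integrableOn
          (L1.integrable_coeFn g).integrableOn]
        exact integral_congr_ae (ae_restrict_of_ae (Lp.coeFn_add f g))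
      map_smul' := fun c f => by
        rw [RingHom.id_apply, ← integral_smul]
        exact integral_congr_ae (ae_restrict_of_ae (Lp.coeFn_smul c f)) }
  exact ⟨⟨L, continuous_setInt μ A⟩, fun g => rfl⟩

/-- Integration against a simple function lies in the span of the set integrals. -/
lemma simple_mem_span {Ω : Type*} [MeasurableSpace Ω] (μ : Measure Ω)
    (V : Submodule ℝ (Lp ℝ 1 μ →L[ℝ] ℝ))
    (hV : ∀ A, MeasurableSet A → ∀ J : Lp ℝ 1 μ →L[ℝ] ℝ,
      (∀ g : Lp ℝ 1 μ, J g = ∫ ω in A, g ω ∂μ) → J ∈ V) (s : SimpleFunc Ω ℝ) :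
    ∃ J ∈ V, ∀ g : Lp ℝ 1 μ, Integrable (fun ω => s ω * g ω) μ ∧ J g = ∫ ω, s ω * g ω ∂μ := by
  induction s using SimpleFunc.induction with
  | const c hs =>
    rename_i A
    obtain ⟨J, hJ⟩ := exists_setInt μ A
    have key : ∀ g : Lp ℝ 1 μ, (fun ω => (SimpleFunc.piecewise A hs (SimpleFunc.const Ω c)
        (SimpleFunc.const Ω 0)) ω * g ω) = A.indicator (fun ω => c * g ω) := by
      intro g
      funext ω
      by_cases h : ω ∈ A <;> simp [h]
    refine ⟨c • J, V.smul_mem c (hV A hs J hJ), fun g => ?_⟩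
    rw [key]
    refine ⟨((L1.integrable_coeFn g).const_mul c).indicator hs, ?_⟩
    rw [integral_indicator hs, integral_const_mul, ← hJ]
    rfl
  | add hd h1 h2 =>
    obtain ⟨J1, hJ1, h1⟩ := h1
    obtain ⟨J2, hJ2, h2⟩ := h2
    refine ⟨J1 + J2, V.add_mem hJ1 hJ2, fun g => ?_⟩
    have := (h1 g).1.add (h2 g).1
    simp only [SimpleFunc.coe_add, Pi.add_apply, add_mul]
    refine ⟨this, ?_⟩
    rw [integral_add (h1 g).1 (h2 g).1, ← (h1 g).2, ← (h2 g).2]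
    rfl

/-- Uniform approximation of bounded measurable functions. -/
lemma exists_simple_approx {Ω : Type*} [MeasurableSpace Ω] (φ : Ω → ℝ)
    (hφ : Measurable φ) (C : ℝ) (hb : ∀ ω, |φ ω| ≤ C) (δ : ℝ) (hδ : 0 < δ) :
    ∃ s : SimpleFunc Ω ℝ, ∀ ω, |φ ω - s ω| ≤ δ := by
  have hm : Measurable (fun ω => ⌊φ ω / δ⌋) := (hφ.div_const δ).floor
  let s : SimpleFunc Ω ℤ :=
    ⟨fun ω => ⌊φ ω / δ⌋, fun j => hm (measurableSet_singleton j), by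
      apply (Set.finite_Icc ⌊-C / δ⌋ ⌊C / δ⌋).subset
      rintro _ ⟨ω, rfl⟩
      have := abs_le.1 (hb ω)
      exact ⟨Int.floor_le_floor (by gcongr; exact this.1),
        Int.floor_le_floor (by gcongr; exact this.2)⟩⟩
  refine ⟨s.map (fun j : ℤ => δ * (j : ℝ)), fun ω => ?_⟩
  have e : (s.map (fun j : ℤ => δ * (j : ℝ))) ω = δ * (⌊φ ω / δ⌋ : ℝ) := rfl
  rw [e]
  have h1 := Int.floor_le (φ ω / δ)
  have h2 := Int.lt_floor_add_one (φ ω / δ)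
  have h3 : φ ω = δ * (φ ω / δ) := by field_simp
  rw [abs_le]
  constructor <;> nlinarith

/-- The set integrals span a dense subspace of the dual of `L¹`. -/
lemma dual_L1_dense {Ω : Type*} [MeasurableSpace Ω] (μ : Measure Ω) [IsFiniteMeasure μ]
    (V : Submodule ℝ (Lp ℝ 1 μ →L[ℝ] ℝ)) (hVc : IsClosed (V : Set (Lp ℝ 1 μ →L[ℝ] ℝ)))
    (hV : ∀ A, MeasurableSet A → ∀ J : Lp ℝ 1 μ →L[ℝ] ℝ,
      (∀ g : Lp ℝ 1 μ, J g = ∫ ω in A, g ω ∂μ) → J ∈ V) (ψ : Lp ℝ 1 μ →L[ℝ] ℝ) : ψ ∈ V := by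
  classical
  -- the signed measure of indicators
  let ind : ∀ A : Set Ω, MeasurableSet A → Lp ℝ 1 μ := fun A hA =>
    indicatorConstLp 1 hA (measure_ne_top μ _) (1 : ℝ)
  have hnorm : ∀ A hA, ‖ind A hA‖ = μ.real A := by
    intro A hA
    simp [ind, norm_indicatorConstLp]
  obtain ⟨d, hd⟩ : ∃ d : Lp ℝ 1 μ, ∀ A (hA : MeasurableSet A),
      ∫ ω in A, d ω ∂μ = ψ (ind A hA) := by
    let m : SignedMeasure Ω :=
      { measureOf' := fun A => if hA : MeasurableSet A then ψ (ind A hA) else 0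
        empty' := by simp [ind]
        not_measurable' := fun A hA => by simp [hA]
        m_iUnion' := by
          intro f hf hdis
          have hU : MeasurableSet (⋃ i, f i) := MeasurableSet.iUnion hf
          have hindInt : ∀ A (_ : MeasurableSet A) B (hB : MeasurableSet B),
              ∫ ω in A, ind B hB ω ∂μ = (μ.restrict A).toSignedMeasure B := by
            intro A hA B hB
            rw [Measure.toSignedMeasure_apply_measurable hB, measureReal_restrict_apply hB,
              setIntegral_indicatorConstLp hA]
            simp
          have hsig : ∀ A, HasSum (fun i => (μ.restrict A).toSignedMeasure (f i))
              ((μ.restrict A).toSignedMeasure (⋃ i, f i)) := fun A =>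
            (μ.restrict A).toSignedMeasure.m_iUnion hf hdis
          have hsum : Summable (fun i => ind (f i) (hf i)) := by
            apply Summable.of_norm
            have := (hsig univ).summable
            refine this.congr fun i => ?_
            rw [hnorm, Measure.toSignedMeasure_apply_measurable (hf i), Measure.restrict_univ]
          obtain ⟨S, hS⟩ := hsum
          have hSU : S = ind (⋃ i, f i) hU := by
            apply L1_ext
            intro A hA
            obtain ⟨J, hJ⟩ := exists_setInt μ A
            have h1 := J.hasSum hS
            simp only [hJ, hindInt A hA] at h1
            rw [hindInt A hA]
            exact h1.unique (hsig A)
          rw [hSU] at hS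
          have := ψ.hasSum hS
          simpa only [hU, hf, dif_pos] using this }
    obtain ⟨d, hd⟩ := exists_density_s3 μ m (by
      intro A hA
      by_cases h : MeasurableSet A
      · have : ind A h = 0 := by
          rw [← norm_eq_zero, hnorm]; simp [Measure.real, hA]
        change (if hA : MeasurableSet A then ψ (ind A hA) else 0) = 0
        simp [h, this]
      · exact m.not_measurable h)
    refine ⟨d, fun A hA => ?_⟩
    rw [hd A hA]
    change (if hA : MeasurableSet A then ψ (ind A hA) else 0) = _
    simp [hA]
  have hdm : Measurable d := (Lp.stronglyMeasurable d).measurable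
  set C := ‖ψ‖ with hCdef
  have hC : 0 ≤ C := norm_nonneg _
  have hval : ∀ A hA, |ψ (ind A hA)| ≤ C * μ.real A := by
    intro A hA
    have := ψ.le_opNorm (ind A hA)
    rwa [hnorm, Real.norm_eq_abs] at this
  have hup : ∀ᵐ ω ∂μ, d ω ≤ C := by
    refine ae_le_of_forall_setIntegral_le (L1.integrable_coeFn d) (integrable_const C)
      (fun A hA _ => ?_)
    rw [hd A hA, setIntegral_const, smul_eq_mul, mul_comm]
    exact (le_abs_self _).trans (hval A hA)
  have hlo : ∀ᵐ ω ∂μ, -C ≤ d ω := by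
    refine ae_le_of_forall_setIntegral_le (integrable_const (-C)) (L1.integrable_coeFn d)
      (fun A hA _ => ?_)
    rw [hd A hA, setIntegral_const, smul_eq_mul]
    have := (abs_le.1 (hval A hA)).1
    linarith
  let φ : Ω → ℝ := fun ω => max (-C) (min C (d ω))
  have hφm : Measurable φ := measurable_const.max (measurable_const.min hdm)
  have hφd : ∀ᵐ ω ∂μ, d ω = φ ω := by
    filter_upwards [hup, hlo] with ω h1 h2
    simp [φ, h1, h2]
  have hφb : ∀ ω, |φ ω| ≤ C := fun ω =>
    abs_le.2 ⟨le_max_left _ _, max_le (by linarith) (min_le_left _ _)⟩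
  obtain ⟨J, hJ, -⟩ := exists_J μ φ hφm C hC hφb
  have hψJ : ψ = J := by
    ext g
    refine Lp.induction (p := 1) (by simp) (motive := fun g => ψ g = J g) ?_ ?_ ?_ g
    · intro c A hA hμA
      have e : ((Lp.simpleFunc.indicatorConst 1 hA hμA.ne c : Lp.simpleFunc ℝ 1 μ) : Lp ℝ 1 μ)
          = c • ind A hA := by
        rw [Lp.simpleFunc.coe_indicatorConst]
        apply Lp.ext
        filter_upwards [indicatorConstLp_coeFn (p := 1) (hs := hA) (hμs := hμA.ne) (c := c),
          Lp.coeFn_smul c (ind A hA), indicatorConstLp_coeFn (p := 1) (hs := hA)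
          (hμs := measure_ne_top μ A) (c := (1 : ℝ))] with ω h1 h2 h3
        rw [h1, h2, Pi.smul_apply, h3]
        by_cases h : ω ∈ A <;> simp [h]
      rw [e, map_smul, map_smul, ← hd A hA, hJ]
      congr 1
      rw [← integral_indicator hA]
      apply integral_congr_ae
      filter_upwards [hφd, indicatorConstLp_coeFn (p := 1) (hs := hA)
          (hμs := measure_ne_top μ A) (c := (1 : ℝ))] with ω h1 h3
      rw [h3]
      by_cases h : ω ∈ A <;> simp [h, h1]
    · intro f g hf hg _ h1 h2
      rw [map_add, map_add, h1, h2]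
    · exact isClosed_eq ψ.continuous J.continuous
  rw [hψJ, ← SetLike.mem_coe, ← hVc.closure_eq, Metric.mem_closure_iff]
  intro ε hε
  obtain ⟨s, hs⟩ := exists_simple_approx φ hφm C hφb (ε / 2) (by positivity)
  obtain ⟨S, hSV, hS⟩ := simple_mem_span μ V hV s
  obtain ⟨R, hR, hRn⟩ := exists_J μ (fun ω => φ ω - s ω) (hφm.sub s.measurable) (ε / 2)
    (by positivity) hs
  refine ⟨S, hSV, ?_⟩
  have : J - S = R := by
    ext g
    have hφg : Integrable (fun ω => φ ω * g ω) μ :=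
      (L1.integrable_coeFn g).bdd_mul hφm.aestronglyMeasurable (c := C)
        (ae_of_all _ fun ω => by simpa using hφb ω)
    rw [sub_apply, hJ, (hS g).2, hR, ← integral_sub hφg (hS g).1]
    simp only [sub_mul]
  rw [dist_eq_norm, this]
  linarith

lemma aux_closure {Y : Type*} (t : TopologicalSpace Y) {s c : Set Y} (h : s ⊆ c)
    (hc : IsClosed c) {y : Y} (hy : y ∈ closure s) : y ∈ c := closure_minimal h hc hy

/-- Lower bounds for the density pass to the `w*`-closed convex hull of the average range. -/
lemma le_of_mem_closure {Ω : Type*} [MeasurableSpace Ω] (μ : Measure Ω) [IsFiniteMeasure μ]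
    {E : Type*} [NormedAddCommGroup E] [NormedSpace ℝ E]
    (ν : VectorMeasure Ω (E →L[ℝ] ℝ)) (T : E →L[ℝ] Lp ℝ 1 μ)
    (hT : ∀ f A, MeasurableSet A → ∫ ω in A, T f ω ∂μ = ν A f) (A : Set Ω)
    (w : E →L[ℝ] ℝ) (hw : w ∈ @closure _ (wstarTop E) (convexHull ℝ (avgRange μ ν A)))
    (f : E) (c : ℝ) (hc : ∀ᵐ ω ∂μ, ω ∈ A → c ≤ T f ω) : c ≤ w f := by
  have hcl : @IsClosed _ (wstarTop E) {w : E →L[ℝ] ℝ | c ≤ w f} := by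
    let _ := wstarTop E
    have h1 : Continuous (fun w : E →L[ℝ] ℝ => (w : E → ℝ)) := continuous_induced_dom
    exact isClosed_le continuous_const ((continuous_apply f).comp h1)
  have hconv : Convex ℝ {w : E →L[ℝ] ℝ | c ≤ w f} :=
    convex_halfSpace_ge (𝕜 := ℝ) (f := fun w : E →L[ℝ] ℝ => w f)
      ⟨fun _ _ => rfl, fun _ _ => rfl⟩ c
  have hsub : avgRange μ ν A ⊆ {w : E →L[ℝ] ℝ | c ≤ w f} := by
    rintro _ ⟨B, hB, hBA, hμB, rfl⟩
    have hpos : 0 < (μ B).toReal := ENNReal.toReal_pos hμB.ne' (measure_ne_top μ B)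
    change c ≤ (μ B).toReal⁻¹ * ν B f
    rw [← hT f B hB, ← div_eq_inv_mul, le_div_iff₀ hpos]
    have h2 : ∫ _ in B, c ∂μ ≤ ∫ ω in B, T f ω ∂μ := by
      refine setIntegral_mono_on_ae (integrableOn_const (measure_ne_top μ B))
        (L1.integrable_coeFn _).integrableOn hB ?_
      filter_upwards [hc] with ω h hω using h (hBA hω)
    rw [setIntegral_const, smul_eq_mul, mul_comm] at h2
    exact h2
  exact aux_closure (wstarTop E) (convexHull_min hsub hconv) hcl hw

/-- A point outside a closed subspace is detected by a normalised functional. -/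
lemma exists_annihilator {V : Type*} [NormedAddCommGroup V] [NormedSpace ℝ V]
    (R : Submodule ℝ V) (hR : IsClosed (R : Set V)) (w : V) (hwR : w ∉ R) :
    ∃ F : V →L[ℝ] ℝ, ‖F‖ ≤ 1 ∧ 0 < F w ∧ ∀ v ∈ R, F v = 0 := by
  obtain ⟨G, u, hG1, hG2⟩ := geometric_hahn_banach_closed_point R.convex hR hwR
  have hu : 0 < u := by simpa using hG1 0 R.zero_mem
  have hzero : ∀ v ∈ R, G v = 0 := by
    intro v hv
    by_contra hne
    have := hG1 ((u / G v) • v) (R.smul_mem _ hv)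
    rw [map_smul, smul_eq_mul, div_mul_cancel₀ _ hne] at this
    exact lt_irrefl _ this
  have hGw : 0 < G w := hu.trans hG2
  have hGn : 0 < ‖G‖ := by
    rw [norm_pos_iff]
    rintro rfl
    simp at hGw
  refine ⟨‖G‖⁻¹ • G, ?_, ?_, ?_⟩
  · rw [norm_smul, norm_inv, norm_norm, inv_mul_cancel₀ hGn.ne']
  · change 0 < ‖G‖⁻¹ * G w
    positivity
  · intro v hv
    change ‖G‖⁻¹ * G v = 0
    rw [hzero v hv, mul_zero]

/-- The canonical image of `X` in its bidual is a closed subspace. -/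
lemma exists_canonical_range (X : Type*) [NormedAddCommGroup X] [NormedSpace ℝ X]
    [CompleteSpace X] : ∃ R : Submodule ℝ ((X →L[ℝ] ℝ) →L[ℝ] ℝ),
      IsClosed (R : Set ((X →L[ℝ] ℝ) →L[ℝ] ℝ)) ∧
      ∀ v : (X →L[ℝ] ℝ) →L[ℝ] ℝ, v ∈ R ↔ ∃ x : X, ∀ f : X →L[ℝ] ℝ, v f = f x := by
  let ι := NormedSpace.inclusionInDoubleDualLi ℝ (E := X)
  refine ⟨LinearMap.range ι.toLinearMap, ?_, fun v => ⟨?_, ?_⟩⟩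
  · have : IsClosed (Set.range ι) :=
      (ι.isometry.isUniformInducing.isComplete_range).isClosed
    exact this
  · rintro ⟨x, rfl⟩
    exact ⟨x, fun f => rfl⟩
  · rintro ⟨x, hx⟩
    exact ⟨x, by ext f; exact (hx f).symm⟩

/-- Goldstine/Mazur type approximation. -/
lemma approx_pair {Ω : Type*} [MeasurableSpace Ω] (μ : Measure Ω) [IsFiniteMeasure μ]
    {E : Type*} [NormedAddCommGroup E] [NormedSpace ℝ E]
    (ν : VectorMeasure Ω (E →L[ℝ] ℝ)) (T : E →L[ℝ] Lp ℝ 1 μ)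
    (hT : ∀ f A, MeasurableSet A → ∫ ω in A, T f ω ∂μ = ν A f)
    (F : (E →L[ℝ] ℝ) →L[ℝ] ℝ) (hF : ‖F‖ ≤ 1) (h : Lp ℝ 1 μ)
    (hh : ∀ A, MeasurableSet A → ∫ ω in A, h ω ∂μ = F (ν A))
    (w : E →L[ℝ] ℝ) (hw : F w = 0) (ε : ℝ) (hε : 0 < ε) :
    ∃ f : E, ‖f‖ ≤ 1 ∧ ‖T f - h‖ < ε ∧ |w f| < ε := by
  -- `F (ψ ∘ T) = ψ h` for every functional `ψ` on `L¹`
  have hFT : ∀ ψ : Lp ℝ 1 μ →L[ℝ] ℝ, F (ψ.comp T) = ψ h := by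
    let Φ : (Lp ℝ 1 μ →L[ℝ] ℝ) →L[ℝ] ℝ :=
      F.comp ((ContinuousLinearMap.compL ℝ E (Lp ℝ 1 μ) ℝ).flip T) -
        ContinuousLinearMap.apply ℝ ℝ h
    have hΦ : ∀ ψ, Φ ψ = F (ψ.comp T) - ψ h := fun ψ => rfl
    intro ψ
    have := dual_L1_dense μ (LinearMap.ker Φ.toLinearMap) (Φ.isClosed_ker) (by
      intro A hA J hJ
      change Φ J = 0
      rw [hΦ, hJ, hh A hA, sub_eq_zero]
      congr 1
      ext f
      rw [ContinuousLinearMap.comp_apply, hJ, hT f A hA]) ψ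
    have h0 : Φ ψ = 0 := this
    rw [hΦ] at h0
    exact sub_eq_zero.1 h0
  let P : E →L[ℝ] (Lp ℝ 1 μ × ℝ) := T.prod w
  let S : Set (Lp ℝ 1 μ × ℝ) := Set.image P (Metric.closedBall 0 1)
  have hS : Convex ℝ S := (convex_closedBall (0 : E) 1).linear_image P.toLinearMap
  have hmem : (h, (0 : ℝ)) ∈ closure S := by
    by_contra hn
    obtain ⟨Ψ, u, h1, h2⟩ := geometric_hahn_banach_closed_point hS.closure isClosed_closure hn
    let ψ : Lp ℝ 1 μ →L[ℝ] ℝ := Ψ.comp (ContinuousLinearMap.inl ℝ _ _)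
    let G : E →L[ℝ] ℝ := Ψ.comp P
    have hGf : G = ψ.comp T + (Ψ (0, 1)) • w := by
      ext f
      change Ψ (T f, w f) = Ψ (T f, 0) + Ψ (0, 1) * w f
      have : ((T f, w f) : Lp ℝ 1 μ × ℝ) = (T f, 0) + w f • ((0 : Lp ℝ 1 μ), (1 : ℝ)) := by
        simp
      rw [this, map_add, map_smul, smul_eq_mul, mul_comm]
    have hFG : F G = Ψ (h, 0) := by
      rw [hGf, map_add, map_smul, hw, smul_zero, add_zero, hFT]
      rfl
    have hball : ∀ f : E, ‖f‖ ≤ 1 → G f < u := fun f hf =>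
      h1 _ (subset_closure ⟨f, by simpa using hf, rfl⟩)
    have hu : 0 < u := by simpa using hball 0 (by simp)
    have hGn : ‖G‖ ≤ u := by
      refine ContinuousLinearMap.opNorm_le_of_unit_norm hu.le fun f hf => ?_
      rw [Real.norm_eq_abs, abs_le]
      have e1 := hball f hf.le
      have e2 := hball (-f) (by rw [norm_neg, hf])
      rw [map_neg] at e2
      constructor <;> linarith
    have := F.le_opNorm G
    have h3 : F G ≤ ‖F‖ * ‖G‖ := (le_abs_self _).trans this
    have h4 : ‖F‖ * ‖G‖ ≤ 1 * u := mul_le_mul hF hGn (norm_nonneg _) zero_le_one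
    linarith
  obtain ⟨_, ⟨f, hf, rfl⟩, hd⟩ := Metric.mem_closure_iff.1 hmem ε hε
  refine ⟨f, by simpa using hf, ?_, ?_⟩
  · have : dist h (T f) < ε := (le_max_left _ _).trans_lt hd
    rwa [dist_comm, dist_eq_norm] at this
  · have : dist (0 : ℝ) (w f) < ε := (le_max_right _ _).trans_lt hd
    rwa [dist_comm, dist_eq_norm, sub_zero] at this

/-- The functional and density used in the main argument, combined with the approximation. -/
lemma main_aux {Ω : Type*} [MeasurableSpace Ω] (μ : Measure Ω) [IsFiniteMeasure μ]
    {E : Type*} [NormedAddCommGroup E] [NormedSpace ℝ E]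
    (ν : VectorMeasure Ω (E →L[ℝ] ℝ)) (hν : ∀ A : Set Ω, μ A = 0 → ν A = 0)
    (T : E →L[ℝ] Lp ℝ 1 μ)
    (hT : ∀ f A, MeasurableSet A → ∫ ω in A, T f ω ∂μ = ν A f)
    (R : Submodule ℝ (E →L[ℝ] ℝ)) (hR : IsClosed (R : Set (E →L[ℝ] ℝ)))
    (A₀ : Set Ω) (hA₀ : MeasurableSet A₀) (hne : ν A₀ ∉ R) :
    ∃ h : Lp ℝ 1 μ, 0 < ∫ ω in A₀, h ω ∂μ ∧ ∀ w ∈ R, ∀ ε > 0,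
      ∃ f : E, ‖f‖ ≤ 1 ∧ ‖T f - h‖ < ε ∧ |w f| < ε := by
  obtain ⟨F, hF1, hFpos, hF0⟩ := exists_annihilator R hR (ν A₀) hne
  obtain ⟨h, hh⟩ := exists_density_comp μ ν hν F
  refine ⟨h, by rwa [hh A₀ hA₀], fun w hw ε hε => ?_⟩
  exact approx_pair μ ν T hT F hF1 h hh w (hF0 w hw) ε hε

/-- Convex blocks preserve bounds on a convex function. -/
lemma block_bound {E G : Type*} [NormedAddCommGroup E] [NormedSpace ℝ E]
    [NormedAddCommGroup G] [NormedSpace ℝ G] (g h : ℕ → E) (hgh : ConvexBlock g h)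
    (S : E →L[ℝ] G) (y : G) (hS : ∀ n : ℕ, ‖S (g n) - y‖ ≤ 1 / ((n : ℝ) + 1)) :
    ∀ k : ℕ, ‖S (h k) - y‖ ≤ 1 / ((k : ℝ) + 1) := by
  obtain ⟨I, a, hI, ha, hs, hh⟩ := hgh
  have hne : ∀ k, (I k).Nonempty := by
    intro k
    by_contra hn
    have := hs k
    rw [Finset.not_nonempty_iff_eq_empty.1 hn] at this
    simp at this
  have hk : ∀ k, ∀ n ∈ I k, k ≤ n := by
    intro k
    induction k with
    | zero => intro n _; omega
    | succ k ih =>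
      intro n hn
      obtain ⟨m, hm⟩ := hne k
      have h1 := ih m hm
      have h2 := hI k m hm n hn
      omega
  intro k
  have e : S (h k) - y = ∑ n ∈ I k, a n • (S (g n) - y) := by
    simp only [smul_sub, Finset.sum_sub_distrib]
    rw [← Finset.sum_smul, hs k, one_smul, hh k, map_sum]
    simp only [map_smul]
  rw [e]
  calc ‖∑ n ∈ I k, a n • (S (g n) - y)‖ ≤ ∑ n ∈ I k, a n * (1 / ((k : ℝ) + 1)) := by
        refine norm_sum_le_of_le _ fun n hn => ?_
        rw [norm_smul, Real.norm_of_nonneg (ha n)]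
        refine mul_le_mul_of_nonneg_left ((hS n).trans ?_) (ha n)
        have : (k : ℝ) ≤ n := by exact_mod_cast hk k n hn
        gcongr
    _ = 1 / ((k : ℝ) + 1) := by rw [← Finset.sum_mul, hs k, one_mul]
/-- Corollary: if `(B_{X*}, w*)` is convex block compact and `ν ∈ ca(μ, X**)` satisfies
condition (G) (with respect to `X`, viewed inside `X**` via the canonical embedding),
then `ν(Σ) ⊆ X`. -/
theorem range_subset_of_convexBlockCompact_of_condG_bidual
    {Ω : Type*} [MeasurableSpace Ω] (μ : Measure Ω) [IsFiniteMeasure μ]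
    {X : Type*} [NormedAddCommGroup X] [NormedSpace ℝ X] [CompleteSpace X]
    (hCBC : DualBallConvexBlockCompact X)
    (ν : VectorMeasure Ω ((X →L[ℝ] ℝ) →L[ℝ] ℝ))
    (hν : ∀ A : Set Ω, μ A = 0 → ν A = 0)
    (hG : ∀ A : Set Ω, MeasurableSet A → 0 < μ A →
      (@closure _ (wstarTop (X →L[ℝ] ℝ)) (convexHull ℝ (avgRange μ ν A)) ∩
        {w : (X →L[ℝ] ℝ) →L[ℝ] ℝ | ∃ x : X, ∀ f : X →L[ℝ] ℝ, w f = f x}).Nonempty) :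
    ∀ A : Set Ω, MeasurableSet A → ∃ x : X, ∀ f : X →L[ℝ] ℝ, ν A f = f x := by
  intro A₀ hA₀
  by_contra hne
  obtain ⟨T, hT⟩ := exists_densityOp μ ν hν
  obtain ⟨R, hR, hRX⟩ := exists_canonical_range X
  obtain ⟨h, hpos, happ₀⟩ := main_aux μ ν hν T hT R hR A₀ hA₀ (fun hm => hne ((hRX _).1 hm))
  have hhm : Measurable h := (Lp.stronglyMeasurable h).measurable
  -- a level set of `h` of positive measure
  obtain ⟨a, ha, hAa⟩ : ∃ a > (0 : ℝ), 0 < μ {ω | a < h ω} := by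
    by_contra hcon
    push Not at hcon
    have hz : ∀ n : ℕ, ∀ᵐ ω ∂μ, h ω ≤ 1 / ((n : ℝ) + 1) := by
      intro n
      have := hcon (1 / ((n : ℝ) + 1)) (by positivity)
      rw [ae_iff]
      simpa using this
    have hle : ∀ᵐ ω ∂μ, h ω ≤ 0 := by
      filter_upwards [ae_all_iff.2 hz] with ω hω
      exact ge_of_tendsto' tendsto_one_div_add_atTop_nhds_zero_nat hω
    have : ∫ ω in A₀, h ω ∂μ ≤ 0 := setIntegral_nonpos_of_ae hle
    linarith
  set A := {ω | a < h ω} with hAdef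
  have hA : MeasurableSet A := measurableSet_lt measurable_const hhm
  obtain ⟨w, hw, hwX⟩ := hG A hA hAa
  have happ := fun n : ℕ => happ₀ w ((hRX w).2 hwX) (1 / ((n : ℝ) + 1))
    (by positivity)
  choose g hg1 hg2 hg3 using happ
  obtain ⟨b, hb, f, hbf⟩ := hCBC g hg1
  have hpt : ∀ x : X, Tendsto (fun k => b k x) atTop (𝓝 (f x)) := by
    intro x
    let _ := wstarTop X
    have h1 : Continuous (fun w : X →L[ℝ] ℝ => (w : X → ℝ)) := continuous_induced_dom
    exact (((continuous_apply x).comp h1).tendsto f).comp hbf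
  have hbT := block_bound g b hb T h (fun n => (hg2 n).le)
  have hbw := block_bound g b hb w 0 (fun n => by simpa using (hg3 n).le)
  have hlim := tendsto_one_div_add_atTop_nhds_zero_nat (𝕜 := ℝ)
  -- `f` vanishes at `w`
  obtain ⟨x, hx⟩ := hwX
  have hfx : f x = 0 := by
    have h1 : Tendsto (fun k => w (b k)) atTop (𝓝 0) :=
      squeeze_zero_norm (fun k => by simpa using hbw k) hlim
    simp only [hx] at h1
    exact tendsto_nhds_unique (hpt x) h1
  have hTb : Tendsto (fun k => T (b k)) atTop (𝓝 h) := by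
    rw [tendsto_iff_norm_sub_tendsto_zero]
    exact squeeze_zero (fun _ => norm_nonneg _) hbT hlim
  obtain ⟨ns, hns, hae⟩ := (tendstoInMeasure_of_tendsto_Lp hTb).exists_seq_tendsto_ae
  have hTm : ∀ e, Measurable (T e) := fun e => (Lp.stronglyMeasurable (T e)).measurable
  let D : ℕ → Set Ω := fun N => {ω | T f ω < a / 2} ∩ ⋂ k : ℕ, {ω | N ≤ k → a < T (b (ns k)) ω}
  have hDm : ∀ N, MeasurableSet (D N) := by
    intro N
    refine (measurableSet_lt (hTm f) measurable_const).inter (MeasurableSet.iInter fun k => ?_)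
    by_cases hk : N ≤ k
    · simpa [hk] using measurableSet_lt measurable_const (hTm (b (ns k)))
    · simp [hk]
  have hDnull : ∀ N, μ (D N) = 0 := by
    intro N
    by_contra hpos
    obtain ⟨v, hv, y, hy⟩ := hG (D N) (hDm N) (pos_iff_ne_zero.2 hpos)
    have h1 : ∀ k, N ≤ k → a ≤ b (ns k) y := by
      intro k hk
      rw [← hy]
      refine le_of_mem_closure μ ν T hT (D N) v hv _ a (ae_of_all _ fun ω hω => ?_)
      exact (Set.mem_iInter.1 hω.2 k hk).le
    have h2 : a ≤ f y := ge_of_tendsto ((hpt y).comp hns.tendsto_atTop)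
      (eventually_atTop.2 ⟨N, h1⟩)
    have h3 : -(a / 2) ≤ v (-f) := by
      refine le_of_mem_closure μ ν T hT (D N) v hv _ _ ?_
      rw [map_neg]
      filter_upwards [Lp.coeFn_neg (T f)] with ω hω hD
      rw [hω, Pi.neg_apply]
      have : T f ω < a / 2 := hD.1
      linarith
    rw [map_neg, hy] at h3
    linarith
  have hfin : a / 2 ≤ w f := by
    refine le_of_mem_closure μ ν T hT A w hw _ _ ?_
    filter_upwards [hae, measure_eq_zero_iff_ae_notMem.1 (measure_iUnion_null hDnull)]
      with ω h1 h2 hω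
    by_contra hlt
    push Not at hlt
    apply h2
    obtain ⟨N, hN⟩ := eventually_atTop.1 (h1.eventually_const_lt hω)
    exact Set.mem_iUnion.2 ⟨N, hlt, Set.mem_iInter.2 fun k hk => hN k hk⟩
  rw [hx, hfx] at hfin
  linarith
end
end
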